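/- arXiv:2405.06871 — 2 statements merged into one kernel-verified Lean document; each statement's English description precedes it below -/
import Mathlib

section
/- Assume A1 and A2, and fix r ≥ 1. Let H(x,v) = γ|x|² + 2⟨x,v⟩ + |v|² and H_r(x,v) = (H(x,v)+1)^r. There exists γ₀ > 0 such that for every γ ≥ γ₀ there exist constants a₁, b₁, h₀ > 0 such that for every 0 < h ≤ h₀, every (x₀,v₀) ∈ ℝ^d × ℝ^d, and ξ a standard Gaussian random vector in ℝ^d, the one-step Euler–Maruyama update (x₁,v₁) = (x₀ + hv₀, v₀ − h∇U(x₀) − γhv₀ + √(2γh)·ξ) satisfies E[H_r(x₁,v₁)] ≤ e^{−a₁h}·H_r(x₀,v₀) + b₁h. -/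
open MeasureTheory ProbabilityTheory RealInnerProductSpace
open scoped ENNReal

lemma taylor_aux (r : ℝ) (hr : 1 ≤ r) (p : ℕ) (hp : r ≤ p) (δ : ℝ) (hδ : -1 ≤ δ) :
    (1 + δ) ^ r ≤ 1 + r * δ + 2 * r ^ 2 * (δ ^ 2 * (1 + |δ|) ^ p) := by
  have h1 : 1 ≤ (1 + |δ|) ^ p := one_le_pow₀ (by linarith [abs_nonneg δ])
  have h2 : 0 ≤ r ^ 2 * δ ^ 2 := by positivity
  have h3 : r ^ 2 * δ ^ 2 ≤ r ^ 2 * δ ^ 2 * (1 + |δ|) ^ p := le_mul_of_one_le_right h2 h1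
  by_cases hc : |r * δ| ≤ 1
  · have e1 : (1 + δ) ^ r ≤ Real.exp (r * δ) := by
      calc (1 + δ) ^ r ≤ (Real.exp δ) ^ r :=
            Real.rpow_le_rpow (by linarith) (by linarith [Real.add_one_le_exp δ]) (by linarith)
        _ = Real.exp (r * δ) := by rw [← Real.exp_mul, mul_comm]
    have e2 := (abs_le.1 (Real.abs_exp_sub_one_sub_id_le hc)).2
    nlinarith
  · push Not at hc
    have e1 : (1 + δ) ^ r ≤ (1 + |δ|) ^ p := by
      calc (1 + δ) ^ r ≤ (1 + |δ|) ^ r :=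
            Real.rpow_le_rpow (by linarith) (by linarith [le_abs_self δ]) (by linarith)
        _ ≤ (1 + |δ|) ^ (p : ℝ) :=
            Real.rpow_le_rpow_of_exponent_le (by linarith [abs_nonneg δ]) hp
        _ = _ := Real.rpow_natCast _ _
    have e3 : 1 ≤ (r * δ) ^ 2 := by
      rw [← sq_abs]; nlinarith
    have e4 : |r * δ| ≤ (r * δ) ^ 2 := by
      rw [← sq_abs]; nlinarith
    have e5 := neg_abs_le (r * δ)
    have e6 : (1 + |δ|) ^ p ≤ r ^ 2 * δ ^ 2 * (1 + |δ|) ^ p :=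
      le_mul_of_one_le_left (by linarith) (by nlinarith)
    nlinarith

lemma drift_aux {d : ℕ} (U : EuclideanSpace ℝ (Fin d) → ℝ)
    (C₁ m R : ℝ) (hC₁ : 0 < C₁) (hm : 0 < m) (hR : 0 < R)
    (hU : ContDiff ℝ 3 U)
    (hU1 : ∀ x, ‖gradient U x‖ ≤ C₁ * (‖x‖ + 1))
    (hconv : ∀ x, R ≤ ‖x‖ → ∀ y, m * ‖y‖ ^ 2 ≤ iteratedFDeriv ℝ 2 U x ![y, y]) :
    ∃ K > (0 : ℝ), ∀ x, m / 2 * ‖x‖ ^ 2 - K ≤ ⟪x, gradient U x⟫ := by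
  have hfd : ∀ z x, fderiv ℝ U z x = ⟪x, gradient U z⟫ := by
    intro z x
    rw [gradient, real_inner_comm, InnerProductSpace.toDual_symm_apply]
  set L := C₁ * (R + 1) + m * R with hL
  have hLpos : 0 < L := by positivity
  refine ⟨m / 2 * R ^ 2 + R * (C₁ * (R + 1)) + L ^ 2 / (2 * m) + 1, by positivity, fun x => ?_⟩
  have hLm : 0 ≤ L ^ 2 / (2 * m) := by positivity
  by_cases hx : ‖x‖ < R
  · have h1 := (abs_le.1 (abs_real_inner_le_norm x (gradient U x))).1
    have h2 := hU1 x
    have h0 := norm_nonneg x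
    have h3 : ‖x‖ * ‖gradient U x‖ ≤ R * (C₁ * (R + 1)) := by
      apply mul_le_mul hx.le (h2.trans _) (norm_nonneg _) hR.le
      gcongr
    have h4 : m / 2 * ‖x‖ ^ 2 ≤ m / 2 * R ^ 2 := by gcongr
    linarith
  · push Not at hx
    have hx0 : 0 < ‖x‖ := hR.trans_le hx
    have hder : ∀ t : ℝ, HasDerivAt (fun t : ℝ => fderiv ℝ U (t • x) x)
        (iteratedFDeriv ℝ 2 U (t • x) ![x, x]) t := by
      intro t
      have hd1 : DifferentiableAt ℝ (fderiv ℝ U) (t • x) :=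
        ((hU.fderiv_right (m := 1) (by norm_num)).differentiable (by norm_num)) _
      have hd2 : HasDerivAt (fun t : ℝ => t • x) x t := by
        simpa using (hasDerivAt_id t).smul_const x
      have hd3 := hd1.hasFDerivAt.comp_hasDerivAt t hd2
      have hd4 := hd3.clm_apply (hasDerivAt_const t x)
      rw [iteratedFDeriv_two_apply]
      simpa using hd4
    have hRx : R / ‖x‖ ≤ 1 := (div_le_one hx0).2 hx
    have hRx0 : 0 < R / ‖x‖ := by positivity
    have key := Convex.mul_sub_le_image_sub_of_le_deriv (convex_Icc (R / ‖x‖) 1)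
      (f := fun t : ℝ => fderiv ℝ U (t • x) x)
      (fun t _ => (hder t).continuousAt.continuousWithinAt)
      (fun t _ => (hder t).differentiableAt.differentiableWithinAt)
      (C := m * ‖x‖ ^ 2) (by
        intro t ht
        rw [interior_Icc] at ht
        rw [(hder t).deriv]
        apply hconv
        rw [norm_smul, Real.norm_of_nonneg (hRx0.trans ht.1).le]
        exact ((div_lt_iff₀ hx0).1 ht.1).le)
      (R / ‖x‖) ⟨le_rfl, hRx⟩ 1 ⟨hRx, le_rfl⟩ hRx
    simp only [one_smul, hfd] at key
    have h1 := (abs_le.1 (abs_real_inner_le_norm x (gradient U ((R / ‖x‖) • x)))).1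
    have h2 := hU1 ((R / ‖x‖) • x)
    have h3 : ‖(R / ‖x‖) • x‖ = R := by
      rw [norm_smul, Real.norm_of_nonneg hRx0.le]; field_simp
    rw [h3] at h2
    have h4 : ‖x‖ * ‖gradient U ((R / ‖x‖) • x)‖ ≤ ‖x‖ * (C₁ * (R + 1)) := by gcongr
    have h5 : m * ‖x‖ ^ 2 * (1 - R / ‖x‖) = m * ‖x‖ ^ 2 - m * R * ‖x‖ := by field_simp
    have h6 : L * ‖x‖ ≤ m / 2 * ‖x‖ ^ 2 + L ^ 2 / (2 * m) := by
      have : m / 2 * ‖x‖ ^ 2 + L ^ 2 / (2 * m) - L * ‖x‖ = (m * ‖x‖ - L) ^ 2 / (2 * m) := by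
        field_simp; ring
      have : 0 ≤ (m * ‖x‖ - L) ^ 2 / (2 * m) := by positivity
      linarith
    have h7 : L * ‖x‖ = ‖x‖ * (C₁ * (R + 1)) + m * R * ‖x‖ := by rw [hL]; ring
    have h8 : 0 ≤ m / 2 * R ^ 2 + R * (C₁ * (R + 1)) := by positivity
    linarith

lemma final_aux (c K r : ℝ) (hc : 0 < c) (hK : 0 < K) (hr : 1 ≤ r) :
    ∃ b > (0 : ℝ), ∃ h₀ > (0 : ℝ), ∀ h, 0 < h → h ≤ h₀ → ∀ B : ℝ, 1 ≤ B →
      B ^ r * (1 - c * h + K * (h ^ 2 + h / B)) ≤ Real.exp (-(c / 2) * h) * B ^ r + b * h := by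
  refine ⟨K * (4 * K / c) ^ r, by positivity, c / (4 * K), by positivity, ?_⟩
  intro h hh hh0 B hB
  have hB0 : 0 < B := by linarith
  have hBr : 0 < B ^ r := Real.rpow_pos_of_pos hB0 r
  have he := Real.add_one_le_exp (-(c / 2) * h)
  have h1 : K * h ^ 2 ≤ c / 4 * h := by
    rw [le_div_iff₀ (by positivity)] at hh0
    nlinarith
  by_cases hcase : 4 * K / c ≤ B
  · have h2 : K * (h / B) ≤ c / 4 * h := by
      rw [div_le_iff₀ hc] at hcase
      rw [← mul_div_assoc, div_le_iff₀ hB0]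
      nlinarith
    have h3 : 1 - c * h + K * (h ^ 2 + h / B) ≤ Real.exp (-(c / 2) * h) := by linarith
    have h4 : 0 ≤ K * (4 * K / c) ^ r * h := by positivity
    nlinarith [mul_le_mul_of_nonneg_left h3 hBr.le]
  · push Not at hcase
    have h2 : K * (h / B) ≤ K * h := by
      gcongr; exact div_le_self hh.le hB
    have h3 : B ^ r ≤ (4 * K / c) ^ r := Real.rpow_le_rpow hB0.le hcase.le (by linarith)
    have hch : 0 < c * h := by positivity
    have h4 : 1 - c * h + K * (h ^ 2 + h / B) ≤ Real.exp (-(c / 2) * h) + K * h := by linarith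
    have h5 := mul_le_mul_of_nonneg_left h4 hBr.le
    have h6 := mul_le_mul_of_nonneg_left h3 (by positivity : 0 ≤ K * h)
    nlinarith

set_option maxHeartbeats 2000000 in
lemma det_aux {d : ℕ} (C₁ m K : ℝ) (hC₁ : 0 < C₁) (hm : 0 < m) (hK : 0 < K) :
    ∃ γ₀ > (0 : ℝ), ∀ γ ≥ γ₀, ∃ a > (0 : ℝ), ∃ K' > (0 : ℝ), ∃ C > (0 : ℝ), ∃ h₁ > (0 : ℝ),
      ∀ h : ℝ, 0 < h → h ≤ h₁ → ∀ x v g : EuclideanSpace ℝ (Fin d),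
      ‖g‖ ≤ C₁ * (‖x‖ + 1) → m * ‖x‖ ^ 2 - K ≤ ⟪x, g⟫ →
      ∀ A B : ℝ, B = γ * ‖x‖ ^ 2 + 2 * ⟪x, v⟫ + ‖v‖ ^ 2 + 1 →
      A = γ * ‖x + h • v‖ ^ 2 + 2 * ⟪x + h • v, v - h • g - (γ * h) • v⟫
        + ‖v - h • g - (γ * h) • v‖ ^ 2 + 1 →
      1 ≤ B ∧ A - B ≤ - a * h * B + K' * h ∧ |A - B| ≤ C * h * B ∧
        ‖x + h • v + (v - h • g - (γ * h) • v)‖ ^ 2 ≤ C ^ 2 * B := by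
  refine ⟨4 + 2 * C₁ ^ 2 / m, by positivity, fun γ hγ => ?_⟩
  have hCm : 0 < 2 * C₁ ^ 2 / m := by positivity
  have hγ4 : 4 ≤ γ := by linarith
  obtain ⟨c, hc0, hcm, hc1⟩ : ∃ c > 0, c ≤ m ∧ c ≤ 1 :=
    ⟨min m 1, by positivity, min_le_left _ _, min_le_right _ _⟩
  -- bound of the quadratic terms
  obtain ⟨Q, hQdef⟩ : ∃ Q, Q = 4 + 4 * γ + γ ^ 2 + 8 * C₁ ^ 2 * (1 + γ) := ⟨_, rfl⟩
  have hQ0 : 0 < Q := by rw [hQdef]; positivity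
  obtain ⟨Y, hYdef⟩ : ∃ Y, Y = 1 + (2 + γ) + 2 * C₁ := ⟨_, rfl⟩
  have hY0 : 0 < Y := by rw [hYdef]; positivity
  refine ⟨c / (2 * (γ + 1)), by positivity, 2 * K + m + c, by positivity, 4 * Q + 2 * Y,
    by positivity, min 1 (c / (2 * Q)), by positivity, ?_⟩
  intro h hh hh1 x v g hg hxg A B hB hA
  have hle1 : h ≤ 1 := hh1.trans (min_le_left _ _)
  have hhQ : h * (2 * Q) ≤ c := by
    have := hh1.trans (min_le_right _ _)
    rwa [le_div_iff₀ (by positivity)] at this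
  have exA : A - B = h * (-2 * ⟪x, g⟫ + 2 * ‖v‖ ^ 2 - 2 * γ * ‖v‖ ^ 2 - 2 * ⟪v, g⟫)
      + h ^ 2 * (-γ * ‖v‖ ^ 2 - 2 * ⟪v, g⟫ + γ ^ 2 * ‖v‖ ^ 2 + 2 * γ * ⟪v, g⟫ + ‖g‖ ^ 2) := by
    rw [hA, hB]
    simp only [← real_inner_self_eq_norm_sq, inner_add_left, inner_add_right, inner_sub_left,
      inner_sub_right, real_inner_smul_left, real_inner_smul_right, real_inner_comm x v, real_inner_comm v g]
    ring
  have nx := norm_nonneg x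
  have nv := norm_nonneg v
  have ng := norm_nonneg g
  have ixv := abs_le.1 (abs_real_inner_le_norm x v)
  have ixg := abs_le.1 (abs_real_inner_le_norm x g)
  have ivg := abs_le.1 (abs_real_inner_le_norm v g)
  have ny : ‖x + h • v + (v - h • g - (γ * h) • v)‖ ≤ ‖x‖ + (2 + γ) * ‖v‖ + ‖g‖ := by
    have e1 : ‖h • v‖ ≤ ‖v‖ := by
      rw [norm_smul, Real.norm_of_nonneg hh.le]; nlinarith
    have e2 : ‖h • g‖ ≤ ‖g‖ := by
      rw [norm_smul, Real.norm_of_nonneg hh.le]; nlinarith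
    have e3 : ‖(γ * h) • v‖ ≤ γ * ‖v‖ := by
      rw [norm_smul, Real.norm_of_nonneg (by positivity), mul_assoc]
      have : h * ‖v‖ ≤ ‖v‖ := by nlinarith
      gcongr
    have e4 := norm_add_le (x + h • v) (v - h • g - (γ * h) • v)
    have e5 := norm_add_le x (h • v)
    have e6 := norm_sub_le (v - h • g) ((γ * h) • v)
    have e7 := norm_sub_le v (h • g)
    linarith
  have nyn := norm_nonneg (x + h • v + (v - h • g - (γ * h) • v))
  generalize ‖x + h • v + (v - h • g - (γ * h) • v)‖ = y at *
  generalize ⟪x, v⟫ = p at *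
  generalize ⟪x, g⟫ = q at *
  generalize ⟪v, g⟫ = t at *
  generalize ‖x‖ = X at *
  generalize ‖v‖ = V at *
  generalize ‖g‖ = G at *
  clear hA
  have hG2 : G ^ 2 ≤ 2 * C₁ ^ 2 * (X ^ 2 + 1) := by
    have : G ^ 2 ≤ (C₁ * (X + 1)) ^ 2 := by gcongr
    have h2 : 0 ≤ C₁ ^ 2 * (X - 1) ^ 2 := by positivity
    have h3 : 2 * C₁ ^ 2 * (X ^ 2 + 1) = (C₁ * (X + 1)) ^ 2 + C₁ ^ 2 * (X - 1) ^ 2 := by ring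
    linarith
  obtain ⟨S, hS⟩ : ∃ S, S = X ^ 2 + V ^ 2 + 1 := ⟨_, rfl⟩
  have hS1 : 1 ≤ S := by nlinarith
  have hXS : X ^ 2 + 1 ≤ S := by nlinarith
  have hVS : V ^ 2 ≤ S := by nlinarith
  have hGS : G ^ 2 ≤ 2 * C₁ ^ 2 * S := hG2.trans (by gcongr)
  have hBl : S ≤ 2 * B := by nlinarith [sq_nonneg (2 * X - V), sq_nonneg X]
  have hBu : B ≤ (γ + 1) * S := by nlinarith [sq_nonneg (X - V), sq_nonneg X, sq_nonneg V]
  have hB1 : 1 ≤ B := by nlinarith [sq_nonneg (2 * X - V), sq_nonneg X]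
  have ht : |t| ≤ (1 / 2 + C₁ ^ 2) * S := by
    rw [abs_le]; constructor <;> nlinarith [sq_nonneg (V - G)]
  have hq : |q| ≤ (1 / 2 + C₁ ^ 2) * S := by
    rw [abs_le]; constructor <;> nlinarith [sq_nonneg (X - G)]
  have ht' := abs_le.1 ht
  have hq' := abs_le.1 hq
  have hV0 : 0 ≤ V ^ 2 := sq_nonneg V
  have hG0 : 0 ≤ G ^ 2 := sq_nonneg G
  have hγV : γ * V ^ 2 ≤ γ * S := by gcongr
  have hγγV : γ ^ 2 * V ^ 2 ≤ γ ^ 2 * S := by gcongr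
  have hγV0 : 0 ≤ γ * V ^ 2 := by positivity
  have hγγV0 : 0 ≤ γ ^ 2 * V ^ 2 := by positivity
  have hγt : |γ * t| ≤ γ * ((1 / 2 + C₁ ^ 2) * S) := by
    rw [abs_mul, abs_of_pos (by linarith)]; gcongr
  have hγt' := abs_le.1 hγt
  have hCS : 0 ≤ C₁ ^ 2 * S := by positivity
  have hγCS : 0 ≤ γ * (C₁ ^ 2 * S) := by positivity
  have hγS : 0 ≤ γ * S := by positivity
  have hγγS : 0 ≤ γ ^ 2 * S := by positivity
  have hQS : Q * S = 4 * S + 4 * (γ * S) + γ ^ 2 * S + 8 * (C₁ ^ 2 * S) + 8 * (γ * (C₁ ^ 2 * S)) := by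
    rw [hQdef]; ring
  obtain ⟨L, hL⟩ : ∃ L, L = -2 * q + 2 * V ^ 2 - 2 * γ * V ^ 2 - 2 * t := ⟨_, rfl⟩
  obtain ⟨M, hM⟩ : ∃ M, M = -γ * V ^ 2 - 2 * t + γ ^ 2 * V ^ 2 + 2 * γ * t + G ^ 2 := ⟨_, rfl⟩
  rw [← hL, ← hM] at exA
  have hLabs : |L| ≤ Q * S := by
    rw [hQS, hL, abs_le]; constructor <;> linarith
  have hMabs : |M| ≤ Q * S := by
    rw [hQS, hM, abs_le]; constructor <;> linarith
  have hLup : L ≤ -c * (X ^ 2 + V ^ 2) + 2 * K + m := by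
    have e1 : -2 * t ≤ m * (X ^ 2 + 1) + 2 * C₁ ^ 2 / m * V ^ 2 := by
      have e2 : 2 * (V * G) ≤ 2 * C₁ ^ 2 / m * V ^ 2 + m / (2 * C₁ ^ 2) * G ^ 2 := by
        have : 2 * C₁ ^ 2 / m * V ^ 2 + m / (2 * C₁ ^ 2) * G ^ 2 - 2 * (V * G)
            = (2 * C₁ ^ 2 * V - m * G) ^ 2 / (2 * C₁ ^ 2 * m) := by
          field_simp; ring
        have : 0 ≤ (2 * C₁ ^ 2 * V - m * G) ^ 2 / (2 * C₁ ^ 2 * m) := by positivity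
        linarith
      have e3 : m / (2 * C₁ ^ 2) * G ^ 2 ≤ m * (X ^ 2 + 1) := by
        calc _ ≤ m / (2 * C₁ ^ 2) * (2 * C₁ ^ 2 * (X ^ 2 + 1)) := by gcongr
          _ = _ := by field_simp
      linarith
    have e4 : (4 + 2 * C₁ ^ 2 / m) * V ^ 2 ≤ γ * V ^ 2 := by gcongr
    have e5 : c * X ^ 2 ≤ m * X ^ 2 := by gcongr
    have e6 : c * V ^ 2 ≤ 1 * V ^ 2 := by gcongr
    have e7 : 0 ≤ 2 * C₁ ^ 2 / m * V ^ 2 := by positivity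
    rw [hL]
    linarith
  have hL' := abs_le.1 hLabs
  have hM' := abs_le.1 hMabs
  have hhM : |h * M| ≤ h * (Q * S) := by
    rw [abs_mul, abs_of_pos hh]; gcongr
  have hhM' := abs_le.1 hhM
  have exA' : A - B = h * (L + h * M) := by rw [exA]; ring
  have hQS0 : 0 ≤ Q * S := by positivity
  refine ⟨hB1, ?_, ?_, ?_⟩
  · have e1 : h * (Q * S) ≤ c / 2 * S := by
      linarith [mul_le_mul_of_nonneg_right hhQ (by linarith : 0 ≤ S)]
    have e2 : c / (2 * (γ + 1)) * B ≤ c / 2 * S := by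
      calc _ ≤ c / (2 * (γ + 1)) * ((γ + 1) * S) := by gcongr
        _ = _ := by field_simp
    have e3 : L + h * M ≤ -(c / (2 * (γ + 1)) * B) + (2 * K + m + c) := by
      have : c * (X ^ 2 + V ^ 2) = c * S - c := by rw [hS]; ring
      linarith
    rw [exA']
    linarith [mul_le_mul_of_nonneg_left e3 hh.le]
  · have e1 : h * (Q * S) ≤ Q * S := mul_le_of_le_one_left hQS0 hle1
    have e2 : |L + h * M| ≤ 2 * (Q * S) := (abs_add_le _ _).trans (by linarith)
    have e3 : Q * S ≤ 2 * (Q * B) := by linarith [mul_le_mul_of_nonneg_left hBl hQ0.le]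
    rw [exA', abs_mul, abs_of_pos hh]
    have e4 : |L + h * M| ≤ (4 * Q + 2 * Y) * B := by
      have : 0 ≤ Y * B := by positivity
      linarith
    linarith [mul_le_mul_of_nonneg_left e4 hh.le]
  · have sS : Real.sqrt S ^ 2 = S := Real.sq_sqrt (by linarith)
    have sX : X ≤ Real.sqrt S := Real.le_sqrt_of_sq_le (by linarith)
    have sV : V ≤ Real.sqrt S := Real.le_sqrt_of_sq_le (by linarith)
    have s1 : 1 ≤ Real.sqrt S := Real.le_sqrt_of_sq_le (by linarith)
    have e1 : y ≤ Y * Real.sqrt S := by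
      rw [hYdef]
      have := mul_le_mul_of_nonneg_left sV (by linarith : 0 ≤ 2 + γ)
      have := mul_le_mul_of_nonneg_left (add_le_add sX s1) hC₁.le
      linarith
    have e2 : y ^ 2 ≤ (Y * Real.sqrt S) ^ 2 := by gcongr
    rw [mul_pow, sS] at e2
    have e3 : Y ^ 2 * S ≤ Y ^ 2 * (2 * B) := by gcongr
    have e4 : (2 * Y) ^ 2 ≤ (4 * Q + 2 * Y) ^ 2 := by gcongr; linarith
    have e5 : (2 * Y) ^ 2 * B ≤ (4 * Q + 2 * Y) ^ 2 * B := by gcongr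
    have : 0 ≤ Y ^ 2 * B := by positivity
    linarith

lemma gauss_inner (d : ℕ) (y : EuclideanSpace ℝ (Fin d)) :
    Integrable (fun z : Fin d → ℝ => ⟪y, WithLp.toLp 2 z⟫)
      (Measure.pi fun _ : Fin d => gaussianReal 0 1) ∧
    ∫ z : Fin d → ℝ, ⟪y, WithLp.toLp 2 z⟫ ∂(Measure.pi fun _ : Fin d => gaussianReal 0 1) = 0 := by
  have hint : ∀ i : Fin d, Integrable (fun z : Fin d → ℝ => z i)
      (Measure.pi fun _ : Fin d => gaussianReal 0 1) := by
    intro i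
    have h := (memLp_id_gaussianReal (μ := 0) (v := 1) 1).comp_measurePreserving
      (measurePreserving_eval (fun _ : Fin d => gaussianReal 0 1) i)
    exact (memLp_one_iff_integrable.1 (by simpa using h))
  have hz : ∀ i : Fin d, ∫ z : Fin d → ℝ, z i ∂(Measure.pi fun _ : Fin d => gaussianReal 0 1) = 0 := by
    intro i
    have h := measurePreserving_eval (fun _ : Fin d => gaussianReal 0 1) i
    have h2 := integral_map (μ := Measure.pi fun _ : Fin d => gaussianReal 0 1)
      h.measurable.aemeasurable (f := fun x : ℝ => x) (by fun_prop)
    rw [h.map_eq, integral_id_gaussianReal] at h2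
    exact h2.symm
  have heq : (fun z : Fin d → ℝ => ⟪y, WithLp.toLp 2 z⟫) = fun z => ∑ i, z i * y i := by
    funext z
    simp [PiLp.inner_apply]
  rw [heq]
  refine ⟨integrable_finsetSum _ fun i _ => (hint i).mul_const _, ?_⟩
  rw [integral_finsetSum _ fun i _ => (hint i).mul_const _]
  simp [integral_mul_const, hz]

lemma gauss_mom (d : ℕ) (N : ℕ) :
    Integrable (fun z : Fin d → ℝ => (1 + ‖WithLp.toLp 2 z‖ ^ 2) ^ N)
      (Measure.pi fun _ : Fin d => gaussianReal 0 1) := by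
  have coord : ∀ i : Fin d, MemLp (fun z : Fin d → ℝ => ‖z i‖) ((2 * N + 2 : ℕ) : ℝ≥0∞)
      (Measure.pi fun _ : Fin d => gaussianReal 0 1) := by
    intro i
    have h0 : MemLp id ((2 * N + 2 : ℕ) : ℝ≥0∞) (gaussianReal 0 1) := by
      have := memLp_id_gaussianReal (μ := 0) (v := 1) ((2 * N + 2 : ℕ) : NNReal)
      rwa [ENNReal.coe_natCast] at this
    exact (h0.comp_measurePreserving
      (measurePreserving_eval (fun _ : Fin d => gaussianReal 0 1) i)).norm
  have hm : MemLp (fun z : Fin d → ℝ => 1 + ∑ i, ‖z i‖) ((2 * N + 2 : ℕ) : ℝ≥0∞)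
      (Measure.pi fun _ : Fin d => gaussianReal 0 1) := by
    have hsum : MemLp (fun z : Fin d → ℝ => ∑ i, ‖z i‖) ((2 * N + 2 : ℕ) : ℝ≥0∞)
        (Measure.pi fun _ : Fin d => gaussianReal 0 1) := by
      refine memLp_finsetSum Finset.univ (f := fun (i : Fin d) (z : Fin d → ℝ) => ‖z i‖)
        fun i _ => ?_
      exact coord i
    exact (memLp_const (1 : ℝ)).add hsum
  have hi := hm.integrable_norm_pow (by omega)
  refine hi.mono' (by fun_prop) (Filter.Eventually.of_forall fun z => ?_)
  have hz0 : 0 ≤ ∑ i, ‖z i‖ := Finset.sum_nonneg fun i _ => norm_nonneg _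
  have hz : ‖WithLp.toLp 2 z‖ ≤ ∑ i, ‖z i‖ := by
    rw [EuclideanSpace.norm_eq]
    apply Real.sqrt_le_iff.2 ⟨hz0, ?_⟩
    exact Finset.sum_sq_le_sq_sum_of_nonneg fun i _ => norm_nonneg _
  have hn := norm_nonneg (WithLp.toLp 2 z)
  rw [Real.norm_of_nonneg (by positivity), Real.norm_of_nonneg (by positivity)]
  calc (1 + ‖WithLp.toLp 2 z‖ ^ 2) ^ N ≤ ((1 + ∑ i, ‖z i‖) ^ 2) ^ N := by
        gcongr; nlinarith
    _ = (1 + ∑ i, ‖z i‖) ^ (2 * N) := by rw [← pow_mul]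
    _ ≤ _ := pow_le_pow_right₀ (by linarith) (by omega)

lemma delta_aux (γ C h B Z A ip : ℝ) (hγ : 0 < γ) (hC : 0 < C) (hh : 0 < h) (hh1 : h ≤ 1)
    (hB : 1 ≤ B) (hZ : 0 ≤ Z) (hAB : |A - B| ≤ C * h * B)
    (hip : |ip| ≤ C * Real.sqrt B * Z) (p : ℕ) (δ : ℝ)
    (hδ : B * δ = A - B + 2 * Real.sqrt (2 * γ * h) * ip + 2 * γ * h * Z ^ 2) (D : ℝ)
    (hD : D = C + 2 * C * Real.sqrt (2 * γ) + 2 * γ) :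
    δ ^ 2 * (1 + |δ|) ^ p ≤
      2 * D ^ 2 * (1 + 2 * D) ^ p * (h ^ 2 + h / B) * (1 + Z ^ 2) ^ (2 + p) := by
  have hB0 : 0 < B := by linarith
  have hD0 : 0 < D := by rw [hD]; positivity
  obtain ⟨e, he⟩ : ∃ e, e = Real.sqrt (h / B) := ⟨_, rfl⟩
  have he0 : 0 ≤ e := he ▸ Real.sqrt_nonneg _
  have he2 : e ^ 2 = h / B := by rw [he]; exact Real.sq_sqrt (by positivity)
  have hhB : h / B ≤ 1 := (div_le_one hB0).2 (by linarith)
  have he1 : e ≤ 1 := by nlinarith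
  have hBe : B * e ^ 2 = h := by rw [he2]; field_simp
  have hs : Real.sqrt (2 * γ * h) * Real.sqrt B = Real.sqrt (2 * γ) * (B * e) := by
    rw [he, Real.sqrt_mul (by positivity), Real.sqrt_div hh.le]
    have := Real.mul_self_sqrt hB0.le
    have hsB : Real.sqrt B ≠ 0 := (Real.sqrt_pos.2 hB0).ne'
    field_simp
    linear_combination this
  have hδabs : |δ| ≤ D * (h + e) * (1 + Z ^ 2) := by
    have h1 : B * |δ| = |A - B + 2 * Real.sqrt (2 * γ * h) * ip + 2 * γ * h * Z ^ 2| := by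
      rw [← hδ, abs_mul, abs_of_pos hB0]
    have h2 : |2 * Real.sqrt (2 * γ * h) * ip| ≤ 2 * C * Real.sqrt (2 * γ) * (B * e) * Z := by
      rw [abs_mul, abs_of_nonneg (by positivity)]
      calc _ ≤ 2 * Real.sqrt (2 * γ * h) * (C * Real.sqrt B * Z) := by gcongr
        _ = 2 * C * Z * (Real.sqrt (2 * γ * h) * Real.sqrt B) := by ring
        _ = _ := by rw [hs]; ring
    have h3 : |2 * γ * h * Z ^ 2| = 2 * γ * h * Z ^ 2 := abs_of_nonneg (by positivity)
    have h4 : B * |δ| ≤ C * h * B + 2 * C * Real.sqrt (2 * γ) * (B * e) * Z + 2 * γ * h * Z ^ 2 := by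
      rw [h1]
      refine (abs_add_le _ _).trans ?_
      rw [h3]
      have := abs_add_le (A - B) (2 * Real.sqrt (2 * γ * h) * ip)
      linarith
    have h5 : C * h * B ≤ B * (C * ((h + e) * (1 + Z ^ 2))) := by
      have : h ≤ (h + e) * (1 + Z ^ 2) := by nlinarith [mul_nonneg (add_nonneg hh.le he0) (sq_nonneg Z)]
      calc C * h * B = B * (C * h) := by ring
        _ ≤ _ := by gcongr
    have h6 : 2 * C * Real.sqrt (2 * γ) * (B * e) * Z
        ≤ B * (2 * C * Real.sqrt (2 * γ) * ((h + e) * (1 + Z ^ 2))) := by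
      have : e * Z ≤ (h + e) * (1 + Z ^ 2) := by
        apply mul_le_mul (by linarith) (by nlinarith [sq_nonneg (Z - 1)]) hZ (by positivity)
      calc _ = B * (2 * C * Real.sqrt (2 * γ) * (e * Z)) := by ring
        _ ≤ _ := by gcongr
    have h7 : 2 * γ * h * Z ^ 2 ≤ B * (2 * γ * ((h + e) * (1 + Z ^ 2))) := by
      have : e ^ 2 * Z ^ 2 ≤ (h + e) * (1 + Z ^ 2) := by
        apply mul_le_mul (by nlinarith) (by linarith) (sq_nonneg _) (by positivity)
      calc _ = B * (2 * γ * (e ^ 2 * Z ^ 2)) := by rw [← hBe]; ring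
        _ ≤ _ := by gcongr
    refine le_of_mul_le_mul_left (?_ : B * |δ| ≤ B * _) hB0
    rw [hD]
    calc _ ≤ _ := h4
      _ ≤ _ := add_le_add (add_le_add h5 h6) h7
      _ = _ := by ring
  have hW : 1 ≤ 1 + Z ^ 2 := by nlinarith
  have hδ2 : δ ^ 2 ≤ 2 * D ^ 2 * (h ^ 2 + h / B) * (1 + Z ^ 2) ^ 2 := by
    rw [← sq_abs]
    calc |δ| ^ 2 ≤ (D * (h + e) * (1 + Z ^ 2)) ^ 2 := by gcongr
      _ = D ^ 2 * (h + e) ^ 2 * (1 + Z ^ 2) ^ 2 := by ring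
      _ ≤ D ^ 2 * (2 * (h ^ 2 + h / B)) * (1 + Z ^ 2) ^ 2 := by
        gcongr
        rw [← he2]; nlinarith [sq_nonneg (h - e)]
      _ = _ := by ring
  have hδ1 : 1 + |δ| ≤ (1 + 2 * D) * (1 + Z ^ 2) := by
    have : D * (h + e) * (1 + Z ^ 2) ≤ D * 2 * (1 + Z ^ 2) := by gcongr; linarith
    nlinarith
  calc δ ^ 2 * (1 + |δ|) ^ p
      ≤ (2 * D ^ 2 * (h ^ 2 + h / B) * (1 + Z ^ 2) ^ 2) * ((1 + 2 * D) * (1 + Z ^ 2)) ^ p := by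
        gcongr
    _ = _ := by rw [mul_pow, pow_add]; ring

lemma prob_aux (d : ℕ) (γ C a K' r : ℝ) (hγ : 0 < γ) (hC : 0 < C) (hK' : 0 < K')
    (hr : 1 ≤ r) :
    ∃ K > (0 : ℝ), ∀ h : ℝ, 0 < h → h ≤ 1 → ∀ A B : ℝ, ∀ y : EuclideanSpace ℝ (Fin d),
      1 ≤ B → A - B ≤ - a * h * B + K' * h → |A - B| ≤ C * h * B → ‖y‖ ^ 2 ≤ C ^ 2 * B →
      (∀ z : Fin d → ℝ, 0 ≤ A + 2 * Real.sqrt (2 * γ * h) * ⟪y, WithLp.toLp 2 z⟫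
        + 2 * γ * h * ‖WithLp.toLp 2 z‖ ^ 2) →
      ∫⁻ z : Fin d → ℝ, ENNReal.ofReal ((A + 2 * Real.sqrt (2 * γ * h) * ⟪y, WithLp.toLp 2 z⟫
        + 2 * γ * h * ‖WithLp.toLp 2 z‖ ^ 2) ^ r) ∂(Measure.pi fun _ : Fin d => gaussianReal 0 1)
        ≤ ENNReal.ofReal (B ^ r * (1 - r * a * h + K * (h ^ 2 + h / B))) := by
  obtain ⟨p, hp⟩ := exists_nat_ge r
  set μ := Measure.pi fun _ : Fin d => gaussianReal 0 1 with hμ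
  have hMint := gauss_mom d (2 + p)
  have hZint : Integrable (fun z : Fin d → ℝ => ‖WithLp.toLp 2 z‖ ^ 2) μ := by
    have h := (gauss_mom d 1).sub (integrable_const (1 : ℝ))
    refine h.congr (Filter.Eventually.of_forall fun z => ?_)
    simp
  obtain ⟨M, hM⟩ : ∃ M, M = ∫ z : Fin d → ℝ, (1 + ‖WithLp.toLp 2 z‖ ^ 2) ^ (2 + p) ∂μ := ⟨_, rfl⟩
  obtain ⟨T, hT⟩ : ∃ T, T = ∫ z : Fin d → ℝ, ‖WithLp.toLp 2 z‖ ^ 2 ∂μ := ⟨_, rfl⟩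
  have hM0 : 0 ≤ M := by rw [hM]; exact integral_nonneg fun z => by positivity
  have hT0 : 0 ≤ T := by rw [hT]; exact integral_nonneg fun z => by positivity
  obtain ⟨D, hD⟩ : ∃ D, D = C + 2 * C * Real.sqrt (2 * γ) + 2 * γ := ⟨_, rfl⟩
  have hD0 : 0 < D := by rw [hD]; positivity
  obtain ⟨E, hE⟩ : ∃ E, E = 2 * r ^ 2 * (2 * D ^ 2 * (1 + 2 * D) ^ p) := ⟨_, rfl⟩
  have hE0 : 0 < E := by rw [hE]; positivity
  refine ⟨r * K' + r * (2 * γ) * T + E * M, by positivity, ?_⟩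
  intro h hh hh1 A B y hB hAB1 hAB2 hy hpos
  have hB0 : 0 < B := by linarith
  have hBr : 0 < B ^ r := Real.rpow_pos_of_pos hB0 r
  have hyn : ‖y‖ ≤ C * Real.sqrt B := by
    rw [← Real.sqrt_sq hC.le, ← Real.sqrt_mul (by positivity)]
    exact Real.le_sqrt_of_sq_le hy
  obtain ⟨hI, hI0⟩ := gauss_inner d y
  obtain ⟨s, hs⟩ : ∃ s, s = 2 * Real.sqrt (2 * γ * h) := ⟨_, rfl⟩
  let F : (Fin d → ℝ) → ℝ := fun z => B ^ r * (1 + r * ((A - B) / B) 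
      + (r * s / B) * ⟪y, WithLp.toLp 2 z⟫ + (r * (2 * γ * h) / B) * ‖WithLp.toLp 2 z‖ ^ 2
      + (E * (h ^ 2 + h / B)) * (1 + ‖WithLp.toLp 2 z‖ ^ 2) ^ (2 + p))
  have hF : ∀ z, (A + 2 * Real.sqrt (2 * γ * h) * ⟪y, WithLp.toLp 2 z⟫
        + 2 * γ * h * ‖WithLp.toLp 2 z‖ ^ 2) ^ r ≤ F z := by
    intro z
    have hz := hpos z
    have hip : |⟪y, WithLp.toLp 2 z⟫| ≤ C * Real.sqrt B * ‖WithLp.toLp 2 z‖ :=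
      (abs_real_inner_le_norm _ _).trans (by gcongr)
    obtain ⟨δ, hδ⟩ : ∃ δ, δ = (A - B + 2 * Real.sqrt (2 * γ * h) * ⟪y, WithLp.toLp 2 z⟫
        + 2 * γ * h * ‖WithLp.toLp 2 z‖ ^ 2) / B := ⟨_, rfl⟩
    have hBδ : B * δ = A - B + 2 * Real.sqrt (2 * γ * h) * ⟪y, WithLp.toLp 2 z⟫
        + 2 * γ * h * ‖WithLp.toLp 2 z‖ ^ 2 := by rw [hδ]; field_simp
    have hX : A + 2 * Real.sqrt (2 * γ * h) * ⟪y, WithLp.toLp 2 z⟫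
        + 2 * γ * h * ‖WithLp.toLp 2 z‖ ^ 2 = B * (1 + δ) := by linarith
    rw [hX] at hz ⊢
    have h1δ : 0 ≤ 1 + δ := nonneg_of_mul_nonneg_right hz hB0
    rw [Real.mul_rpow hB0.le h1δ]
    have t1 := taylor_aux r hr p hp δ (by linarith)
    have t2 := delta_aux γ C h B _ A _ hγ hC hh hh1 hB (norm_nonneg _) hAB2 hip p δ hBδ D hD
    have t3 : 2 * r ^ 2 * (δ ^ 2 * (1 + |δ|) ^ p) ≤
        (E * (h ^ 2 + h / B)) * (1 + ‖WithLp.toLp 2 z‖ ^ 2) ^ (2 + p) := by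
      refine (mul_le_mul_of_nonneg_left t2 (by positivity : 0 ≤ 2 * r ^ 2)).trans (le_of_eq ?_)
      rw [hE]; ring
    have t4 : r * δ = r * ((A - B) / B) 
      + (r * s / B) * ⟪y, WithLp.toLp 2 z⟫ + (r * (2 * γ * h) / B) * ‖WithLp.toLp 2 z‖ ^ 2 := by
      rw [hδ, hs]; ring
    refine mul_le_mul_of_nonneg_left ?_ hBr.le
    linarith
  have i1 : Integrable (fun _ : Fin d → ℝ => 1 + r * ((A - B) / B)) μ := integrable_const _
  have i2 := hI.const_mul (r * s / B)
  have i3 := hZint.const_mul (r * (2 * γ * h) / B)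
  have i4 := hMint.const_mul (E * (h ^ 2 + h / B))
  have hFint : Integrable F μ := (((i1.add i2).add i3).add i4).const_mul (B ^ r)
  have hFval : ∫ z, F z ∂μ = B ^ r * (1 + r * ((A - B) / B) + (r * (2 * γ * h) / B) * T
      + (E * (h ^ 2 + h / B)) * M) := by
    simp only [F]
    have i12 : Integrable (fun z : Fin d → ℝ => 1 + r * ((A - B) / B)
      + (r * s / B) * ⟪y, WithLp.toLp 2 z⟫) μ := i1.add i2
    have i123 : Integrable (fun z : Fin d → ℝ => 1 + r * ((A - B) / B)
      + (r * s / B) * ⟪y, WithLp.toLp 2 z⟫ + (r * (2 * γ * h) / B) * ‖WithLp.toLp 2 z‖ ^ 2) μ :=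
      i12.add i3
    rw [integral_const_mul, integral_add i123 i4, integral_add i12 i3,
      integral_add i1 i2, integral_const_mul, integral_const_mul, integral_const_mul, hI0, ← hT,
      ← hM]
    simp
  calc _ ≤ ∫⁻ z, ENNReal.ofReal (F z) ∂μ :=
        lintegral_mono fun z => ENNReal.ofReal_le_ofReal (hF z)
    _ = ENNReal.ofReal (∫ z, F z ∂μ) :=
        (ofReal_integral_eq_lintegral_ofReal hFint (Filter.Eventually.of_forall fun z =>
          (Real.rpow_nonneg (hpos z) r).trans (hF z))).symm
    _ ≤ _ := by
      rw [hFval]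
      apply ENNReal.ofReal_le_ofReal
      refine mul_le_mul_of_nonneg_left ?_ hBr.le
      have u1 : (A - B) / B ≤ - a * h + K' * (h / B) := by
        rw [div_le_iff₀ hB0]
        have : (- a * h + K' * (h / B)) * B = - a * h * B + K' * h := by field_simp
        linarith
      have u2 := mul_le_mul_of_nonneg_left u1 (by linarith : 0 ≤ r)
      have u3 : 0 ≤ (r * K' + r * (2 * γ) * T) * h ^ 2 := by positivity
      have u4 : r * (2 * γ * h) / B * T = r * (2 * γ) * T * (h / B) := by ring
      rw [u4]
      linarith

/-- one-step Lyapunov inequality `E[H_r(x₁,v₁)] ≤ e^{−a₁h}H_r(x₀,v₀) + b₁h`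
for the Euler–Maruyama update of the underdamped Langevin dynamics, under A1 and A2, where
`H_r(x,v) = (γ|x|² + 2⟨x,v⟩ + |v|² + 1)^r`. -/
theorem statement10 (d : ℕ) (hd : 1 ≤ d) (U : EuclideanSpace ℝ (Fin d) → ℝ)
    (C₁ m R : ℝ) (hC₁ : 0 < C₁) (hm : 0 < m) (hR : 0 < R)
    -- A1
    (hU : ContDiff ℝ 3 U)
    (hU0 : ∀ x, |U x| ≤ C₁ * (‖x‖ + 1) ^ 2)
    (hU1 : ∀ x, ‖gradient U x‖ ≤ C₁ * (‖x‖ + 1))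
    (hU2 : ∀ x, ‖iteratedFDeriv ℝ 2 U x‖ ≤ C₁)
    (hU3 : ∀ x, ‖iteratedFDeriv ℝ 3 U x‖ ≤ C₁)
    -- A2
    (hconv : ∀ x, R ≤ ‖x‖ → ∀ y, m * ‖y‖ ^ 2 ≤ iteratedFDeriv ℝ 2 U x ![y, y])
    (r : ℝ) (hr : 1 ≤ r) :
    ∃ γ₀ > (0 : ℝ), ∀ γ ≥ γ₀, ∃ a₁ > (0 : ℝ), ∃ b₁ > (0 : ℝ), ∃ h₀ > (0 : ℝ),
      ∀ h : ℝ, 0 < h → h ≤ h₀ →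
      ∀ x₀ v₀ : EuclideanSpace ℝ (Fin d),
      ∀ (Ω : Type) (_ : MeasurableSpace Ω) (P : Measure Ω), IsProbabilityMeasure P →
      ∀ ξ : Ω → EuclideanSpace ℝ (Fin d), Measurable ξ →
        -- ξ is a standard Gaussian random vector in ℝ^d
        (Measure.map (fun ω i => ξ ω i) P = Measure.pi fun _ : Fin d => gaussianReal 0 1) →
        (∫⁻ ω, ENNReal.ofReal
            ((γ * ‖x₀ + h • v₀‖ ^ 2 +
              2 * ⟪x₀ + h • v₀,
                    v₀ - h • gradient U x₀ - (γ * h) • v₀ + Real.sqrt (2 * γ * h) • ξ ω⟫ +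
              ‖v₀ - h • gradient U x₀ - (γ * h) • v₀ + Real.sqrt (2 * γ * h) • ξ ω‖ ^ 2 +
              1) ^ r) ∂P) ≤
          ENNReal.ofReal (Real.exp (-a₁ * h) *
              (γ * ‖x₀‖ ^ 2 + 2 * ⟪x₀, v₀⟫ + ‖v₀‖ ^ 2 + 1) ^ r + b₁ * h) := by
  obtain ⟨K, hK, hdrift⟩ := drift_aux U C₁ m R hC₁ hm hR hU hU1 hconv
  obtain ⟨γ₀, hγ₀, hdet⟩ := det_aux (d := d) C₁ (m / 2) K hC₁ (by positivity) hK
  refine ⟨max γ₀ 1, by positivity, fun γ hγ => ?_⟩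
  have hγ1 : 1 ≤ γ := (le_max_right _ _).trans hγ
  have hγp : 0 < γ := by linarith
  obtain ⟨a, ha, K', hK', C, hC, h₁, hh₁, hdet⟩ := hdet γ ((le_max_left _ _).trans hγ)
  obtain ⟨K₂, hK₂, hprob⟩ := prob_aux d γ C a K' r hγp hC hK' hr
  obtain ⟨b, hb, h₂, hh₂, hfin⟩ := final_aux (r * a) K₂ r (by positivity) hK₂ hr
  refine ⟨r * a / 2, by positivity, b, hb, min 1 (min h₁ h₂), by positivity, ?_⟩
  intro h hh hle x v Ω _ P _ ξ hξ hlaw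
  have hle1 : h ≤ 1 := hle.trans (min_le_left _ _)
  have hle2 : h ≤ h₁ := hle.trans ((min_le_right _ _).trans (min_le_left _ _))
  have hle3 : h ≤ h₂ := hle.trans ((min_le_right _ _).trans (min_le_right _ _))
  obtain ⟨q1, q2, q3, q4⟩ := hdet h hh hle2 x v (gradient U x) (hU1 x) (hdrift x) _ _ rfl rfl
  set g := gradient U x with hg
  set w := v - h • g - (γ * h) • v with hw
  set A := γ * ‖x + h • v‖ ^ 2 + 2 * ⟪x + h • v, w⟫ + ‖w‖ ^ 2 + 1 with hA
  have hexp : ∀ e : EuclideanSpace ℝ (Fin d),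
      γ * ‖x + h • v‖ ^ 2 + 2 * ⟪x + h • v, w + Real.sqrt (2 * γ * h) • e⟫ +
        ‖w + Real.sqrt (2 * γ * h) • e‖ ^ 2 + 1 =
      A + 2 * Real.sqrt (2 * γ * h) * ⟪x + h • v + w, e⟫ + 2 * γ * h * ‖e‖ ^ 2 := by
    intro e
    have hs : Real.sqrt (2 * γ * h) ^ 2 = 2 * γ * h := Real.sq_sqrt (by positivity)
    rw [norm_add_sq_real w, norm_smul, mul_pow, Real.norm_eq_abs, sq_abs, hs, inner_add_right,
      real_inner_smul_right, real_inner_smul_right, inner_add_left (x + h • v), hA]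
    ring
  have hnn : ∀ e : EuclideanSpace ℝ (Fin d),
      0 ≤ A + 2 * Real.sqrt (2 * γ * h) * ⟪x + h • v + w, e⟫ + 2 * γ * h * ‖e‖ ^ 2 := by
    intro e
    rw [← hexp]
    have h1 := (abs_le.1 (abs_real_inner_le_norm (x + h • v) (w + Real.sqrt (2 * γ * h) • e))).1
    have h2 : 1 * ‖x + h • v‖ ^ 2 ≤ γ * ‖x + h • v‖ ^ 2 := by gcongr
    nlinarith [sq_nonneg (‖x + h • v‖ - ‖w + Real.sqrt (2 * γ * h) • e‖)]
  simp only [hexp]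
  have hmeas : Measurable (fun ω i => ξ ω i) := by fun_prop
  have hmap := lintegral_map (μ := P) (g := fun ω i => ξ ω i)
    (f := fun z : Fin d → ℝ => ENNReal.ofReal ((A + 2 * Real.sqrt (2 * γ * h) *
      ⟪x + h • v + w, WithLp.toLp 2 z⟫ + 2 * γ * h * ‖WithLp.toLp 2 z‖ ^ 2) ^ r))
    (by fun_prop) hmeas
  rw [hlaw] at hmap
  have h1 := hprob h hh hle1 A _ (x + h • v + w) q1 q2 q3 q4 (fun z => hnn _)
  rw [hmap] at h1
  refine h1.trans (ENNReal.ofReal_le_ofReal ?_)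
  have h2 := hfin h hh hle3 _ q1
  rw [neg_mul] at h2 ⊢
  exact h2
end

section
/- (Statistical error of the Euler–Maruyama integrator under global strong convexity, strong order p = 1, q = 1.) Assume A1, A2' and A3. Consider the Euler–Maruyama chain (X_n,V_n) with time step h and damping rate γ, started from initial data with E(|X₀|+|V₀|+1)⁴ < ∞. There exists γ₀ > 0 such that whenever γ ≥ γ₀, there exist constants C, h₀ > 0 depending on γ such that for every 0 < h ≤ h₀ and every integer N ≥ 1: E[((1/N)·Σ_{n=0}^{N−1} f(X_n,V_n) − π(f))²] ≤ C·(h² + 1/(Nh))·E(|X₀|+|V₀|+1)⁴. -/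
open MeasureTheory ProbabilityTheory
open scoped ENNReal

section gaussianFacts

variable {E : Type*} [NormedAddCommGroup E] [InnerProductSpace ℝ E] [FiniteDimensional ℝ E]
  [MeasurableSpace E] [BorelSpace E]

lemma lintegral_neg_stdGaussian (G : E → ℝ≥0∞) (hG : Measurable G) :
    ∫⁻ w, G (-w) ∂(stdGaussian E) = ∫⁻ w, G w ∂(stdGaussian E) := by
  have h := stdGaussian_map (LinearIsometryEquiv.neg ℝ (E := E))
  conv_rhs => rw [← h]
  rw [lintegral_map hG (by fun_prop)]
  simp

lemma lintegral_rot_stdGaussian (η σ : ℝ) (hησ : η ^ 2 + σ ^ 2 = 1)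
    (G : E → ℝ≥0∞) (hG : Measurable G) :
    ∫⁻ v, ∫⁻ w, G (η • v + σ • w) ∂(stdGaussian E) ∂(stdGaussian E)
      = ∫⁻ w, G w ∂(stdGaussian E) := by
  obtain ⟨θ, h1, h2⟩ : ∃ θ : ℝ, Real.cos θ = η ∧ Real.sin θ = σ := by
    have hz : (⟨η, σ⟩ : ℂ) ≠ 0 := by
      intro h
      have a := congrArg Complex.re h
      have b := congrArg Complex.im h
      simp at a b
      simp [a, b] at hησ
    have hn : ‖(⟨η, σ⟩ : ℂ)‖ = 1 := by
      rw [Complex.norm_eq_sqrt_sq_add_sq]; simp [hησ]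
    refine ⟨Complex.arg ⟨η, σ⟩, ?_, ?_⟩
    · rw [Complex.cos_arg hz, hn]; simp
    · rw [Complex.sin_arg, hn]; simp
  have h := IsGaussian.map_rotation_eq_self (μ := stdGaussian E) (by simp) θ
  have h3 : ∫⁻ p, G p.1 ∂((stdGaussian E).prod (stdGaussian E)) = ∫⁻ w, G w ∂(stdGaussian E) := by
    rw [lintegral_prod _ (by fun_prop)]; simp
  rw [← h3, ← h, lintegral_map (by fun_prop) (by fun_prop), lintegral_prod _ (by fun_prop)]
  simp [ContinuousLinearMap.rotation_apply, h1, h2]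

lemma integrable_norm_pow_stdGaussian (k : ℕ) :
    Integrable (fun w : E => ‖w‖ ^ k) (stdGaussian E) := by
  have h := IsGaussian.memLp_id (stdGaussian E) (k : ℝ≥0∞) (by simp)
  exact h.integrable_norm_pow'

lemma integrable_one_add_norm_pow_stdGaussian (k : ℕ) :
    Integrable (fun w : E => (1 + ‖w‖) ^ k) (stdGaussian E) := by
  have : (fun w : E => (1 + ‖w‖) ^ k)
      = fun w => ∑ j ∈ Finset.range (k+1), 1 ^ j * ‖w‖ ^ (k - j) * (k.choose j : ℝ) := by
    ext w; rw [add_pow]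
  rw [this]
  refine integrable_finsetSum _ fun j _ => ?_
  simp only [one_pow, one_mul]
  exact (integrable_norm_pow_stdGaussian _).mul_const _

end gaussianFacts

lemma stdGaussian_density (d : ℕ) : ∃ c : ℝ≥0∞, c ≠ 0 ∧ c ≠ ∞ ∧
    (volume : Measure (EuclideanSpace ℝ (Fin d))).withDensity
      (fun v => ENNReal.ofReal (Real.exp (-(‖v‖ ^ 2 / 2)))) =
      c • stdGaussian (EuclideanSpace ℝ (Fin d)) := by
  set K : ℝ := (Real.pi / (1/2)) ^ (d / 2 : ℝ) with hK
  have hKpos : 0 < K := by positivity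
  have hintegr : Integrable (fun v : EuclideanSpace ℝ (Fin d) => Real.exp (-(‖v‖ ^ 2 / 2))) := by
    have := GaussianFourier.integrable_cexp_neg_mul_sq_norm_add (b := (1/2 : ℂ)) (by norm_num) 0
      (0 : EuclideanSpace ℝ (Fin d))
    have h2 := this.norm
    refine h2.congr (ae_of_all _ fun v => ?_)
    simp only [Complex.norm_exp]
    congr 1
    simp [← Complex.ofReal_pow]
    ring
  have : IsFiniteMeasure ((volume : Measure (EuclideanSpace ℝ (Fin d))).withDensity
      (fun v => ENNReal.ofReal (Real.exp (-(‖v‖ ^ 2 / 2))))) :=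
    isFiniteMeasure_withDensity_ofReal hintegr.2
  have : IsFiniteMeasure (ENNReal.ofReal K • stdGaussian (EuclideanSpace ℝ (Fin d))) :=
    Measure.smul_finite _ (by simp)
  refine ⟨ENNReal.ofReal K, by simpa using hKpos, by simp, ?_⟩
  apply Measure.ext_of_charFun (E := EuclideanSpace ℝ (Fin d))
  ext t
  have h1 := GaussianFourier.integral_cexp_neg_mul_sq_norm_add (b := (1/2 : ℂ)) (by norm_num)
    Complex.I t
  rw [charFun_apply, charFun_apply, integral_smul_measure,
    ← charFun_apply (μ := stdGaussian (EuclideanSpace ℝ (Fin d))), charFun_stdGaussian]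
  rw [integral_withDensity_eq_integral_toReal_smul (by fun_prop) (by simp)]
  rw [ENNReal.toReal_ofReal hKpos.le]
  have hR : (Real.pi / (1/2 : ℂ)) ^ (Module.finrank ℝ (EuclideanSpace ℝ (Fin d)) / 2 : ℂ)
      = (K : ℂ) := by
    rw [hK, Complex.ofReal_cpow (by positivity)]
    simp
  rw [hR] at h1
  convert h1 using 1
  · refine integral_congr_ae (ae_of_all _ fun v => ?_)
    simp only [ENNReal.toReal_ofReal (Real.exp_pos _).le, Complex.real_smul]
    rw [Complex.ofReal_exp, ← Complex.exp_add]
    congr 1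
    rw [real_inner_comm]
    push_cast
    ring
  · rw [Complex.real_smul]
    congr 2
    rw [Complex.I_sq]
    ring

section potential

set_option linter.unusedSectionVars false

lemma lip_of_iteratedFDeriv_one {F G : Type*} [NormedAddCommGroup F] [NormedSpace ℝ F]
    [NormedAddCommGroup G] [NormedSpace ℝ G] {f : F → G}
    {C₂ : ℝ} (hf : Differentiable ℝ f) (hf1 : ∀ z, ‖iteratedFDeriv ℝ 1 f z‖ ≤ C₂) (z z' : F) :
    ‖f z - f z'‖ ≤ C₂ * ‖z - z'‖ :=
  convex_univ.norm_image_sub_le_of_norm_fderiv_le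
    (fun z _ => hf z)
    (fun z _ => by have := hf1 z; rwa [norm_iteratedFDeriv_one] at this)
    (Set.mem_univ z') (Set.mem_univ z)


lemma le_of_hasDerivAt_nonneg (φ φ' : ℝ → ℝ) (h : ∀ t, HasDerivAt φ (φ' t) t)
    (hn : ∀ t, 0 ≤ t → t ≤ 1 → 0 ≤ φ' t) : φ 0 ≤ φ 1 := by
  have : MonotoneOn φ (Set.Icc 0 1) := by
    refine monotoneOn_of_deriv_nonneg (convex_Icc _ _)
      (fun t _ => (h t).continuousAt.continuousWithinAt)
      (fun t _ => (h t).differentiableAt.differentiableWithinAt) ?_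
    intro t ht
    rw [interior_Icc] at ht
    rw [(h t).deriv]
    exact hn t ht.1.le ht.2.le
  exact this (by simp) (by simp) zero_le_one

variable {E : Type*} [NormedAddCommGroup E] [InnerProductSpace ℝ E] [CompleteSpace E]

variable {U : E → ℝ} {C₁ m : ℝ}

lemma inner_gradient_eq (x y : E) : inner ℝ (gradient U x) y = fderiv ℝ U x y := by
  simp [gradient]

lemma gradient_sub_norm (x y : E) :
    ‖gradient U x - gradient U y‖ = ‖fderiv ℝ U x - fderiv ℝ U y‖ := by
  simp only [gradient]
  rw [← map_sub, LinearIsometryEquiv.norm_map]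

lemma norm_fderiv2_le (hU2 : ∀ x, ‖iteratedFDeriv ℝ 2 U x‖ ≤ C₁) (x : E) :
    ‖fderiv ℝ (fderiv ℝ U) x‖ ≤ C₁ := by
  have := hU2 x
  rwa [← norm_iteratedFDeriv_fderiv, norm_iteratedFDeriv_one] at this

lemma gradient_lipschitz (hU : ContDiff ℝ 3 U) (hU2 : ∀ x, ‖iteratedFDeriv ℝ 2 U x‖ ≤ C₁)
    (x y : E) : ‖gradient U x - gradient U y‖ ≤ C₁ * ‖x - y‖ := by
  rw [gradient_sub_norm]
  have hd : Differentiable ℝ (fderiv ℝ U) :=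
    (hU.fderiv_right (m := 2) (by norm_num)).differentiable (by norm_num)
  exact convex_univ.norm_image_sub_le_of_norm_fderiv_le (fun z _ => hd z)
    (fun z _ => norm_fderiv2_le hU2 z) (Set.mem_univ y) (Set.mem_univ x)

lemma hasDerivAt_line_fderiv (hU : ContDiff ℝ 3 U) (y e e' : E) (t : ℝ) :
    HasDerivAt (fun t : ℝ => fderiv ℝ U (y + t • e) e')
      (fderiv ℝ (fderiv ℝ U) (y + t • e) e e') t := by
  have hd : Differentiable ℝ (fderiv ℝ U) :=
    (hU.fderiv_right (m := 2) (by norm_num)).differentiable (by norm_num)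
  have hl : HasDerivAt (fun t : ℝ => y + t • e) e t := by
    simpa using ((hasDerivAt_id t).smul_const e).const_add y
  have := (hd (y + t • e)).hasFDerivAt.comp_hasDerivAt t hl
  exact this.clm_apply (hasDerivAt_const t e') |>.congr_deriv (by simp)

lemma hasDerivAt_line (hU : ContDiff ℝ 3 U) (y e : E) (t : ℝ) :
    HasDerivAt (fun t : ℝ => U (y + t • e)) (fderiv ℝ U (y + t • e) e) t := by
  have hl : HasDerivAt (fun t : ℝ => y + t • e) e t := by
    simpa using ((hasDerivAt_id t).smul_const e).const_add y
  exact ((hU.differentiable (by norm_num)) (y + t • e)).hasFDerivAt.comp_hasDerivAt t hl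

lemma gradient_mono (hU : ContDiff ℝ 3 U)
    (hconv : ∀ x y, m * ‖y‖ ^ 2 ≤ iteratedFDeriv ℝ 2 U x ![y, y]) (x y : E) :
    m * ‖x - y‖ ^ 2 ≤ inner ℝ (gradient U x - gradient U y) (x - y) := by
  rw [inner_sub_left, inner_gradient_eq, inner_gradient_eq]
  have := le_of_hasDerivAt_nonneg
    (fun t : ℝ => fderiv ℝ U (y + t • (x - y)) (x - y) - t * (m * ‖x - y‖ ^ 2))
    (fun t => fderiv ℝ (fderiv ℝ U) (y + t • (x - y)) (x - y) (x - y) - (m * ‖x - y‖ ^ 2))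
    (fun t => by
      have h1 := hasDerivAt_line_fderiv hU y (x - y) (x - y) t
      have h2 := (hasDerivAt_id t).mul_const (m * ‖x - y‖ ^ 2)
      exact (h1.sub h2).congr_deriv (by simp))
    (fun t _ _ => by
      have := hconv (y + t • (x - y)) (x - y)
      rw [iteratedFDeriv_two_apply] at this
      simpa using this)
  simp only [one_smul, zero_smul, add_zero, add_sub_cancel, one_mul, zero_mul, sub_zero] at this
  linarith

lemma potential_lower (hm : 0 < m) (hU : ContDiff ℝ 3 U)
    (hconv : ∀ x y, m * ‖y‖ ^ 2 ≤ iteratedFDeriv ℝ 2 U x ![y, y]) :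
    ∃ K : ℝ, ∀ x, m / 4 * ‖x‖ ^ 2 - K ≤ U x := by
  refine ⟨‖fderiv ℝ U 0‖ ^ 2 / m - U 0, fun x => ?_⟩
  have h := le_of_hasDerivAt_nonneg
    (fun t : ℝ => U (0 + t • x) - t * (fderiv ℝ U 0 x) - t ^ 2 * (m / 2 * ‖x‖ ^ 2))
    (fun t => fderiv ℝ U (0 + t • x) x - fderiv ℝ U 0 x - 2 * t * (m / 2 * ‖x‖ ^ 2))
    (fun t => by
      have h1 := hasDerivAt_line hU 0 x t
      have h2 := (hasDerivAt_id t).mul_const (fderiv ℝ U 0 x)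
      have h3 := (hasDerivAt_pow 2 t).mul_const (m / 2 * ‖x‖ ^ 2)
      exact ((h1.sub h2).sub h3).congr_deriv (by simp))
    (fun t ht _ => by
      rcases ht.eq_or_lt with rfl | ht
      · simp
      have := gradient_mono hU hconv (t • x) 0
      rw [inner_sub_left, inner_gradient_eq, inner_gradient_eq] at this
      simp only [sub_zero, map_smul, smul_eq_mul, norm_smul, Real.norm_eq_abs, mul_pow, sq_abs]
        at this
      simp only [zero_add]
      have h2 : t * (m * (t * ‖x‖ ^ 2)) ≤ t * (fderiv ℝ U (t • x) x - fderiv ℝ U 0 x) := by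
        linarith
      have := le_of_mul_le_mul_left h2 ht
      linarith)
  simp at h
  have h1 : |fderiv ℝ U 0 x| ≤ ‖fderiv ℝ U 0‖ * ‖x‖ := (fderiv ℝ U 0).le_opNorm x
  have h2 := (abs_le.1 h1).1
  set a := ‖fderiv ℝ U 0‖
  have h3 : a * ‖x‖ ≤ a ^ 2 / m + m / 4 * ‖x‖ ^ 2 := by
    have : 0 ≤ (a - m / 2 * ‖x‖) ^ 2 / m := by positivity
    have e : (a - m / 2 * ‖x‖) ^ 2 / m = a ^ 2 / m - a * ‖x‖ + m / 4 * ‖x‖ ^ 2 := by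
      field_simp; ring
    linarith
  linarith

lemma taylor_one (hC₁ : 0 < C₁) (hU : ContDiff ℝ 3 U)
    (hU3 : ∀ x, ‖iteratedFDeriv ℝ 3 U x‖ ≤ C₁) (y e : E) :
    ‖fderiv ℝ U (y + e) - fderiv ℝ U y - fderiv ℝ (fderiv ℝ U) y e‖ ≤ C₁ * ‖e‖ ^ 2 := by
  have hd : Differentiable ℝ (fderiv ℝ U) :=
    (hU.fderiv_right (m := 2) (by norm_num)).differentiable (by norm_num)
  have hd2 : Differentiable ℝ (fderiv ℝ (fderiv ℝ U)) :=
    ((hU.fderiv_right (m := 2) (by norm_num)).fderiv_right (m := 1) (by norm_num)).differentiable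
      (by norm_num)
  have hL : ∀ z, ‖fderiv ℝ (fderiv ℝ U) z - fderiv ℝ (fderiv ℝ U) y‖ ≤ C₁ * ‖z - y‖ := fun z =>
    lip_of_iteratedFDeriv_one hd2 (fun z => by
      have := hU3 z
      rwa [← norm_iteratedFDeriv_fderiv, ← norm_iteratedFDeriv_fderiv] at this) z y
  have := (convex_closedBall y ‖e‖).norm_image_sub_le_of_norm_fderiv_le' (f := fderiv ℝ U)
    (φ := fderiv ℝ (fderiv ℝ U) y) (C := C₁ * ‖e‖) (𝕜 := ℝ) (x := y) (y := y + e)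
    (fun z _ => hd z) (fun z hz => (hL z).trans (by
      have : ‖z - y‖ ≤ ‖e‖ := by simpa [dist_eq_norm] using hz
      gcongr)) (by simp) (by simp)
  simp only [add_sub_cancel_left] at this
  linarith

lemma taylor_two (hC₁ : 0 < C₁) (hU : ContDiff ℝ 3 U)
    (hU3 : ∀ x, ‖iteratedFDeriv ℝ 3 U x‖ ≤ C₁) (y e : E) :
    |U (y + e) - U y - fderiv ℝ U y e - 1 / 2 * fderiv ℝ (fderiv ℝ U) y e e|
      ≤ C₁ * ‖e‖ ^ 3 := by
  have hb : ∀ t : ℝ, 0 ≤ t → t ≤ 1 →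
      |fderiv ℝ U (y + t • e) e - fderiv ℝ U y e - t * fderiv ℝ (fderiv ℝ U) y e e|
        ≤ C₁ * ‖e‖ ^ 3 := by
    intro t h0 h1
    have := taylor_one hC₁ hU hU3 y (t • e)
    have h2 := ((fderiv ℝ U (y + t • e) - fderiv ℝ U y
      - fderiv ℝ (fderiv ℝ U) y (t • e)).le_opNorm e).trans
      (mul_le_mul_of_nonneg_right this (norm_nonneg e))
    simp only [_root_.sub_apply, map_smul, _root_.smul_apply,
      smul_eq_mul, norm_smul, Real.norm_eq_abs, abs_of_nonneg h0] at h2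
    refine h2.trans ?_
    have : t ^ 2 ≤ 1 := by nlinarith
    have h3 : 0 ≤ C₁ * ‖e‖ ^ 3 := by positivity
    nlinarith
  have hder : ∀ t : ℝ, HasDerivAt
      (fun t : ℝ => U (y + t • e) - t * fderiv ℝ U y e
        - t ^ 2 * (1 / 2 * fderiv ℝ (fderiv ℝ U) y e e))
      (fderiv ℝ U (y + t • e) e - fderiv ℝ U y e - t * fderiv ℝ (fderiv ℝ U) y e e) t := by
    intro t
    have h1 := hasDerivAt_line hU y e t
    have h2 := (hasDerivAt_id t).mul_const (fderiv ℝ U y e)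
    have h3 := (hasDerivAt_pow 2 t).mul_const (1 / 2 * fderiv ℝ (fderiv ℝ U) y e e)
    refine ((h1.sub h2).sub h3).congr_deriv ?_
    simp; ring
  have hlin : ∀ t : ℝ, HasDerivAt (fun t : ℝ => t * (C₁ * ‖e‖ ^ 3)) (C₁ * ‖e‖ ^ 3) t := by
    intro t; simpa using (hasDerivAt_id t).mul_const (C₁ * ‖e‖ ^ 3)
  have u := le_of_hasDerivAt_nonneg _ _ (fun t => (hlin t).sub (hder t))
    (fun t h0 h1 => by have := (abs_le.1 (hb t h0 h1)).2; linarith)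
  have l := le_of_hasDerivAt_nonneg _ _ (fun t => (hlin t).add (hder t))
    (fun t h0 h1 => by have := (abs_le.1 (hb t h0 h1)).1; linarith)
  simp at u l
  rw [abs_le]
  constructor <;> linarith

lemma taylor_mid (hC₁ : 0 < C₁) (hU : ContDiff ℝ 3 U)
    (hU2 : ∀ x, ‖iteratedFDeriv ℝ 2 U x‖ ≤ C₁)
    (hU3 : ∀ x, ‖iteratedFDeriv ℝ 3 U x‖ ≤ C₁) (y a b : E) :
    |U (y + a) - U (y - b) - inner ℝ (gradient U y) (a + b)|
      ≤ C₁ * (‖a - b‖ * (‖a‖ + ‖b‖) + ‖a‖ ^ 3 + ‖b‖ ^ 3) := by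
  have h1 := taylor_two hC₁ hU hU3 y a
  have h2 := taylor_two hC₁ hU hU3 y (-b)
  set H := fderiv ℝ (fderiv ℝ U) y
  have h3 : |H (a - b) a| ≤ C₁ * ‖a - b‖ * ‖a‖ :=
    (H.le_opNorm₂ _ _).trans (by gcongr; exact norm_fderiv2_le hU2 y)
  have h4 : |H b (a - b)| ≤ C₁ * ‖b‖ * ‖a - b‖ :=
    (H.le_opNorm₂ _ _).trans (by gcongr; exact norm_fderiv2_le hU2 y)
  have h5 : H a a - H b b = H (a - b) a + H b (a - b) := by
    simp only [map_sub, _root_.sub_apply]; ring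
  rw [inner_gradient_eq, map_add, sub_eq_add_neg y b]
  simp only [map_neg, _root_.neg_apply, norm_neg, neg_neg] at h2
  rw [abs_le] at *
  have : 0 ≤ C₁ * ‖a - b‖ * ‖a‖ := by positivity
  have : 0 ≤ C₁ * ‖b‖ * ‖a - b‖ := by positivity
  constructor <;> nlinarith

end potential

section contraction

variable {E : Type*} [NormedAddCommGroup E] [InnerProductSpace ℝ E]

/-- One Euler–Maruyama step with drift `g`. -/
noncomputable def emStep (g : E → E) (h γ : ℝ) (z : E × E) (w : E) : E × E :=
  (z.1 + h • z.2, z.2 - h • g z.1 - (γ * h) • z.2 + Real.sqrt (2 * γ * h) • w)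

/-- The twisted quadratic form. -/
noncomputable def Nq (β : ℝ) (z : E × E) : ℝ := ‖z.1‖ ^ 2 + ‖z.1 + β • z.2‖ ^ 2

lemma Nq_nonneg (β : ℝ) (z : E × E) : 0 ≤ Nq β z := by unfold Nq; positivity

lemma contraction_aux (C₁ m β c₀ h : ℝ) (hβ : 0 < β) (hh : 0 < h)
    (hβm : β ^ 2 * C₁ ^ 2 ≤ m) (hc1 : c₀ ≤ 1 / (2 * β)) (hc2 : c₀ ≤ β * m / 2)
    (hhK : h * (3 / β ^ 2 + 2 * β ^ 2 * C₁ ^ 2) ≤ c₀)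
    (p r D : E) (hD : ‖D‖ ≤ C₁ * ‖p‖) (hm' : m * ‖p‖ ^ 2 ≤ inner ℝ D p) :
    ‖p + (h / β) • r‖ ^ 2 + ‖p + r - (h / β) • r - (h * β) • D‖ ^ 2
      ≤ (1 - c₀ / 3 * h) * (‖p‖ ^ 2 + ‖p + r‖ ^ 2) := by
  have hDr : -(‖D‖ * ‖r‖) ≤ inner ℝ D r := (abs_le.1 (abs_real_inner_le_norm D r)).1
  have e1 : ‖p + (h / β) • r‖ ^ 2
      = ‖p‖ ^ 2 + 2 * (h / β) * inner ℝ p r + (h / β) ^ 2 * ‖r‖ ^ 2 := by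
    rw [norm_add_sq_real, norm_smul, real_inner_smul_right, mul_pow, Real.norm_eq_abs, sq_abs]; ring
  have e2 : ‖p + r - (h / β) • r - (h * β) • D‖ ^ 2
      = ‖p + r‖ ^ 2 - 2 * (h / β) * (inner ℝ p r + ‖r‖ ^ 2)
        - 2 * (h * β) * (inner ℝ D p + inner ℝ D r)
        + ‖(h / β) • r + (h * β) • D‖ ^ 2 := by
    rw [sub_sub, norm_sub_sq_real, inner_add_right, real_inner_smul_right, real_inner_smul_right,
      inner_add_left, inner_add_left, real_inner_self_eq_norm_sq, real_inner_comm D p,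
      real_inner_comm D r]
    ring
  have e3 : ‖(h / β) • r + (h * β) • D‖ ^ 2
      ≤ 2 * ((h / β) ^ 2 * ‖r‖ ^ 2) + 2 * ((h * β) ^ 2 * ‖D‖ ^ 2) := by
    have := parallelogram_law_with_norm ℝ ((h / β) • r) ((h * β) • D)
    have h1 : ‖(h / β) • r‖ ^ 2 = (h / β) ^ 2 * ‖r‖ ^ 2 := by
      rw [norm_smul, mul_pow, Real.norm_eq_abs, sq_abs]
    have h2 : ‖(h * β) • D‖ ^ 2 = (h * β) ^ 2 * ‖D‖ ^ 2 := by
      rw [norm_smul, mul_pow, Real.norm_eq_abs, sq_abs]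
    nlinarith [mul_self_nonneg ‖(h / β) • r - (h * β) • D‖]
  have hD2 : ‖D‖ ^ 2 ≤ C₁ ^ 2 * ‖p‖ ^ 2 := by
    rw [← mul_pow]; exact pow_le_pow_left₀ (norm_nonneg _) hD 2
  have e4 : ‖p + r‖ ^ 2 ≤ 2 * ‖p‖ ^ 2 + 2 * ‖r‖ ^ 2 := by
    have := parallelogram_law_with_norm ℝ p r
    nlinarith [mul_self_nonneg ‖p - r‖]
  -- drift
  have e5 : β * (‖D‖ * ‖r‖) ≤ ‖r‖ ^ 2 / (2 * β) + β * m / 2 * ‖p‖ ^ 2 := by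
    have h1 : β * (‖D‖ * ‖r‖) ≤ ‖r‖ ^ 2 / (2 * β) + β ^ 3 * ‖D‖ ^ 2 / 2 := by
      have : 0 ≤ (‖r‖ - β ^ 2 * ‖D‖) ^ 2 / (2 * β) := by positivity
      have e : (‖r‖ - β ^ 2 * ‖D‖) ^ 2 / (2 * β)
          = ‖r‖ ^ 2 / (2 * β) - β * (‖D‖ * ‖r‖) + β ^ 3 * ‖D‖ ^ 2 / 2 := by
        field_simp; ring
      linarith
    have h2 : β ^ 3 * ‖D‖ ^ 2 / 2 ≤ β * m / 2 * ‖p‖ ^ 2 := by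
      calc β ^ 3 * ‖D‖ ^ 2 / 2 ≤ β ^ 3 * (C₁ ^ 2 * ‖p‖ ^ 2) / 2 := by gcongr
        _ = β / 2 * ((β ^ 2 * C₁ ^ 2) * ‖p‖ ^ 2) := by ring
        _ ≤ β / 2 * (m * ‖p‖ ^ 2) := by gcongr
        _ = _ := by ring
    linarith
  set S := ‖p‖ ^ 2 + ‖r‖ ^ 2 with hS
  have hSn : 0 ≤ S := by positivity
  have hβi : 1 / β = 2 * (1 / (2 * β)) := by field_simp
  have e6 : c₀ * S ≤ ‖r‖ ^ 2 / β + β * (inner ℝ D p + inner ℝ D r) := by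
    have a1 : c₀ * ‖p‖ ^ 2 ≤ β * m / 2 * ‖p‖ ^ 2 := by gcongr
    have a2 : c₀ * ‖r‖ ^ 2 ≤ 1 / (2 * β) * ‖r‖ ^ 2 := by gcongr
    have a3 : β * (m * ‖p‖ ^ 2) ≤ β * inner ℝ D p := by gcongr
    have a4 : β * (-(‖D‖ * ‖r‖)) ≤ β * inner ℝ D r := by gcongr
    have a5 : ‖r‖ ^ 2 / β = 2 * (1 / (2 * β) * ‖r‖ ^ 2) := by field_simp
    have a6 : ‖r‖ ^ 2 / (2 * β) = 1 / (2 * β) * ‖r‖ ^ 2 := by ring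
    rw [hS]
    linarith
  have e7 : 3 * ((h / β) ^ 2 * ‖r‖ ^ 2) + 2 * ((h * β) ^ 2 * ‖D‖ ^ 2) ≤ h * (c₀ * S) := by
    have b1 : 2 * ((h * β) ^ 2 * ‖D‖ ^ 2) ≤ 2 * ((h * β) ^ 2 * (C₁ ^ 2 * ‖p‖ ^ 2)) := by gcongr
    have b2 : h * ((h * (3 / β ^ 2 + 2 * β ^ 2 * C₁ ^ 2)) * S) ≤ h * (c₀ * S) := by gcongr
    have b3 : h * ((h * (3 / β ^ 2 + 2 * β ^ 2 * C₁ ^ 2)) * S)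
        = 3 * ((h / β) ^ 2 * ‖r‖ ^ 2) + 2 * ((h * β) ^ 2 * (C₁ ^ 2 * ‖p‖ ^ 2))
          + (3 * (h / β) ^ 2 * ‖p‖ ^ 2 + 2 * ((h * β) ^ 2 * (C₁ ^ 2 * ‖r‖ ^ 2))) := by
      rw [hS]; field_simp; ring
    have b4 : 0 ≤ 3 * (h / β) ^ 2 * ‖p‖ ^ 2 + 2 * ((h * β) ^ 2 * (C₁ ^ 2 * ‖r‖ ^ 2)) := by
      positivity
    linarith
  have e8 : h * (c₀ * S) ≤ h * (‖r‖ ^ 2 / β + β * (inner ℝ D p + inner ℝ D r)) := by gcongr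
  have e9 : h * (‖r‖ ^ 2 / β + β * (inner ℝ D p + inner ℝ D r))
      = (h / β) * ‖r‖ ^ 2 + (h * β) * (inner ℝ D p + inner ℝ D r) := by ring
  have hc0 : 0 ≤ c₀ := le_trans (by positivity) hhK
  have e10 : c₀ / 3 * h * (‖p‖ ^ 2 + ‖p + r‖ ^ 2) ≤ c₀ / 3 * h * (3 * S) := by
    refine mul_le_mul_of_nonneg_left ?_ (by positivity)
    have := sq_nonneg ‖r‖
    linarith
  rw [e1, e2]
  linarith

lemma contraction (C₁ m γ : ℝ) (hC₁ : 0 < C₁) (hm : 0 < m) (hγ : 0 < γ)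
    (hγm : 4 * C₁ ^ 2 ≤ γ ^ 2 * m) :
    ∃ c > (0 : ℝ), ∃ h₀ > (0 : ℝ), c * h₀ ≤ 1 / 2 ∧ h₀ ≤ 1 ∧ γ * h₀ ≤ 1 ∧ ∀ g : E → E,
      (∀ x y, ‖g x - g y‖ ≤ C₁ * ‖x - y‖) →
      (∀ x y, m * ‖x - y‖ ^ 2 ≤ inner ℝ (g x - g y) (x - y)) →
      ∀ h, 0 < h → h ≤ h₀ → ∀ z z' : E × E, ∀ w : E,
        Nq (2 / γ) (emStep g h γ z w - emStep g h γ z' w) ≤ (1 - c * h) * Nq (2 / γ) (z - z') := by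
  set β := 2 / γ with hβ
  have hβ0 : 0 < β := by positivity
  set c₀ := min (1 / (2 * β)) (β * m / 2)
  have hc₀ : 0 < c₀ := lt_min (by positivity) (by positivity)
  set K := 3 / β ^ 2 + 2 * β ^ 2 * C₁ ^ 2
  have hK : 0 < K := by positivity
  have hh1 : min (c₀ / K) (min 1 (min (1 / γ) (1 / c₀))) ≤ 1 / c₀ :=
    (min_le_right _ _).trans ((min_le_right _ _).trans (min_le_right _ _))
  have hh2 : min (c₀ / K) (min 1 (min (1 / γ) (1 / c₀))) ≤ 1 / γ :=
    (min_le_right _ _).trans ((min_le_right _ _).trans (min_le_left _ _))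
  refine ⟨c₀ / 3, by positivity, min (c₀ / K) (min 1 (min (1 / γ) (1 / c₀))), by positivity,
    ?_, ?_, ?_, ?_⟩
  · rw [le_div_iff₀ hc₀] at hh1; linarith
  · exact (min_le_right _ _).trans (min_le_left _ _)
  · rw [le_div_iff₀ hγ] at hh2; linarith
  intro g hg hmono h hh hh0 z z' w
  have := contraction_aux C₁ m β c₀ h hβ0 hh (by
      rw [hβ, div_pow, div_mul_eq_mul_div, div_le_iff₀ (by positivity)]; linarith)
    (min_le_left _ _) (min_le_right _ _)
    (by
      have := hh0.trans (min_le_left _ _)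
      rwa [le_div_iff₀ hK] at this)
    (z.1 - z'.1) (β • (z.2 - z'.2)) (g z.1 - g z'.1) (hg _ _) (hmono _ _)
  have hbg : β * γ = 2 := by rw [hβ]; field_simp
  refine le_of_eq_of_le ?_ this
  unfold Nq emStep
  simp only [Prod.fst_sub, Prod.snd_sub]
  have hb : h / β * β = h := by field_simp
  congr 3
  · rw [smul_smul, hb]; module
  · have hb' : β * (γ * h) = 2 * h := by rw [← mul_assoc, hbg]
    have : ∀ a b : E, ∀ s : E, β • (z.2 - h • a - (γ * h) • z.2 + s
        - (z'.2 - h • b - (γ * h) • z'.2 + s)) = β • (z.2 - z'.2) - (h * β) • (a - b)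
          - (2 * h) • (z.2 - z'.2) := by
      intro a b s
      rw [← hb']
      module
    rw [this, smul_smul, hb]
    module

end contraction

section semigroup

set_option linter.unusedSectionVars false

variable {E : Type*} [NormedAddCommGroup E] [InnerProductSpace ℝ E]

lemma norm_le_sqrt_Nq {β : ℝ} (hβ : 0 < β) (z : E × E) :
    ‖z‖ ≤ (1 + 2 / β) * √(Nq β z) := by
  have h1 : ‖z.1‖ ≤ √(Nq β z) := by
    apply Real.le_sqrt_of_sq_le; unfold Nq; nlinarith [sq_nonneg ‖z.1 + β • z.2‖]
  have h2 : ‖z.1 + β • z.2‖ ≤ √(Nq β z) := by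
    apply Real.le_sqrt_of_sq_le; unfold Nq; nlinarith [sq_nonneg ‖z.1‖]
  have h3 : β * ‖z.2‖ ≤ 2 * √(Nq β z) := by
    have : β * ‖z.2‖ = ‖(z.1 + β • z.2) - z.1‖ := by
      rw [add_sub_cancel_left, norm_smul, Real.norm_eq_abs, abs_of_pos hβ]
    rw [this]
    have := norm_sub_le (z.1 + β • z.2) z.1
    linarith
  have h4 : ‖z.2‖ ≤ 2 / β * √(Nq β z) := by
    rw [div_mul_eq_mul_div, le_div_iff₀ hβ]; linarith
  have h5 : 0 ≤ 2 / β * √(Nq β z) := by positivity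
  have h6 := Real.sqrt_nonneg (Nq β z)
  rw [Prod.norm_def]
  apply max_le <;> linarith

lemma sqrt_Nq_le_norm {β : ℝ} (hβ : 0 < β) (z : E × E) :
    √(Nq β z) ≤ (2 + β) * ‖z‖ := by
  have h1 : ‖z.1‖ ≤ ‖z‖ := norm_fst_le z
  have h2 : ‖z.2‖ ≤ ‖z‖ := norm_snd_le z
  have h3 : ‖z.1 + β • z.2‖ ≤ (1 + β) * ‖z‖ := by
    refine (norm_add_le _ _).trans ?_
    rw [norm_smul, Real.norm_eq_abs, abs_of_pos hβ]
    nlinarith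
  apply Real.sqrt_le_iff.2 ⟨by positivity, ?_⟩
  unfold Nq
  have a1 : ‖z.1‖ ^ 2 ≤ ‖z‖ ^ 2 := by gcongr
  have a2 : ‖z.1 + β • z.2‖ ^ 2 ≤ ((1 + β) * ‖z‖) ^ 2 := by gcongr
  nlinarith [sq_nonneg ‖z‖, mul_nonneg hβ.le (sq_nonneg ‖z‖)]

lemma Nq_noise (β s : ℝ) (hβ : 0 < β) (hs : 0 ≤ s) (w : E) :
    √(Nq β (0, s • w)) = β * s * ‖w‖ := by
  have : Nq β ((0 : E), s • w) = (β * s * ‖w‖) ^ 2 := by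
    unfold Nq
    simp [norm_smul, abs_of_pos hβ, abs_of_nonneg hs, mul_assoc]
  rw [this, Real.sqrt_sq (by positivity)]

/-- Lipschitz with respect to the twisted norm. -/
def LipQ (β L : ℝ) (F : E × E → ℝ) : Prop := ∀ z z', |F z - F z'| ≤ L * √(Nq β (z - z'))

lemma LipQ.lip {β L : ℝ} {F : E × E → ℝ} (hβ : 0 < β) (hL : 0 ≤ L) (hF : LipQ β L F)
    (z z' : E × E) : |F z - F z'| ≤ L * (2 + β) * ‖z - z'‖ := by
  refine (hF z z').trans ?_
  rw [mul_assoc]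
  gcongr
  exact sqrt_Nq_le_norm hβ _

lemma LipQ.continuous {β L : ℝ} {F : E × E → ℝ} (hβ : 0 < β) (hL : 0 ≤ L) (hF : LipQ β L F) :
    Continuous F := by
  have : LipschitzWith (Real.toNNReal (L * (2 + β))) F := by
    apply LipschitzWith.of_dist_le_mul
    intro z z'
    rw [Real.dist_eq, dist_eq_norm, Real.coe_toNNReal _ (by positivity)]
    exact hF.lip hβ hL z z'
  exact this.continuous

lemma LipQ.noise {β L : ℝ} {F : E × E → ℝ} (hβ : 0 < β) (hF : LipQ β L F)
    (g : E → E) (h γ : ℝ) (z : E × E) (w w' : E) :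
    |F (emStep g h γ z w) - F (emStep g h γ z w')| ≤ L * (β * √(2 * γ * h)) * ‖w - w'‖ := by
  refine (hF _ _).trans ?_
  have : emStep g h γ z w - emStep g h γ z w' = (0, √(2 * γ * h) • (w - w')) := by
    unfold emStep
    ext1
    · simp
    · simp only [Prod.snd_sub]; module
  rw [this, Nq_noise β _ hβ (Real.sqrt_nonneg _)]
  exact le_of_eq (by ring)

variable [FiniteDimensional ℝ E] [MeasurableSpace E] [BorelSpace E]

/-- One-step transition operator. -/
noncomputable def Pop (g : E → E) (h γ : ℝ) (F : E × E → ℝ) (z : E × E) : ℝ :=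
  ∫ w, F (emStep g h γ z w) ∂(stdGaussian E)

lemma emStep_continuous (g : E → E) (hg : Continuous g) (h γ : ℝ) :
    Continuous (fun p : (E × E) × E => emStep g h γ p.1 p.2) := by
  unfold emStep
  fun_prop

lemma LipQ.integrable_step {β L : ℝ} {F : E × E → ℝ} (hβ : 0 < β) (hL : 0 ≤ L)
    (hF : LipQ β L F) (g : E → E) (hg : Continuous g) (h γ : ℝ) (z : E × E) :
    Integrable (fun w => F (emStep g h γ z w)) (stdGaussian E) := by
  have h1 : Integrable (fun w : E => L * (β * √(2 * γ * h)) * ‖w‖ ^ 1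
      + |F (emStep g h γ z 0)|) (stdGaussian E) :=
    ((integrable_norm_pow_stdGaussian 1).const_mul _).add (integrable_const _)
  refine h1.mono' ?_ (ae_of_all _ fun w => ?_)
  · have := (emStep_continuous g hg h γ).comp (Continuous.prodMk_right z)
    exact ((hF.continuous hβ hL).comp this).aestronglyMeasurable
  · have := hF.noise hβ g h γ z w 0
    rw [sub_zero] at this
    rw [Real.norm_eq_abs, pow_one]
    have h2 := abs_sub_abs_le_abs_sub (F (emStep g h γ z w)) (F (emStep g h γ z 0))
    linarith

lemma LipQ.pop {β L ρ : ℝ} {F : E × E → ℝ} (hβ : 0 < β) (hL : 0 ≤ L) (hρ : 0 ≤ ρ)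
    (hF : LipQ β L F) (g : E → E) (hg : Continuous g) (h γ : ℝ)
    (hc : ∀ z z' w, Nq β (emStep g h γ z w - emStep g h γ z' w) ≤ ρ ^ 2 * Nq β (z - z')) :
    LipQ β (L * ρ) (Pop g h γ F) := by
  intro z z'
  unfold Pop
  rw [← integral_sub (hF.integrable_step hβ hL g hg h γ z) (hF.integrable_step hβ hL g hg h γ z')]
  have : ∀ w, ‖F (emStep g h γ z w) - F (emStep g h γ z' w)‖ ≤ L * ρ * √(Nq β (z - z')) := by
    intro w
    rw [Real.norm_eq_abs]
    refine (hF _ _).trans ?_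
    rw [mul_assoc]
    gcongr
    refine (Real.sqrt_le_sqrt (hc z z' w)).trans ?_
    rw [Real.sqrt_mul (by positivity), Real.sqrt_sq hρ]
  have h2 := norm_integral_le_of_norm_le_const (μ := stdGaussian E) (ae_of_all _ this)
  simpa using h2

/-- Second moment of the standard Gaussian. -/
noncomputable def gaussM2 (E : Type*) [NormedAddCommGroup E] [InnerProductSpace ℝ E]
    [FiniteDimensional ℝ E] [MeasurableSpace E] : ℝ :=
  ∫ w : E, ‖w‖ ^ 2 ∂(stdGaussian E)

lemma gaussM2_nonneg : 0 ≤ gaussM2 E := integral_nonneg fun _ => by positivity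

lemma LipQ.variance_step {β L : ℝ} {F : E × E → ℝ} (hβ : 0 < β) (hL : 0 ≤ L)
    (hF : LipQ β L F) (g : E → E) (hg : Continuous g) (h γ : ℝ) (hh : 0 ≤ γ * h) (a : ℝ)
    (z : E × E) :
    ∫⁻ w, ENNReal.ofReal ((a + F (emStep g h γ z w)) ^ 2) ∂(stdGaussian E) ≤
      ENNReal.ofReal ((a + Pop g h γ F z) ^ 2) +
        ENNReal.ofReal (L ^ 2 * β ^ 2 * (2 * γ * h) * gaussM2 E) := by
  set G : E → ℝ := fun w => F (emStep g h γ z w) with hG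
  set Gb : ℝ := Pop g h γ F z with hGb
  have hGi : Integrable G (stdGaussian E) := hF.integrable_step hβ hL g hg h γ z
  have hGm : AEStronglyMeasurable G (stdGaussian E) := hGi.1
  set κ : ℝ := L * (β * √(2 * γ * h)) with hκ
  have hκ2 : κ ^ 2 = L ^ 2 * β ^ 2 * (2 * γ * h) := by
    rw [hκ, mul_pow, mul_pow, Real.sq_sqrt (by nlinarith)]; ring
  have hb : ∀ w, (G w - G 0) ^ 2 ≤ κ ^ 2 * ‖w‖ ^ 2 := by
    intro w
    have := hF.noise hβ g h γ z w 0
    rw [sub_zero] at this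
    rw [← mul_pow, ← sq_abs (G w - G 0)]
    exact pow_le_pow_left₀ (abs_nonneg _) this 2
  have hi2 : Integrable (fun w => (G w - G 0) ^ 2) (stdGaussian E) := by
    refine ((integrable_norm_pow_stdGaussian 2).const_mul (κ ^ 2)).mono'
      ((hGm.sub aestronglyMeasurable_const).pow 2) (ae_of_all _ fun w => ?_)
    rw [Real.norm_eq_abs, abs_of_nonneg (sq_nonneg _)]
    exact hb w
  have e : ∀ w, (a + G w) ^ 2
      = (G w - G 0) ^ 2 + (2 * (a + G 0)) * G w + ((a + G 0) ^ 2 - 2 * (a + G 0) * G 0) := by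
    intro w; ring
  have hi3 : Integrable (fun w => (a + G w) ^ 2) (stdGaussian E) := by
    rw [funext e]
    exact (hi2.add (hGi.const_mul _)).add (integrable_const _)
  have hintegr : ∫ w, (a + G w) ^ 2 ∂(stdGaussian E) ≤ (a + Gb) ^ 2 + κ ^ 2 * gaussM2 E := by
    have h1 : ∫ w, (a + G w) ^ 2 ∂(stdGaussian E) = ∫ w, (G w - G 0) ^ 2 ∂(stdGaussian E)
        + (2 * (a + G 0)) * Gb + ((a + G 0) ^ 2 - 2 * (a + G 0) * G 0) := by
      rw [funext e]
      have hi4 : Integrable (fun w => (G w - G 0) ^ 2 + 2 * (a + G 0) * G w) (stdGaussian E) :=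
        hi2.add (hGi.const_mul _)
      rw [integral_add hi4 (integrable_const _),
        integral_add hi2 (hGi.const_mul _), integral_const_mul]
      simp [hGb, Pop, hG]
    have h2 : ∫ w, (G w - G 0) ^ 2 ∂(stdGaussian E) ≤ κ ^ 2 * gaussM2 E := by
      rw [gaussM2, ← integral_const_mul]
      exact integral_mono hi2 ((integrable_norm_pow_stdGaussian 2).const_mul (κ ^ 2)) hb
    rw [h1]
    nlinarith [sq_nonneg (Gb - G 0)]
  rw [← ofReal_integral_eq_lintegral_ofReal hi3 (ae_of_all _ fun w => sq_nonneg _),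
    ← ENNReal.ofReal_add (sq_nonneg _) (by
      rw [← hκ2]; exact mul_nonneg (sq_nonneg _) gaussM2_nonneg), ← hκ2]
  exact ENNReal.ofReal_le_ofReal hintegr

end semigroup

section statistics

variable {E : Type*} [NormedAddCommGroup E] [InnerProductSpace ℝ E]
  [FiniteDimensional ℝ E] [MeasurableSpace E] [BorelSpace E]

/-- Iterates of the transition operator. -/
noncomputable def Fk (g : E → E) (h γ : ℝ) (f : E × E → ℝ) : ℕ → (E × E → ℝ)
  | 0 => f
  | k + 1 => Pop g h γ (Fk g h γ f k)

/-- Finite-horizon Poisson solution. -/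
noncomputable def Phi (g : E → E) (h γ : ℝ) (f : E × E → ℝ) (p : ℝ) (j : ℕ) (z : E × E) : ℝ :=
  ∑ k ∈ Finset.range j, (Fk g h γ f k z - p)

variable {g : E → E} {h γ β L ρ : ℝ} {f : E × E → ℝ}

lemma Fk_lip (hβ : 0 < β) (hL : 0 ≤ L) (hρ : 0 ≤ ρ)
    (hF : LipQ β L f) (hg : Continuous g)
    (hc : ∀ z z' w, Nq β (emStep g h γ z w - emStep g h γ z' w) ≤ ρ ^ 2 * Nq β (z - z')) (k : ℕ) :
    LipQ β (L * ρ ^ k) (Fk g h γ f k) := by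
  induction k with
  | zero => simpa [Fk] using hF
  | succ k ih =>
    have := ih.pop hβ (by positivity) hρ g hg h γ hc
    rw [pow_succ, ← mul_assoc]
    exact this

lemma Phi_lip (hβ : 0 < β) (hL : 0 ≤ L) (hρ : 0 ≤ ρ) (hρ1 : ρ < 1)
    (hF : LipQ β L f) (hg : Continuous g)
    (hc : ∀ z z' w, Nq β (emStep g h γ z w - emStep g h γ z' w) ≤ ρ ^ 2 * Nq β (z - z'))
    (p : ℝ) (j : ℕ) :
    LipQ β (L / (1 - ρ)) (Phi g h γ f p j) := by
  intro z z'
  unfold Phi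
  rw [← Finset.sum_sub_distrib]
  refine (Finset.abs_sum_le_sum_abs _ _).trans ?_
  have h1 : ∀ k ∈ Finset.range j, |Fk g h γ f k z - p - (Fk g h γ f k z' - p)|
      ≤ ρ ^ k * (L * √(Nq β (z - z'))) := by
    intro k _
    have := Fk_lip hβ hL hρ hF hg hc k z z'
    rw [sub_sub_sub_cancel_right]
    linarith
  refine (Finset.sum_le_sum h1).trans ?_
  rw [← Finset.sum_mul]
  have h2 : ∑ k ∈ Finset.range j, ρ ^ k ≤ 1 / (1 - ρ) := by
    have hs := (summable_geometric_of_lt_one hρ hρ1).sum_le_tsum (Finset.range j)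
      (fun k _ => by positivity)
    rwa [tsum_geometric_of_lt_one hρ hρ1, ← one_div] at hs
  calc _ ≤ 1 / (1 - ρ) * (L * √(Nq β (z - z'))) := by gcongr
    _ = _ := by ring

lemma Phi_succ (hβ : 0 < β) (hL : 0 ≤ L) (hρ : 0 ≤ ρ)
    (hF : LipQ β L f) (hg : Continuous g)
    (hc : ∀ z z' w, Nq β (emStep g h γ z w - emStep g h γ z' w) ≤ ρ ^ 2 * Nq β (z - z'))
    (p : ℝ) (j : ℕ) (z : E × E) :
    Phi g h γ f p (j + 1) z = f z - p + Pop g h γ (Phi g h γ f p j) z := by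
  unfold Pop
  simp only [Phi]
  rw [Finset.sum_range_succ', integral_finsetSum]
  · rw [add_comm]
    congr 1
    refine Finset.sum_congr rfl fun k _ => ?_
    rw [integral_sub ((Fk_lip hβ hL hρ hF hg hc k).integrable_step hβ (by positivity) g hg h γ z)
      (integrable_const _)]
    simp [Fk, Pop]
  · intro k _
    exact ((Fk_lip hβ hL hρ hF hg hc k).integrable_step hβ (by positivity) g hg h γ z).sub
      (integrable_const _)

lemma stat_bound (hβ : 0 < β) (hL : 0 ≤ L) (hρ : 0 ≤ ρ) (hρ1 : ρ < 1) (hγh : 0 ≤ γ * h)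
    (hF : LipQ β L f) (hg : Continuous g)
    (hc : ∀ z z' w, Nq β (emStep g h γ z w - emStep g h γ z' w) ≤ ρ ^ 2 * Nq β (z - z'))
    (p : ℝ) {Ω : Type*} [MeasurableSpace Ω] (P : Measure Ω) [IsProbabilityMeasure P]
    (Z : ℕ → Ω → E × E) (ξ : ℕ → Ω → E) (hZ : ∀ n, Measurable (Z n)) (hξ : ∀ n, Measurable (ξ n))
    (hlaw : ∀ n, P.map (ξ n) = stdGaussian E)
    (hind : ∀ n, IndepFun (fun ω => (∑ k ∈ Finset.range (n + 1), (f (Z k ω) - p), Z n ω)) (ξ n) P)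
    (hrec : ∀ n ω, Z (n + 1) ω = emStep g h γ (Z n ω) (ξ n ω)) (N n : ℕ) (hn : n ≤ N) :
    ∫⁻ ω, ENNReal.ofReal ((∑ k ∈ Finset.range n, (f (Z k ω) - p)
        + Phi g h γ f p (N - n) (Z n ω)) ^ 2) ∂P ≤
      ∫⁻ ω, ENNReal.ofReal ((Phi g h γ f p N (Z 0 ω)) ^ 2) ∂P
        + n * ENNReal.ofReal ((L / (1 - ρ)) ^ 2 * β ^ 2 * (2 * γ * h) * gaussM2 E) := by
  have h1ρ : 0 ≤ L / (1 - ρ) := div_nonneg hL (by linarith)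
  have hfm : Measurable f := (hF.continuous hβ hL).measurable
  induction n with
  | zero => simp
  | succ n ih =>
    have ih := ih (by omega)
    obtain ⟨j, hj⟩ : ∃ j, N - n = j + 1 := ⟨N - n - 1, by omega⟩
    have hj' : N - (n + 1) = j := by omega
    rw [hj'] 
    rw [hj] at ih
    have hPc : Continuous (Phi g h γ f p j) :=
      (Phi_lip hβ hL hρ hρ1 hF hg hc p j).continuous hβ h1ρ
    have hGm : Measurable (fun q : (ℝ × (E × E)) × E =>
        ENNReal.ofReal ((q.1.1 + Phi g h γ f p j (emStep g h γ q.1.2 q.2)) ^ 2)) := by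
      have h1 : Continuous (fun q : (ℝ × (E × E)) × E => emStep g h γ q.1.2 q.2) :=
        (emStep_continuous g hg h γ).comp (by fun_prop : Continuous
          (fun q : (ℝ × (E × E)) × E => (q.1.2, q.2)))
      have h2 : Continuous (fun q : (ℝ × (E × E)) × E =>
        ((q.1.1 + Phi g h γ f p j (emStep g h γ q.1.2 q.2)) ^ 2)) := by
        have := hPc.comp h1
        fun_prop
      exact h2.measurable.ennreal_ofReal
    have hSm : Measurable (fun ω => (∑ k ∈ Finset.range (n + 1), (f (Z k ω) - p), Z n ω)) := by
      refine Measurable.prodMk ?_ (hZ n)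
      exact Finset.measurable_sum _ fun k _ => (hfm.comp (hZ k)).sub_const _
    have hprod := (indepFun_iff_map_prod_eq_prod_map_map hSm.aemeasurable (hξ n).aemeasurable).1
      (hind n)
    rw [hlaw n] at hprod
    calc ∫⁻ ω, ENNReal.ofReal ((∑ k ∈ Finset.range (n + 1), (f (Z k ω) - p)
            + Phi g h γ f p j (Z (n + 1) ω)) ^ 2) ∂P
        = ∫⁻ q, ENNReal.ofReal ((q.1.1 + Phi g h γ f p j (emStep g h γ q.1.2 q.2)) ^ 2)
            ∂(P.map (fun ω => ((∑ k ∈ Finset.range (n + 1), (f (Z k ω) - p), Z n ω), ξ n ω))) := by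
          rw [lintegral_map hGm (hSm.prodMk (hξ n))]
          simp only [hrec]
      _ = ∫⁻ ω, ∫⁻ w, ENNReal.ofReal ((∑ k ∈ Finset.range (n + 1), (f (Z k ω) - p)
            + Phi g h γ f p j (emStep g h γ (Z n ω) w)) ^ 2) ∂(stdGaussian E) ∂P := by
          rw [hprod, lintegral_prod _ hGm.aemeasurable, lintegral_map hGm.lintegral_prod_right' hSm]
      _ ≤ ∫⁻ ω, (ENNReal.ofReal ((∑ k ∈ Finset.range n, (f (Z k ω) - p)
            + Phi g h γ f p (j + 1) (Z n ω)) ^ 2)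
            + ENNReal.ofReal ((L / (1 - ρ)) ^ 2 * β ^ 2 * (2 * γ * h) * gaussM2 E)) ∂P := by
          refine lintegral_mono fun ω => ?_
          refine ((Phi_lip hβ hL hρ hρ1 hF hg hc p j).variance_step hβ h1ρ g hg h γ hγh
            _ _).trans ?_
          refine add_le_add (ENNReal.ofReal_le_ofReal (le_of_eq ?_)) le_rfl
          rw [Phi_succ hβ hL hρ hF hg hc, Finset.sum_range_succ]
          ring
      _ = ∫⁻ ω, (ENNReal.ofReal ((∑ k ∈ Finset.range n, (f (Z k ω) - p)
            + Phi g h γ f p (j + 1) (Z n ω)) ^ 2)) ∂P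
            + ENNReal.ofReal ((L / (1 - ρ)) ^ 2 * β ^ 2 * (2 * γ * h) * gaussM2 E) := by
          rw [lintegral_add_right _ measurable_const]; simp
      _ ≤ _ := by
          refine (add_le_add ih le_rfl).trans ?_
          push_cast
          rw [add_mul, one_mul, add_assoc]

end statistics

section localerror
set_option linter.unusedSectionVars false

lemma weighted_step {F : Type*} [NormedAddCommGroup F] [InnerProductSpace ℝ F]
    (ε a : ℝ) (hε : 0 < ε) (D J : F) :
    a * ‖D‖ ^ 2 + (1 - a) * ‖D + J‖ ^ 2
      ≤ (1 + ε) * ‖D‖ ^ 2 + ((1 - a) ^ 2 / ε + (1 - a)) * ‖J‖ ^ 2 := by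
  have h1 : 0 ≤ ‖ε • D - (1 - a) • J‖ ^ 2 := by positivity
  rw [norm_sub_sq_real, norm_smul, norm_smul, real_inner_smul_left, real_inner_smul_right,
    mul_pow, mul_pow, Real.norm_eq_abs, Real.norm_eq_abs, sq_abs, sq_abs] at h1
  rw [norm_add_sq_real]
  have h2 : 2 * (1 - a) * inner ℝ D J ≤ ε * ‖D‖ ^ 2 + (1 - a) ^ 2 / ε * ‖J‖ ^ 2 := by
    have : 0 ≤ (ε ^ 2 * ‖D‖ ^ 2 - 2 * (ε * ((1 - a) * inner ℝ D J)) + (1 - a) ^ 2 * ‖J‖ ^ 2) / ε :=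
      div_nonneg h1 hε.le
    have e : (ε ^ 2 * ‖D‖ ^ 2 - 2 * (ε * ((1 - a) * inner ℝ D J)) + (1 - a) ^ 2 * ‖J‖ ^ 2) / ε
      = ε * ‖D‖ ^ 2 + (1 - a) ^ 2 / ε * ‖J‖ ^ 2 - 2 * (1 - a) * inner ℝ D J := by
      field_simp; ring
    linarith
  linarith

lemma sym_step {F : Type*} [NormedAddCommGroup F] [InnerProductSpace ℝ F]
    (ε : ℝ) (hε : 0 < ε) (A L R S : F) :
    ‖A + L + R‖ ^ 2 + ‖A - L + S‖ ^ 2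
      ≤ (1 + ε) * (2 * ‖A‖ ^ 2 + 2 * ‖L‖ ^ 2) + (1 + 1 / ε) * (‖R‖ ^ 2 + ‖S‖ ^ 2) := by
  have h1 := weighted_step ε 0 hε (A + L) R
  have h2 := weighted_step ε 0 hε (A - L) S
  have h3 := parallelogram_law_with_norm ℝ A L
  have : ‖A + L‖ ^ 2 + ‖A - L‖ ^ 2 = 2 * ‖A‖ ^ 2 + 2 * ‖L‖ ^ 2 := by linarith
  rw [← this]
  norm_num at h1 h2 ⊢
  linarith

lemma full_step {F : Type*} [NormedAddCommGroup F] [InnerProductSpace ℝ F]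
    (ε a b : ℝ) (hε : 0 < ε) (hε1 : ε ≤ 1)
    (A L R S I J : F) (kL kR kJ : ℝ) (t : ℝ) (ha : 1 - a ≤ t) (hb : 1 - b ≤ t)
    (ha1 : a ≤ 1) (hb1 : b ≤ 1)
    (hL : ‖L‖ ^ 2 ≤ kL) (hR : ‖R‖ ≤ kR) (hS : ‖S‖ ≤ kR) (hI : ‖I‖ ≤ kJ) (hJ : ‖J‖ ≤ kJ) :
    a * ‖A + L + R‖ ^ 2 + (1 - a) * ‖A + L + R + I‖ ^ 2
      + (b * ‖A - L + S‖ ^ 2 + (1 - b) * ‖A - L + S + J‖ ^ 2)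
      ≤ 2 * (1 + 3 * ε) * ‖A‖ ^ 2 + 8 * kL + 8 / ε * kR ^ 2 + 2 * (t ^ 2 / ε + t) * kJ ^ 2 := by
  have h1 := weighted_step ε a hε (A + L + R) I
  have h2 := weighted_step ε b hε (A - L + S) J
  have h3 := sym_step ε hε A L R S
  have hR2 : ‖R‖ ^ 2 ≤ kR ^ 2 := by gcongr
  have hS2 : ‖S‖ ^ 2 ≤ kR ^ 2 := by gcongr
  have hI2 : ‖I‖ ^ 2 ≤ kJ ^ 2 := by gcongr
  have hJ2 : ‖J‖ ^ 2 ≤ kJ ^ 2 := by gcongr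
  have ht : 0 ≤ t := by linarith
  have hkL : 0 ≤ kL := (sq_nonneg _).trans hL
  have h4 : ((1 - a) ^ 2 / ε + (1 - a)) * ‖I‖ ^ 2 ≤ (t ^ 2 / ε + t) * kJ ^ 2 := by
    have : 0 ≤ 1 - a := by linarith
    gcongr
  have h5 : ((1 - b) ^ 2 / ε + (1 - b)) * ‖J‖ ^ 2 ≤ (t ^ 2 / ε + t) * kJ ^ 2 := by
    have : 0 ≤ 1 - b := by linarith
    gcongr
  have h6 : (1 + ε) * (‖A + L + R‖ ^ 2 + ‖A - L + S‖ ^ 2)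
      ≤ (1 + ε) * ((1 + ε) * (2 * ‖A‖ ^ 2 + 2 * ‖L‖ ^ 2)
        + (1 + 1 / ε) * (‖R‖ ^ 2 + ‖S‖ ^ 2)) := by gcongr
  have h7 : (1 + ε) * ((1 + ε) * (2 * ‖A‖ ^ 2)) ≤ 2 * (1 + 3 * ε) * ‖A‖ ^ 2 := by
    have : (1 + ε) * (1 + ε) ≤ 1 + 3 * ε := by nlinarith
    calc _ = (1 + ε) * (1 + ε) * (2 * ‖A‖ ^ 2) := by ring
      _ ≤ (1 + 3 * ε) * (2 * ‖A‖ ^ 2) := by gcongr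
      _ = _ := by ring
  have h8 : (1 + ε) * ((1 + ε) * (2 * ‖L‖ ^ 2)) ≤ 8 * kL := by
    have : (1 + ε) * (1 + ε) ≤ 4 := by nlinarith
    calc _ = (1 + ε) * (1 + ε) * (2 * ‖L‖ ^ 2) := by ring
      _ ≤ 4 * (2 * kL) := by gcongr
      _ = _ := by ring
  have h9 : (1 + ε) * ((1 + 1 / ε) * (‖R‖ ^ 2 + ‖S‖ ^ 2)) ≤ 8 / ε * kR ^ 2 := by
    have i1 : 1 ≤ 1 / ε := by rw [le_div_iff₀ hε]; linarith
    have i2 : (1 + ε) * (1 + 1 / ε) ≤ 2 * (2 / ε) := by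
      have : 2 / ε = 1 / ε + 1 / ε := by ring
      rw [this]
      gcongr <;> linarith
    calc _ = ((1 + ε) * (1 + 1 / ε)) * (‖R‖ ^ 2 + ‖S‖ ^ 2) := by ring
      _ ≤ (2 * (2 / ε)) * (kR ^ 2 + kR ^ 2) := by gcongr
      _ = _ := by ring
  linarith

variable {E : Type*} [NormedAddCommGroup E] [InnerProductSpace ℝ E] [CompleteSpace E]

/-- Noise size of the exact Ornstein–Uhlenbeck-type step. -/
noncomputable def ouS (h γ : ℝ) : ℝ := √(1 - (1 - γ * h) ^ 2)

/-- Velocity refreshment. -/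
noncomputable def ouStep (h γ : ℝ) (z : E × E) (w : E) : E × E :=
  (z.1, (1 - γ * h) • z.2 + ouS h γ • w)

/-- Position-midpoint leapfrog. -/
noncomputable def leap (g : E → E) (h : ℝ) (y : E × E) : E × E :=
  (y.1 + (h / 2) • y.2 + (h / 2) • (y.2 - h • g (y.1 + (h / 2) • y.2)),
    y.2 - h • g (y.1 + (h / 2) • y.2))

/-- Velocity flip. -/
def flipV (y : E × E) : E × E := (y.1, -y.2)

/-- Hamiltonian. -/
noncomputable def Ham (U : E → ℝ) (y : E × E) : ℝ := ‖y.2‖ ^ 2 / 2 + U y.1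

/-- Metropolis acceptance probability. -/
noncomputable def acc (U : E → ℝ) (h : ℝ) (y : E × E) : ℝ :=
  min 1 (Real.exp (Ham U y - Ham U (leap (gradient U) h y)))

lemma acc_le_one (U : E → ℝ) (h : ℝ) (y : E × E) : acc U h y ≤ 1 := min_le_left _ _

lemma acc_nonneg (U : E → ℝ) (h : ℝ) (y : E × E) : 0 ≤ acc U h y :=
  le_min zero_le_one (Real.exp_nonneg _)

lemma ouS_sq {h γ : ℝ} (h0 : 0 ≤ γ * h) (h1 : γ * h ≤ 1) :
    ouS h γ ^ 2 = 2 * γ * h - (γ * h) ^ 2 := by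
  unfold ouS
  rw [Real.sq_sqrt] <;> nlinarith

lemma ouS_nonneg (h γ : ℝ) : 0 ≤ ouS h γ := Real.sqrt_nonneg _

lemma ouS_le_one (h γ : ℝ) : ouS h γ ≤ 1 := by
  unfold ouS
  rw [Real.sqrt_le_iff]
  refine ⟨zero_le_one, ?_⟩
  nlinarith [sq_nonneg (1 - γ * h)]

lemma ouS_sub {h γ : ℝ} (hγ : 0 < γ) (hh : 0 < h) (h1 : γ * h ≤ 1) :
    (ouS h γ - √(2 * γ * h)) ^ 2 ≤ γ ^ 3 / 2 * h ^ 3 := by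
  have hγh : 0 < γ * h := by positivity
  have a1 := ouS_sq hγh.le h1
  have a2 : √(2 * γ * h) ^ 2 = 2 * γ * h := Real.sq_sqrt (by positivity)
  have a0 := ouS_nonneg h γ
  have a4 : 0 < √(2 * γ * h) := Real.sqrt_pos.2 (by positivity)
  set s := √(2 * γ * h)
  set σ := ouS h γ
  have b1 : (s - σ) * (s + σ) = (γ * h) ^ 2 := by nlinarith
  have b2 : 0 ≤ s - σ := by
    by_contra hcon
    push Not at hcon
    nlinarith [sq_nonneg (γ * h)]
  have b3 : (s - σ) * s ≤ (γ * h) ^ 2 := by nlinarith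
  have b4 : ((s - σ) * s) ^ 2 ≤ ((γ * h) ^ 2) ^ 2 := by
    have : 0 ≤ (s - σ) * s := by positivity
    gcongr
  have b5 : (σ - s) ^ 2 * (2 * γ * h) ≤ (γ ^ 3 / 2 * h ^ 3) * (2 * γ * h) := by
    calc (σ - s) ^ 2 * (2 * γ * h) = (σ - s) ^ 2 * s ^ 2 := by rw [a2]
      _ = ((s - σ) * s) ^ 2 := by ring
      _ ≤ _ := b4
      _ = _ := by ring
  exact le_of_mul_le_mul_right b5 (by positivity)

end localerror

section localerror2
set_option linter.unusedSectionVars false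
variable {E : Type*} [NormedAddCommGroup E] [InnerProductSpace ℝ E] [CompleteSpace E]
variable {U : E → ℝ} {C₁ h γ : ℝ}

/-- Polynomial size of the data. -/
noncomputable def sz (z : E × E) (w : E) : ℝ := (1 + ‖z‖) * (1 + ‖w‖)

lemma one_le_sz (z : E × E) (w : E) : 1 ≤ sz z w := by
  unfold sz; nlinarith [norm_nonneg z, norm_nonneg w, mul_nonneg (norm_nonneg z) (norm_nonneg w)]

lemma norm_le_sz (z : E × E) (w : E) : ‖z‖ + ‖w‖ ≤ sz z w := by
  unfold sz; nlinarith [norm_nonneg z, norm_nonneg w, mul_nonneg (norm_nonneg z) (norm_nonneg w)]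

lemma sz_neg (z : E × E) (w : E) : sz z (-w) = sz z w := by simp [sz]

lemma norm_ou (h0 : 0 ≤ γ * h) (h1 : γ * h ≤ 1) (z : E × E) (w : E) :
    ‖(ouStep h γ z w).2‖ ≤ sz z w := by
  refine le_trans ?_ (norm_le_sz z w)
  unfold ouStep
  refine (norm_add_le _ _).trans ?_
  rw [norm_smul, norm_smul, Real.norm_eq_abs, Real.norm_eq_abs, abs_of_nonneg (ouS_nonneg h γ),
    abs_of_nonneg (by linarith)]
  have := norm_snd_le z
  have := ouS_le_one h γ
  have := ouS_nonneg h γ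
  have a1 : (1 - γ * h) * ‖z.2‖ ≤ 1 * ‖z‖ := by gcongr; linarith
  have a2 : ouS h γ * ‖w‖ ≤ 1 * ‖w‖ := by gcongr
  linarith

lemma norm_gmid (hC₁ : 0 < C₁) (hU1 : ∀ x, ‖gradient U x‖ ≤ C₁ * (‖x‖ + 1))
    (h0 : 0 ≤ γ * h) (h1 : γ * h ≤ 1) (hh : 0 < h) (hh1 : h ≤ 1)
    (z : E × E) (w : E) :
    ‖gradient U (z.1 + (h / 2) • (ouStep h γ z w).2)‖ ≤ 3 * C₁ * sz z w := by
  refine (hU1 _).trans ?_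
  have a1 := norm_ou h0 h1 z w
  have a2 := norm_add_le z.1 ((h / 2) • (ouStep h γ z w).2)
  rw [norm_smul, Real.norm_eq_abs, abs_of_nonneg (by positivity)] at a2
  have a3 := norm_fst_le z
  have a4 := norm_le_sz z w
  have a5 := one_le_sz z w
  have a6 : h / 2 * ‖(ouStep h γ z w).2‖ ≤ 1 * sz z w := by
    gcongr; linarith
  have a7 := norm_nonneg w
  rw [mul_comm 3 C₁, mul_assoc]
  gcongr
  linarith

lemma one_sub_acc (hC₁ : 0 < C₁) (hU : ContDiff ℝ 3 U)
    (hU1 : ∀ x, ‖gradient U x‖ ≤ C₁ * (‖x‖ + 1))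
    (hU2 : ∀ x, ‖iteratedFDeriv ℝ 2 U x‖ ≤ C₁) (hU3 : ∀ x, ‖iteratedFDeriv ℝ 3 U x‖ ≤ C₁)
    (h0 : 0 ≤ γ * h) (h1 : γ * h ≤ 1) (hh : 0 < h) (hh1 : h ≤ 1)
    (z : E × E) (w : E) :
    1 - acc U h (ouStep h γ z w)
      ≤ C₁ * (2 * C₁ * (1 + 3 * C₁) + (1 + 3 * C₁) ^ 3 + 1) * h ^ 3 * sz z w ^ 3 := by
  set p := sz z w
  have hp : 1 ≤ p := one_le_sz z w
  have hu := norm_ou h0 h1 z w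
  have hgm := norm_gmid hC₁ hU1 h0 h1 hh hh1 z w
  set u := (ouStep h γ z w).2 with hudef
  set q := z.1 + (h / 2) • u with hq
  set G := gradient U q with hG
  have ht := taylor_mid hC₁ hU hU2 hU3 q ((h / 2) • (u - h • G)) ((h / 2) • u)
  have e1 : Ham U (leap (gradient U) h (ouStep h γ z w)) - Ham U (ouStep h γ z w)
      = U (q + (h / 2) • (u - h • G)) - U (q - (h / 2) • u)
        - inner ℝ G ((h / 2) • (u - h • G) + (h / 2) • u) := by
    have e2 : Ham U (leap (gradient U) h (ouStep h γ z w))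
        = ‖u - h • G‖ ^ 2 / 2 + U (q + (h / 2) • (u - h • G)) := rfl
    have e3 : Ham U (ouStep h γ z w) = ‖u‖ ^ 2 / 2 + U (q - (h / 2) • u) := by
      rw [hq, add_sub_cancel_right]; rfl
    rw [e2, e3, norm_sub_sq_real, norm_smul, inner_add_right, real_inner_smul_right,
      real_inner_smul_right, inner_sub_right, real_inner_smul_right, real_inner_smul_right,
      real_inner_self_eq_norm_sq, mul_pow, Real.norm_eq_abs, sq_abs, real_inner_comm G u]
    ring
  rw [← e1] at ht
  have n1 : ‖(h / 2) • (u - h • G) - (h / 2) • u‖ ≤ 2 * C₁ * h ^ 2 * p := by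
    have : (h / 2) • (u - h • G) - (h / 2) • u = -((h ^ 2 / 2) • G) := by module
    rw [this, norm_neg, norm_smul, Real.norm_eq_abs, abs_of_nonneg (by positivity)]
    calc h ^ 2 / 2 * ‖G‖ ≤ h ^ 2 / 2 * (3 * C₁ * p) := by gcongr
      _ ≤ _ := by nlinarith [show 0 ≤ C₁ * h ^ 2 * p by positivity]
  have n2 : ‖(h / 2) • (u - h • G)‖ ≤ h / 2 * ((1 + 3 * C₁) * p) := by
    rw [norm_smul, Real.norm_eq_abs, abs_of_nonneg (by positivity)]
    gcongr
    refine (norm_sub_le _ _).trans ?_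
    rw [norm_smul, Real.norm_eq_abs, abs_of_nonneg hh.le]
    have : h * ‖G‖ ≤ 1 * (3 * C₁ * p) := by gcongr
    linarith
  have n3 : ‖(h / 2) • u‖ ≤ h / 2 * p := by
    rw [norm_smul, Real.norm_eq_abs, abs_of_nonneg (by positivity)]
    gcongr
  have n4 : |Ham U (leap (gradient U) h (ouStep h γ z w)) - Ham U (ouStep h γ z w)| ≤
      C₁ * (2 * C₁ * (1 + 3 * C₁) + (1 + 3 * C₁) ^ 3 + 1) * h ^ 3 * p ^ 3 := by
    refine ht.trans ?_
    calc _ ≤ C₁ * ((2 * C₁ * h ^ 2 * p) * (h / 2 * ((1 + 3 * C₁) * p) + h / 2 * p)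
          + (h / 2 * ((1 + 3 * C₁) * p)) ^ 3 + (h / 2 * p) ^ 3) := by gcongr
      _ ≤ C₁ * ((2 * C₁ * h ^ 2 * p) * (h * ((1 + 3 * C₁) * p))
          + (h * ((1 + 3 * C₁) * p)) ^ 3 + (h * p) ^ 3) := by
          have : h / 2 ≤ h := by linarith
          have : h / 2 * p ≤ h / 2 * ((1 + 3 * C₁) * p) := by
            gcongr; nlinarith
          have : h / 2 * ((1 + 3 * C₁) * p) + h / 2 * p ≤ h * ((1 + 3 * C₁) * p) := by linarith
          gcongr
      _ = C₁ * h ^ 3 * ((2 * C₁ * (1 + 3 * C₁)) * p ^ 2 + ((1 + 3 * C₁) ^ 3 + 1) * p ^ 3) := by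
          ring
      _ ≤ C₁ * h ^ 3 * ((2 * C₁ * (1 + 3 * C₁)) * p ^ 3 + ((1 + 3 * C₁) ^ 3 + 1) * p ^ 3) := by
          have : p ^ 2 ≤ p ^ 3 := pow_le_pow_right₀ hp (by norm_num)
          gcongr
      _ = _ := by ring
  refine le_trans ?_ n4
  unfold acc
  set Δ := Ham U (leap (gradient U) h (ouStep h γ z w)) - Ham U (ouStep h γ z w) with hΔ
  have : Ham U (ouStep h γ z w) - Ham U (leap (gradient U) h (ouStep h γ z w)) = -Δ := by
    rw [hΔ]; ring
  rw [this]
  rcases min_choice 1 (Real.exp (-Δ)) with hc | hc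
  · rw [hc]; simp
  · rw [hc]
    have := Real.add_one_le_exp (-Δ)
    have := le_abs_self Δ
    linarith

set_option maxHeartbeats 4000000 in
lemma local_error {c h₀ : ℝ} (hC₁ : 0 < C₁) (hγ : 0 < γ) (hc : 0 < c) (hch : c * h₀ ≤ 1 / 2)
    (hh₀ : h₀ ≤ 1) (hγh₀ : γ * h₀ ≤ 1)
    (hU : ContDiff ℝ 3 U)
    (hU1 : ∀ x, ‖gradient U x‖ ≤ C₁ * (‖x‖ + 1))
    (hU2 : ∀ x, ‖iteratedFDeriv ℝ 2 U x‖ ≤ C₁) (hU3 : ∀ x, ‖iteratedFDeriv ℝ 3 U x‖ ≤ C₁)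
    (hcon : ∀ h, 0 < h → h ≤ h₀ → ∀ z z' w, Nq (2 / γ) (emStep (gradient U) h γ z w
      - emStep (gradient U) h γ z' w) ≤ (1 - c * h) * Nq (2 / γ) (z - z')) :
    ∃ K, 0 ≤ K ∧ ∀ h, 0 < h → h ≤ h₀ → ∀ (z z' : E × E) (w : E),
      acc U h (ouStep h γ z w) * Nq (2 / γ)
          (leap (gradient U) h (ouStep h γ z w) - emStep (gradient U) h γ z' w)
        + (1 - acc U h (ouStep h γ z w)) * Nq (2 / γ)
          (flipV (ouStep h γ z w) - emStep (gradient U) h γ z' w)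
        + (acc U h (ouStep h γ z (-w)) * Nq (2 / γ)
          (leap (gradient U) h (ouStep h γ z (-w)) - emStep (gradient U) h γ z' (-w))
        + (1 - acc U h (ouStep h γ z (-w))) * Nq (2 / γ)
          (flipV (ouStep h γ z (-w)) - emStep (gradient U) h γ z' (-w)))
      ≤ 2 * ((1 - c / 4 * h) * Nq (2 / γ) (z - z') + K * h ^ 3 * sz z w ^ 8) := by
  set β := 2 / γ with hβdef
  have hβ : 0 < β := by positivity
  set Ka := C₁ * (2 * C₁ * (1 + 3 * C₁) + (1 + 3 * C₁) ^ 3 + 1) with hKa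
  have hKa0 : 0 ≤ Ka := by positivity
  set kR := (γ + 2 * C₁) + β * C₁ with hkR
  set kJ := (1 + 2 * C₁) + β * (2 + 3 * C₁) with hkJ
  set kL := 4 * γ + β ^ 2 * γ ^ 3 with hkL
  have hkR0 : 0 ≤ kR := by positivity
  have hkJ0 : 0 ≤ kJ := by positivity
  have hkL0 : 0 ≤ kL := by positivity
  set K := 8 * kL + 32 / c * kR ^ 2 + 8 / c * Ka ^ 2 * kJ ^ 2 + 2 * Ka * kJ ^ 2 with hK
  have hK0 : 0 ≤ K := by positivity
  refine ⟨K, hK0, fun h hh hhh z z' w => ?_⟩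
  have hh1 : h ≤ 1 := hhh.trans hh₀
  have hγh : 0 ≤ γ * h := by positivity
  have hγh1 : γ * h ≤ 1 := le_trans (by gcongr) hγh₀
  have hch1 : c * h ≤ 1 / 2 := le_trans (by gcongr) hch
  set g := gradient U with hg
  set p := sz z w with hp
  have hp1 : 1 ≤ p := one_le_sz z w
  have hlip := gradient_lipschitz hU hU2
  set σ := ouS h γ with hσ
  set s := √(2 * γ * h) with hs
  -- remainder pieces as functions of the noise
  let u : E → E := fun w => (ouStep h γ z w).2
  let G : E → E := fun w => g (z.1 + (h / 2) • u w)
  let R1 : E → E := fun w => -((h ^ 2 * γ) • z.2) - (h ^ 2 / 2) • G w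
  let R2 : E → E := fun w => -(h • (G w - g z.1))
  let J1 : E → E := fun w => -(h • u w) + (h ^ 2 / 2) • G w
  let J2 : E → E := fun w => -(2 : ℝ) • u w + h • G w
  let A1 : E := (emStep g h γ z 0 - emStep g h γ z' 0).1
  let A2 : E := (emStep g h γ z 0 - emStep g h γ z' 0).2
  have hu : ∀ w, u w = (1 - γ * h) • z.2 + σ • w := fun w => rfl
  have T1 : ∀ w, (leap g h (ouStep h γ z w) - emStep g h γ z' w).1 = A1 + (h * σ) • w + R1 w := by
    intro w
    have : (leap g h (ouStep h γ z w)).1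
      = z.1 + (h / 2) • u w + (h / 2) • (u w - h • G w) := rfl
    rw [Prod.fst_sub, this]
    simp only [A1, R1, emStep, Prod.fst_sub, hu]
    module
  have T2 : ∀ w, (leap g h (ouStep h γ z w) - emStep g h γ z' w).2 = A2 + (σ - s) • w + R2 w := by
    intro w
    have : (leap g h (ouStep h γ z w)).2 = u w - h • G w := rfl
    rw [Prod.snd_sub, this]
    simp only [A2, R2, emStep, Prod.snd_sub, hu]
    module
  have T3 : ∀ w, (flipV (ouStep h γ z w) - emStep g h γ z' w).1
      = A1 + (h * σ) • w + R1 w + J1 w := by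
    intro w
    have : (flipV (ouStep h γ z w)).1 = z.1 := rfl
    rw [Prod.fst_sub, this]
    simp only [A1, R1, J1, emStep, Prod.fst_sub, hu]
    module
  have T4 : ∀ w, (flipV (ouStep h γ z w) - emStep g h γ z' w).2
      = A2 + (σ - s) • w + R2 w + J2 w := by
    intro w
    have : (flipV (ouStep h γ z w)).2 = - u w := rfl
    rw [Prod.snd_sub, this]
    simp only [A2, R2, J2, emStep, Prod.snd_sub, hu]
    module
  -- bounds
  have hsz : ∀ w', (w' = w ∨ w' = -w) → sz z w' = p := by
    rintro w' (rfl | rfl)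
    · rfl
    · exact sz_neg _ _
  have bu : ∀ w', sz z w' = p → ‖u w'‖ ≤ p := fun w' hw' => hw' ▸ norm_ou hγh hγh1 z w'
  have bG : ∀ w', sz z w' = p → ‖G w'‖ ≤ 3 * C₁ * p :=
    fun w' hw' => hw' ▸ norm_gmid hC₁ hU1 hγh hγh1 hh hh1 z w'
  have bz : ‖z.2‖ ≤ p := by
    have := norm_le_sz z w
    have := norm_snd_le z
    have := norm_nonneg w
    linarith
  have bR1 : ∀ w', sz z w' = p → ‖R1 w'‖ ≤ (γ + 2 * C₁) * h ^ 2 * p := by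
    intro w' hw'
    refine (norm_sub_le _ _).trans ?_
    rw [norm_neg, norm_smul, norm_smul, Real.norm_eq_abs, Real.norm_eq_abs,
      abs_of_nonneg (by positivity), abs_of_nonneg (by positivity)]
    calc h ^ 2 * γ * ‖z.2‖ + h ^ 2 / 2 * ‖G w'‖ ≤ h ^ 2 * γ * p + h ^ 2 / 2 * (3 * C₁ * p) := by
          gcongr; exact bG w' hw'
      _ ≤ _ := by linarith only [show 0 ≤ C₁ * h ^ 2 * p by positivity]
  have bR2 : ∀ w', sz z w' = p → ‖R2 w'‖ ≤ C₁ * h ^ 2 * p := by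
    intro w' hw'
    have i1 : ‖G w' - g z.1‖ ≤ C₁ * (h / 2 * p) := by
      refine (hlip _ _).trans ?_
      rw [add_sub_cancel_left, norm_smul, Real.norm_eq_abs, abs_of_nonneg (by positivity)]
      gcongr
      exact bu w' hw'
    simp only [R2]
    rw [norm_neg, norm_smul, Real.norm_eq_abs, abs_of_nonneg hh.le]
    calc _ ≤ h * (C₁ * (h / 2 * p)) := by gcongr
      _ ≤ _ := by linarith only [show 0 ≤ C₁ * h ^ 2 * p by positivity]
  have bJ1 : ∀ w', sz z w' = p → ‖J1 w'‖ ≤ (1 + 2 * C₁) * p := by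
    intro w' hw'
    refine (norm_add_le _ _).trans ?_
    rw [norm_neg, norm_smul, norm_smul, Real.norm_eq_abs, Real.norm_eq_abs,
      abs_of_nonneg (by positivity), abs_of_nonneg (by positivity)]
    have i1 : h ^ 2 ≤ 1 := pow_le_one₀ hh.le hh1
    calc _ ≤ 1 * p + 1 / 2 * (3 * C₁ * p) := by
          gcongr
          · exact bu w' hw'
          · exact bG w' hw'
      _ ≤ _ := by linarith only [show 0 ≤ C₁ * p by positivity]
  have bJ2 : ∀ w', sz z w' = p → ‖J2 w'‖ ≤ (2 + 3 * C₁) * p := by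
    intro w' hw'
    refine (norm_add_le _ _).trans ?_
    rw [norm_smul, norm_smul, Real.norm_eq_abs, Real.norm_eq_abs,
      abs_of_nonneg hh.le, show |(-2 : ℝ)| = 2 by norm_num]
    calc _ ≤ 2 * p + 1 * (3 * C₁ * p) := by
          gcongr
          · exact bu w' hw'
          · exact bG w' hw'
      _ = _ := by ring
  have bR : ∀ w', sz z w' = p → ‖R1 w' + β • R2 w'‖ ≤ kR * h ^ 2 * p := by
    intro w' hw'
    refine (norm_add_le _ _).trans ?_
    rw [norm_smul, Real.norm_eq_abs, abs_of_pos hβ]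
    calc _ ≤ (γ + 2 * C₁) * h ^ 2 * p + β * (C₁ * h ^ 2 * p) := by
          gcongr
          · exact bR1 w' hw'
          · exact bR2 w' hw'
      _ = _ := by rw [hkR]; ring
  have bJ : ∀ w', sz z w' = p → ‖J1 w' + β • J2 w'‖ ≤ kJ * p := by
    intro w' hw'
    refine (norm_add_le _ _).trans ?_
    rw [norm_smul, Real.norm_eq_abs, abs_of_pos hβ]
    calc _ ≤ (1 + 2 * C₁) * p + β * ((2 + 3 * C₁) * p) := by
          gcongr
          · exact bJ1 w' hw'
          · exact bJ2 w' hw'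
      _ = _ := by rw [hkJ]; ring
  have bR1' : ∀ w', sz z w' = p → ‖R1 w'‖ ≤ kR * h ^ 2 * p := by
    intro w' hw'
    refine (bR1 w' hw').trans ?_
    have : 0 ≤ β * C₁ := by positivity
    gcongr
    rw [hkR]; linarith
  have bJ1' : ∀ w', sz z w' = p → ‖J1 w'‖ ≤ kJ * p := by
    intro w' hw'
    refine (bJ1 w' hw').trans ?_
    have : 0 ≤ β * (2 + 3 * C₁) := by positivity
    gcongr
    rw [hkJ]; linarith
  have bw : ‖w‖ ^ 2 ≤ p ^ 2 := by
    have := norm_le_sz z w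
    have := norm_nonneg z
    gcongr
    linarith
  have hσ2 : σ ^ 2 ≤ 2 * γ * h := by
    rw [hσ, ouS_sq hγh hγh1]; linarith only [sq_nonneg (γ * h)]
  have hσs := ouS_sub hγ hh hγh1
  have bL1 : ‖(h * σ) • w‖ ^ 2 ≤ kL * h ^ 3 * p ^ 2 := by
    rw [norm_smul, mul_pow, Real.norm_eq_abs, sq_abs]
    calc (h * σ) ^ 2 * ‖w‖ ^ 2 = h ^ 2 * σ ^ 2 * ‖w‖ ^ 2 := by ring
      _ ≤ h ^ 2 * (2 * γ * h) * p ^ 2 := by gcongr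
      _ = 2 * γ * h ^ 3 * p ^ 2 := by ring
      _ ≤ _ := by
        gcongr
        rw [hkL]
        have : 0 ≤ β ^ 2 * γ ^ 3 := by positivity
        linarith
  have bL : ‖(h * σ) • w + β • ((σ - s) • w)‖ ^ 2 ≤ kL * h ^ 3 * p ^ 2 := by
    rw [smul_smul, ← add_smul, norm_smul, mul_pow, Real.norm_eq_abs, sq_abs]
    have i1 : (h * σ + β * (σ - s)) ^ 2 ≤ kL * h ^ 3 := by
      calc _ ≤ 2 * (h ^ 2 * σ ^ 2) + 2 * (β ^ 2 * (σ - s) ^ 2) := by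
            linarith only [sq_nonneg (h * σ - β * (σ - s))]
        _ ≤ 2 * (h ^ 2 * (2 * γ * h)) + 2 * (β ^ 2 * (γ ^ 3 / 2 * h ^ 3)) := by gcongr
        _ = _ := by rw [hkL]; ring
    gcongr
  have bacc : ∀ w', sz z w' = p → 1 - acc U h (ouStep h γ z w') ≤ Ka * h ^ 3 * p ^ 3 :=
    fun w' hw' => hw' ▸ one_sub_acc hC₁ hU hU1 hU2 hU3 hγh hγh1 hh hh1 z w'
  have s1 : sz z w = p := rfl
  have s2 : sz z (-w) = p := sz_neg z w
  have hε : 0 < c * h / 4 := by positivity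
  have hε1 : c * h / 4 ≤ 1 := by linarith
  have F1 := full_step (c * h / 4) (acc U h (ouStep h γ z w)) (acc U h (ouStep h γ z (-w))) hε hε1
    A1 ((h * σ) • w) (R1 w) (R1 (-w)) (J1 w) (J1 (-w)) _ _ _ _ (bacc w s1) (bacc (-w) s2)
    (acc_le_one _ _ _) (acc_le_one _ _ _) bL1 (bR1' w s1) (bR1' (-w) s2) (bJ1' w s1) (bJ1' (-w) s2)
  have F2 := full_step (c * h / 4) (acc U h (ouStep h γ z w)) (acc U h (ouStep h γ z (-w))) hε hε1
    (A1 + β • A2) ((h * σ) • w + β • ((σ - s) • w)) (R1 w + β • R2 w) (R1 (-w) + β • R2 (-w))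
    (J1 w + β • J2 w) (J1 (-w) + β • J2 (-w)) _ _ _ _ (bacc w s1) (bacc (-w) s2)
    (acc_le_one _ _ _) (acc_le_one _ _ _) bL (bR w s1) (bR (-w) s2) (bJ w s1) (bJ (-w) s2)
  have hA : ‖A1‖ ^ 2 + ‖A1 + β • A2‖ ^ 2 ≤ (1 - c * h) * Nq β (z - z') := hcon h hh hhh z z' 0
  have N1 : ∀ w, Nq β (leap g h (ouStep h γ z w) - emStep g h γ z' w)
      = ‖A1 + (h * σ) • w + R1 w‖ ^ 2
        + ‖A1 + β • A2 + ((h * σ) • w + β • ((σ - s) • w)) + (R1 w + β • R2 w)‖ ^ 2 := by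
    intro w
    unfold Nq
    rw [T1, T2]
    congr 3
    module
  have N2 : ∀ w, Nq β (flipV (ouStep h γ z w) - emStep g h γ z' w)
      = ‖A1 + (h * σ) • w + R1 w + J1 w‖ ^ 2
        + ‖A1 + β • A2 + ((h * σ) • w + β • ((σ - s) • w)) + (R1 w + β • R2 w)
          + (J1 w + β • J2 w)‖ ^ 2 := by
    intro w
    unfold Nq
    rw [T3, T4]
    congr 3
    module
  have N1' := N1 (-w)
  have N2' := N2 (-w)
  rw [show A1 + (h * σ) • -w = A1 - (h * σ) • w by module,
    show A1 + β • A2 + ((h * σ) • -w + β • ((σ - s) • -w))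
      = A1 + β • A2 - ((h * σ) • w + β • ((σ - s) • w)) by module] at N1' N2'
  rw [N1, N2, N1', N2']
  have hN := Nq_nonneg β (z - z')
  have main : 2 * (1 + 3 * (c * h / 4)) * (‖A1‖ ^ 2 + ‖A1 + β • A2‖ ^ 2)
      ≤ 2 * ((1 - c / 4 * h) * Nq β (z - z')) := by
    calc _ ≤ 2 * (1 + 3 * (c * h / 4)) * ((1 - c * h) * Nq β (z - z')) := by gcongr
      _ = 2 * (((1 + 3 * (c * h / 4)) * (1 - c * h)) * Nq β (z - z')) := by ring
      _ ≤ _ := by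
        gcongr
        linarith only [sq_nonneg (c * h)]
  have rest : 8 * (kL * h ^ 3 * p ^ 2) + 8 / (c * h / 4) * (kR * h ^ 2 * p) ^ 2
      + 2 * ((Ka * h ^ 3 * p ^ 3) ^ 2 / (c * h / 4) + Ka * h ^ 3 * p ^ 3) * (kJ * p) ^ 2
      ≤ K * h ^ 3 * p ^ 8 := by
    have q2 : p ^ 2 ≤ p ^ 8 := pow_le_pow_right₀ hp1 (by norm_num)
    have q5 : p ^ 5 ≤ p ^ 8 := pow_le_pow_right₀ hp1 (by norm_num)
    have q6 : h ^ 5 ≤ h ^ 3 := pow_le_pow_of_le_one hh.le hh1 (by norm_num)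
    calc _ = 8 * kL * h ^ 3 * p ^ 2 + 32 / c * kR ^ 2 * h ^ 3 * p ^ 2
          + 8 / c * Ka ^ 2 * kJ ^ 2 * h ^ 5 * p ^ 8 + 2 * Ka * kJ ^ 2 * h ^ 3 * p ^ 5 := by
          field_simp; ring
      _ ≤ 8 * kL * h ^ 3 * p ^ 8 + 32 / c * kR ^ 2 * h ^ 3 * p ^ 8
          + 8 / c * Ka ^ 2 * kJ ^ 2 * h ^ 3 * p ^ 8 + 2 * Ka * kJ ^ 2 * h ^ 3 * p ^ 8 := by
          gcongr
      _ = _ := by rw [hK]; ring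
  linarith only [F1, F2, main, rest]

end localerror2

section gibbs
set_option linter.unusedSectionVars false

lemma poly_exp_bound (b : ℝ) (hb : 0 < b) (k : ℕ) :
    ∃ C, 0 ≤ C ∧ ∀ r : ℝ, 0 ≤ r → (1 + r) ^ k * Real.exp (-(b * r ^ 2)) ≤ C := by
  refine ⟨(k.factorial : ℝ) / (b / 2) ^ k * Real.exp b, by positivity, fun r hr => ?_⟩
  have h1 : (1 + r) ^ k ≤ ((1 + r) ^ 2) ^ k := by
    gcongr
    nlinarith
  have h2 := Real.pow_div_factorial_le_exp (b / 2 * (1 + r) ^ 2) (by positivity) k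
  have h3 : Real.exp (b / 2 * (1 + r) ^ 2) ≤ Real.exp b * Real.exp (b * r ^ 2) := by
    rw [← Real.exp_add]
    apply Real.exp_le_exp.2
    nlinarith [mul_nonneg hb.le (sq_nonneg (1 - r))]
  rw [mul_pow] at h2
  have h4 : ((1 + r) ^ 2) ^ k ≤ (k.factorial : ℝ) / (b / 2) ^ k * Real.exp b
      * Real.exp (b * r ^ 2) := by
    have := h2.trans h3
    rw [div_le_iff₀ (by positivity)] at this
    rw [div_mul_eq_mul_div, div_mul_eq_mul_div, le_div_iff₀ (by positivity)]
    linarith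
  calc _ ≤ ((k.factorial : ℝ) / (b / 2) ^ k * Real.exp b
      * Real.exp (b * r ^ 2)) * Real.exp (-(b * r ^ 2)) := by
        gcongr; exact h1.trans h4
    _ = _ := by
      rw [mul_assoc, ← Real.exp_add, add_neg_cancel, Real.exp_zero, mul_one]

variable {d : ℕ}

lemma integrable_gauss (b : ℝ) (hb : 0 < b) :
    Integrable (fun x : EuclideanSpace ℝ (Fin d) => Real.exp (-(b * ‖x‖ ^ 2))) := by
  have h := GaussianFourier.integrable_cexp_neg_mul_sq_norm_add (b := (b : ℂ)) (by simpa using hb) 0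
    (0 : EuclideanSpace ℝ (Fin d))
  have h2 := h.norm
  refine h2.congr (ae_of_all _ fun x => ?_)
  simp only [Complex.norm_exp]
  congr 1
  norm_cast
  simp

/-- Unnormalised Gibbs measure. -/
noncomputable def gibbs0 (U : EuclideanSpace ℝ (Fin d) → ℝ) :
    Measure (EuclideanSpace ℝ (Fin d) × EuclideanSpace ℝ (Fin d)) :=
  volume.withDensity (fun y => ENNReal.ofReal (Real.exp (-(Ham U y))))

variable {U : EuclideanSpace ℝ (Fin d) → ℝ} {m : ℝ}

lemma Ham_continuous (hU : Continuous U) : Continuous (Ham U) := by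
  unfold Ham; fun_prop

lemma gibbs_density_meas (hU : Continuous U) :
    Measurable (fun y => ENNReal.ofReal (Real.exp (-(Ham U y)))) := by
  have := Ham_continuous hU
  exact (by fun_prop : Continuous (fun y => Real.exp (-(Ham U y)))).measurable.ennreal_ofReal

lemma integrable_gibbs_pow (hm : 0 < m) (hU : ContDiff ℝ 3 U)
    (hconv : ∀ x y, m * ‖y‖ ^ 2 ≤ iteratedFDeriv ℝ 2 U x ![y, y]) (k : ℕ) :
    Integrable (fun y : EuclideanSpace ℝ (Fin d) × EuclideanSpace ℝ (Fin d) =>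
      (1 + ‖y‖) ^ k * Real.exp (-(Ham U y))) := by
  obtain ⟨K, hK⟩ := potential_lower hm hU hconv
  set b := min (m / 4) (1 / 2) with hb
  have hb0 : 0 < b := lt_min (by positivity) (by norm_num)
  have hb1 : b ≤ m / 4 := min_le_left _ _
  have hb2 : b ≤ 1 / 2 := min_le_right _ _
  obtain ⟨C, hC0, hC⟩ := poly_exp_bound (b / 2) (by positivity) k
  have hi := ((integrable_gauss (d := d) (b / 2) (by positivity)).mul_prod
    (integrable_gauss (d := d) (b / 2) (by positivity))).const_mul (C * Real.exp K)
  refine hi.mono' ?_ (ae_of_all _ fun y => ?_)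
  · have := Ham_continuous hU.continuous
    exact (by fun_prop : Continuous (fun y : EuclideanSpace ℝ (Fin d) × EuclideanSpace ℝ (Fin d) =>
      (1 + ‖y‖) ^ k * Real.exp (-(Ham U y)))).aestronglyMeasurable
  · rw [Real.norm_eq_abs, abs_of_nonneg (by positivity)]
    set S := ‖y.1‖ ^ 2 + ‖y.2‖ ^ 2 with hS
    have hy : ‖y‖ ^ 2 ≤ S := by
      rw [Prod.norm_def]
      rcases max_choice ‖y.1‖ ‖y.2‖ with h | h <;> rw [h, hS] <;>
        linarith [sq_nonneg ‖y.1‖, sq_nonneg ‖y.2‖]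
    have hH : b * S - K ≤ Ham U y := by
      unfold Ham
      have := hK y.1
      nlinarith [sq_nonneg ‖y.1‖, sq_nonneg ‖y.2‖]
    have e1 : Real.exp (-(Ham U y)) ≤ Real.exp K * (Real.exp (-(b / 2 * ‖y‖ ^ 2))
        * (Real.exp (-(b / 2 * ‖y.1‖ ^ 2)) * Real.exp (-(b / 2 * ‖y.2‖ ^ 2)))) := by
      rw [← Real.exp_add, ← Real.exp_add, ← Real.exp_add]
      apply Real.exp_le_exp.2
      nlinarith
    calc _ ≤ (1 + ‖y‖) ^ k * (Real.exp K * (Real.exp (-(b / 2 * ‖y‖ ^ 2))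
        * (Real.exp (-(b / 2 * ‖y.1‖ ^ 2)) * Real.exp (-(b / 2 * ‖y.2‖ ^ 2))))) := by gcongr
      _ = ((1 + ‖y‖) ^ k * Real.exp (-(b / 2 * ‖y‖ ^ 2))) * (Real.exp K
        * (Real.exp (-(b / 2 * ‖y.1‖ ^ 2)) * Real.exp (-(b / 2 * ‖y.2‖ ^ 2)))) := by ring
      _ ≤ C * (Real.exp K
        * (Real.exp (-(b / 2 * ‖y.1‖ ^ 2)) * Real.exp (-(b / 2 * ‖y.2‖ ^ 2)))) := by
          gcongr; exact hC _ (norm_nonneg _)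
      _ = _ := by ring

lemma gibbs0_moment (hm : 0 < m) (hU : ContDiff ℝ 3 U)
    (hconv : ∀ x y, m * ‖y‖ ^ 2 ≤ iteratedFDeriv ℝ 2 U x ![y, y]) (k : ℕ) :
    ∫⁻ y, ENNReal.ofReal ((1 + ‖y‖) ^ k) ∂(gibbs0 U) < ∞ := by
  unfold gibbs0
  rw [lintegral_withDensity_eq_lintegral_mul _ (gibbs_density_meas hU.continuous) (by fun_prop)]
  have := (integrable_gibbs_pow hm hU hconv k).lintegral_lt_top
  refine lt_of_eq_of_lt (lintegral_congr fun y => ?_) this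
  rw [Pi.mul_apply, ← ENNReal.ofReal_mul (by positivity), mul_comm]

lemma gibbs0_univ_lt (hm : 0 < m) (hU : ContDiff ℝ 3 U)
    (hconv : ∀ x y, m * ‖y‖ ^ 2 ≤ iteratedFDeriv ℝ 2 U x ![y, y]) :
    gibbs0 U Set.univ < ∞ := by
  have := gibbs0_moment hm hU hconv 0
  simpa using this

lemma gibbs0_univ_ne (hU : Continuous U) : gibbs0 U Set.univ ≠ 0 := by
  unfold gibbs0
  rw [withDensity_apply _ MeasurableSet.univ, Measure.restrict_univ]
  intro h
  rw [lintegral_eq_zero_iff (gibbs_density_meas hU)] at h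
  have h2 : ∀ᵐ y : EuclideanSpace ℝ (Fin d) × EuclideanSpace ℝ (Fin d), False := by
    filter_upwards [h] with y hy
    simp only [Pi.zero_apply, ENNReal.ofReal_eq_zero] at hy
    exact absurd (Real.exp_pos (-(Ham U y))) (not_lt.2 hy)
  rw [ae_iff] at h2
  have h3 : (volume : Measure (EuclideanSpace ℝ (Fin d) × EuclideanSpace ℝ (Fin d)))
      Set.univ ≠ 0 := by
    rw [Measure.volume_eq_prod]
    exact isOpen_univ.measure_ne_zero _ Set.univ_nonempty
  exact h3 (by simpa using h2)

/-- OU invariance. -/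
lemma gibbs0_ou (hU : Continuous U) (h γ : ℝ) (h0 : 0 ≤ γ * h) (h1 : γ * h ≤ 1)
    (G : EuclideanSpace ℝ (Fin d) × EuclideanSpace ℝ (Fin d) → ℝ≥0∞) (hG : Measurable G) :
    ∫⁻ z, ∫⁻ w, G (ouStep h γ z w) ∂(stdGaussian (EuclideanSpace ℝ (Fin d))) ∂(gibbs0 U)
      = ∫⁻ z, G z ∂(gibbs0 U) := by
  obtain ⟨c, -, -, hc⟩ := stdGaussian_density d
  have hUm : Measurable (fun x => ENNReal.ofReal (Real.exp (-(U x)))) :=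
    (by fun_prop : Continuous (fun x => Real.exp (-(U x)))).measurable.ennreal_ofReal
  have hprod : gibbs0 U = c • ((volume.withDensity
      (fun x => ENNReal.ofReal (Real.exp (-(U x))))).prod
        (stdGaussian (EuclideanSpace ℝ (Fin d)))) := by
    rw [← Measure.prod_smul_right, ← hc, prod_withDensity hUm (by fun_prop)]
    unfold gibbs0
    rw [Measure.volume_eq_prod]
    congr 1
    ext y
    rw [← ENNReal.ofReal_mul (by positivity), ← Real.exp_add]
    unfold Ham
    congr 2
    ring
  have hGm : Measurable (fun q : (EuclideanSpace ℝ (Fin d) × EuclideanSpace ℝ (Fin d))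
      × EuclideanSpace ℝ (Fin d) => G (ouStep h γ q.1 q.2)) := by
    apply hG.comp
    unfold ouStep
    fun_prop
  rw [hprod, lintegral_smul_measure, lintegral_smul_measure]
  congr 1
  rw [lintegral_prod _ hGm.lintegral_prod_right'.aemeasurable, lintegral_prod _ hG.aemeasurable]
  refine lintegral_congr fun x => ?_
  refine lintegral_rot_stdGaussian (1 - γ * h) (ouS h γ) ?_ (fun v => G (x, v))
    (hG.comp measurable_prodMk_left)
  rw [ouS_sq h0 h1]; ring

section leapsec
variable {g : EuclideanSpace ℝ (Fin d) → EuclideanSpace ℝ (Fin d)}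

lemma leap_continuous (hg : Continuous g) (h : ℝ) : Continuous (leap g h) := by
  unfold leap; fun_prop

lemma flipV_continuous : Continuous
    (flipV : EuclideanSpace ℝ (Fin d) × EuclideanSpace ℝ (Fin d) → _) := by
  unfold flipV; fun_prop

lemma shear_snd (k : EuclideanSpace ℝ (Fin d) → EuclideanSpace ℝ (Fin d)) (hk : Measurable k) :
    MeasurePreserving (fun y : EuclideanSpace ℝ (Fin d) × EuclideanSpace ℝ (Fin d) =>
      (y.1, y.2 + k y.1)) volume volume := by
  rw [Measure.volume_eq_prod]
  refine (MeasurePreserving.id volume).skew_product (g := fun x v => v + k x) ?_ ?_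
  · exact measurable_snd.add (hk.comp measurable_fst)
  · exact ae_of_all _ fun x => (measurePreserving_add_right volume (k x)).map_eq

lemma shear_fst (k : EuclideanSpace ℝ (Fin d) → EuclideanSpace ℝ (Fin d)) (hk : Measurable k) :
    MeasurePreserving (fun y : EuclideanSpace ℝ (Fin d) × EuclideanSpace ℝ (Fin d) =>
      (y.1 + k y.2, y.2)) volume volume := by
  have hs : MeasurePreserving (Prod.swap : EuclideanSpace ℝ (Fin d) × EuclideanSpace ℝ (Fin d) → _)
      volume volume := by
    rw [Measure.volume_eq_prod]; exact Measure.measurePreserving_swap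
  exact hs.comp ((shear_snd k hk).comp hs)

lemma flipV_preserving : MeasurePreserving
    (flipV : EuclideanSpace ℝ (Fin d) × EuclideanSpace ℝ (Fin d) → _) volume volume := by
  rw [Measure.volume_eq_prod]
  exact (MeasurePreserving.id volume).prod (Measure.measurePreserving_neg volume)

lemma leap_preserving (hg : Continuous g) (h : ℝ) :
    MeasurePreserving (leap g h) volume volume := by
  have a1 := shear_fst (d := d) (fun v => (h / 2) • v) (by fun_prop)
  have a2 := shear_snd (d := d) (fun x => -(h • g x)) (by fun_prop)
  have := a1.comp (a2.comp a1)
  convert this using 1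
  ext1 y
  simp [leap, sub_eq_add_neg]

lemma flip_leap_invol (h : ℝ) (y : EuclideanSpace ℝ (Fin d) × EuclideanSpace ℝ (Fin d)) :
    flipV (leap g h (flipV (leap g h y))) = y := by
  have hq : (flipV (leap g h y)).1 + (h / 2) • (flipV (leap g h y)).2 = y.1 + (h / 2) • y.2 := by
    simp only [flipV, leap]; module
  have e : leap g h (flipV (leap g h y)) =
    (y.1 + (h / 2) • y.2 + (h / 2) • ((flipV (leap g h y)).2 - h • g (y.1 + (h / 2) • y.2)),
      (flipV (leap g h y)).2 - h • g (y.1 + (h / 2) • y.2)) := by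
    have e0 : ∀ y' : EuclideanSpace ℝ (Fin d) × EuclideanSpace ℝ (Fin d), leap g h y' =
      (y'.1 + (h / 2) • y'.2 + (h / 2) • (y'.2 - h • g (y'.1 + (h / 2) • y'.2)),
        y'.2 - h • g (y'.1 + (h / 2) • y'.2)) := fun _ => rfl
    rw [e0 (flipV (leap g h y)), hq]
  rw [e]
  ext1
  · simp only [flipV, leap]; module
  · simp only [flipV, leap]; module

lemma flipV_flipV (y : EuclideanSpace ℝ (Fin d) × EuclideanSpace ℝ (Fin d)) :
    flipV (flipV y) = y := by simp [flipV]

lemma Ham_flipV (y : EuclideanSpace ℝ (Fin d) × EuclideanSpace ℝ (Fin d)) :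
    Ham U (flipV y) = Ham U y := by simp [flipV, Ham]

end leapsec

lemma acc_continuous (hU : Continuous U) (hg : Continuous (gradient U)) (h : ℝ) :
    Continuous (acc U h) := by
  unfold acc
  have := Ham_continuous hU
  have h2 := this.comp (leap_continuous hg h)
  simp only [Function.comp_def] at h2
  fun_prop

/-- Metropolis invariance. -/
lemma gibbs0_metropolis (hU : Continuous U) (hg : Continuous (gradient U)) (h : ℝ)
    (G : EuclideanSpace ℝ (Fin d) × EuclideanSpace ℝ (Fin d) → ℝ≥0∞) (hG : Measurable G) :
    ∫⁻ y, (ENNReal.ofReal (acc U h y) * G (leap (gradient U) h y)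
      + ENNReal.ofReal (1 - acc U h y) * G (flipV y)) ∂(gibbs0 U)
      = ∫⁻ y, G y ∂(gibbs0 U) := by
  set g := gradient U with hgdef
  have hD := gibbs_density_meas hU
  set D : EuclideanSpace ℝ (Fin d) × EuclideanSpace ℝ (Fin d) → ℝ≥0∞ :=
    fun y => ENNReal.ofReal (Real.exp (-(Ham U y))) with hDdef
  have hacc := (acc_continuous hU hg h).measurable
  have hleap := (leap_continuous hg h).measurable
  have hflip := (flipV_continuous (d := d)).measurable
  have hGl : Measurable fun y => G (leap g h y) := hG.comp hleap
  have hGf : Measurable fun y => G (flipV y) := hG.comp hflip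
  have hmul : ∀ (F : EuclideanSpace ℝ (Fin d) × EuclideanSpace ℝ (Fin d) → ℝ≥0∞),
      Measurable F → ∫⁻ y, F y ∂(gibbs0 U) = ∫⁻ y, D y * F y := by
    intro F hF
    unfold gibbs0
    rw [lintegral_withDensity_eq_lintegral_mul _ hD hF]
    rfl
  have hA1 : Measurable fun y => ENNReal.ofReal (acc U h y) := hacc.ennreal_ofReal
  have hA2 : Measurable fun y => ENNReal.ofReal (1 - acc U h y) :=
    (measurable_const.sub hacc).ennreal_ofReal
  set M : EuclideanSpace ℝ (Fin d) × EuclideanSpace ℝ (Fin d) → ℝ≥0∞ :=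
    fun y => min (D y) (D (leap g h y)) with hM
  have hDa : ∀ y, D y * ENNReal.ofReal (acc U h y) = M y := by
    intro y
    rw [hM, hDdef]
    simp only
    rw [← ENNReal.ofReal_mul (by positivity), ← ENNReal.ofReal_min]
    congr 1
    unfold acc
    rw [mul_min_of_nonneg _ _ (Real.exp_nonneg _), mul_one, ← Real.exp_add]
    congr 2
    ring
  have hMS : ∀ y, M (flipV (leap g h y)) = M y := by
    intro y
    have e1 : D (flipV (leap g h y)) = D (leap g h y) := by
      simp only [hDdef, Ham_flipV]
    have e2 : D (leap g h (flipV (leap g h y))) = D y := by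
      have := flip_leap_invol (g := g) h y
      simp only [hDdef]
      rw [← Ham_flipV, this]
    simp only [hM]
    rw [e1, e2, min_comm]
  have hMm : Measurable M := hD.min (hD.comp hleap)
  have hS : MeasurePreserving (fun y : EuclideanSpace ℝ (Fin d) × EuclideanSpace ℝ (Fin d) =>
      flipV (leap g h y)) volume volume := flipV_preserving.comp (leap_preserving hg h)
  have hm1 : Measurable fun y => M y * G (flipV y) := hMm.mul hGf
  have hm2 : Measurable fun y => M y * G (leap g h y) := hMm.mul hGl
  have hm3 : Measurable fun y => ENNReal.ofReal (acc U h y) * G (leap g h y)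
      + ENNReal.ofReal (1 - acc U h y) * G (flipV y) := (hA1.mul hGl).add (hA2.mul hGf)
  have hm4 : Measurable fun y => D y * G y := hD.mul hG
  have hswap : ∫⁻ y, M y * G (leap g h y) = ∫⁻ y, M y * G (flipV y) := by
    rw [← hS.lintegral_comp hm1]
    refine lintegral_congr fun y => ?_
    rw [hMS, flipV_flipV]
  calc _ = ∫⁻ y, (M y * G (leap g h y) + D y * ENNReal.ofReal (1 - acc U h y) * G (flipV y)) := by
        rw [hmul _ hm3]
        refine lintegral_congr fun y => ?_
        rw [mul_add, ← mul_assoc, hDa, ← mul_assoc]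
    _ = (∫⁻ y, M y * G (flipV y)) + ∫⁻ y, D y * ENNReal.ofReal (1 - acc U h y) * G (flipV y) := by
        rw [lintegral_add_left hm2, hswap]
    _ = ∫⁻ y, D y * G (flipV y) := by
        rw [← lintegral_add_left hm1]
        refine lintegral_congr fun y => ?_
        rw [← hDa, ← add_mul, ← mul_add, ← ENNReal.ofReal_add (acc_nonneg _ _ _)
          (sub_nonneg.2 (acc_le_one _ _ _)), add_sub_cancel, ENNReal.ofReal_one, mul_one]
    _ = ∫⁻ y, D y * G y := by
        rw [← (flipV_preserving (d := d)).lintegral_comp hm4]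
        refine lintegral_congr fun y => ?_
        simp only [hDdef, Ham_flipV]
    _ = _ := (hmul G hG).symm

end gibbs

section coupling
set_option linter.unusedSectionVars false

/-- Euclidean space. -/
abbrev EE (d : ℕ) := EuclideanSpace ℝ (Fin d)

variable {d : ℕ} {U : EE d → ℝ} {m h γ : ℝ}

/-- Normalised Gibbs measure. -/
noncomputable def gibbs (U : EE d → ℝ) : Measure (EE d × EE d) :=
  (gibbs0 U Set.univ)⁻¹ • gibbs0 U

lemma gibbs_prob (hm : 0 < m) (hU : ContDiff ℝ 3 U)
    (hconv : ∀ x y, m * ‖y‖ ^ 2 ≤ iteratedFDeriv ℝ 2 U x ![y, y]) :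
    IsProbabilityMeasure (gibbs U) := by
  constructor
  unfold gibbs
  rw [Measure.smul_apply, smul_eq_mul]
  exact ENNReal.inv_mul_cancel (gibbs0_univ_ne hU.continuous) (gibbs0_univ_lt hm hU hconv).ne

lemma gibbs_moment (hm : 0 < m) (hU : ContDiff ℝ 3 U)
    (hconv : ∀ x y, m * ‖y‖ ^ 2 ≤ iteratedFDeriv ℝ 2 U x ![y, y]) (k : ℕ) :
    ∫⁻ y, ENNReal.ofReal ((1 + ‖y‖) ^ k) ∂(gibbs U) < ∞ := by
  unfold gibbs
  rw [lintegral_smul_measure, smul_eq_mul]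
  exact ENNReal.mul_lt_top (ENNReal.inv_lt_top.2 (pos_iff_ne_zero.2 (gibbs0_univ_ne hU.continuous)))
    (gibbs0_moment hm hU hconv k)

/-- Weighted two-point average: the coupled one-step integrand. -/
noncomputable def cpl (U : EE d → ℝ) (h γ : ℝ) (G : (EE d × EE d) × (EE d × EE d) → ℝ≥0∞)
    (q : (EE d × EE d) × (EE d × EE d)) (w : EE d) : ℝ≥0∞ :=
  ENNReal.ofReal (acc U h (ouStep h γ q.1 w)) *
      G (leap (gradient U) h (ouStep h γ q.1 w), emStep (gradient U) h γ q.2 w)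
    + ENNReal.ofReal (1 - acc U h (ouStep h γ q.1 w)) *
      G (flipV (ouStep h γ q.1 w), emStep (gradient U) h γ q.2 w)

lemma ouStep_continuous (h γ : ℝ) :
    Continuous (fun p : (EE d × EE d) × EE d => ouStep h γ p.1 p.2) := by
  unfold ouStep; fun_prop

lemma cpl_meas (hU : Continuous U) (hg : Continuous (gradient U))
    (G : (EE d × EE d) × (EE d × EE d) → ℝ≥0∞) (hG : Measurable G) :
    Measurable (fun p : ((EE d × EE d) × (EE d × EE d)) × EE d => cpl U h γ G p.1 p.2) := by
  have h1 : Continuous (fun p : ((EE d × EE d) × (EE d × EE d)) × EE d => ouStep h γ p.1.1 p.2) :=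
    (ouStep_continuous h γ).comp
      (by fun_prop : Continuous fun p : ((EE d × EE d) × (EE d × EE d)) × EE d => (p.1.1, p.2))
  have h2 : Continuous (fun p : ((EE d × EE d) × (EE d × EE d)) × EE d =>
      emStep (gradient U) h γ p.1.2 p.2) :=
    (emStep_continuous _ hg h γ).comp
      (by fun_prop : Continuous fun p : ((EE d × EE d) × (EE d × EE d)) × EE d => (p.1.2, p.2))
  have h3 := (acc_continuous hU hg h).comp h1
  have h4 := (leap_continuous hg h).comp h1
  have h5 := (flipV_continuous (d := d)).comp h1
  have h6 : Continuous fun p : ((EE d × EE d) × (EE d × EE d)) × EE d =>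
    1 - acc U h (ouStep h γ p.1.1 p.2) := continuous_const.sub h3
  unfold cpl
  exact (h3.measurable.ennreal_ofReal.mul (hG.comp (h4.prodMk h2).measurable)).add
    (h6.measurable.ennreal_ofReal.mul (hG.comp (h5.prodMk h2).measurable))

lemma meas_right_aux {α β δ : Type*} [MeasurableSpace α] [MeasurableSpace β] [MeasurableSpace δ]
    (F : α → β → δ) (hF : Measurable (fun p : α × β => F p.1 p.2)) (a : α) :
    Measurable (fun b => F a b) := by
  have := hF.comp (measurable_prodMk_left (x := a))
  exact this

lemma cpl_meas_right (hU : Continuous U) (hg : Continuous (gradient U))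
    (G : (EE d × EE d) × (EE d × EE d) → ℝ≥0∞) (hG : Measurable G)
    (q : (EE d × EE d) × (EE d × EE d)) :
    Measurable (fun w => cpl U h γ G q w) :=
  meas_right_aux (cpl U h γ G) (cpl_meas hU hg G hG) q

lemma step_exists (hU : Continuous U) (hg : Continuous (gradient U)) (h γ : ℝ)
    (μ : Measure ((EE d × EE d) × (EE d × EE d))) [SFinite μ] :
    ∃ μ' : Measure ((EE d × EE d) × (EE d × EE d)), ∀ G, Measurable G →
      ∫⁻ q, G q ∂μ' = ∫⁻ q, ∫⁻ w, cpl U h γ G q w ∂(stdGaussian (EE d)) ∂μ := by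
  have h1 : Continuous (fun p : ((EE d × EE d) × (EE d × EE d)) × EE d => ouStep h γ p.1.1 p.2) :=
    (ouStep_continuous h γ).comp
      (by fun_prop : Continuous fun p : ((EE d × EE d) × (EE d × EE d)) × EE d => (p.1.1, p.2))
  have h2 : Continuous (fun p : ((EE d × EE d) × (EE d × EE d)) × EE d =>
      emStep (gradient U) h γ p.1.2 p.2) :=
    (emStep_continuous _ hg h γ).comp
      (by fun_prop : Continuous fun p : ((EE d × EE d) × (EE d × EE d)) × EE d => (p.1.2, p.2))
  have h3 : Continuous fun p : ((EE d × EE d) × (EE d × EE d)) × EE d =>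
    acc U h (ouStep h γ p.1.1 p.2) := (acc_continuous hU hg h).comp h1
  have h4 : Continuous fun p : ((EE d × EE d) × (EE d × EE d)) × EE d =>
    leap (gradient U) h (ouStep h γ p.1.1 p.2) := (leap_continuous hg h).comp h1
  have h5 : Continuous fun p : ((EE d × EE d) × (EE d × EE d)) × EE d =>
    flipV (ouStep h γ p.1.1 p.2) := (flipV_continuous (d := d)).comp h1
  have h6 : Continuous fun p : ((EE d × EE d) × (EE d × EE d)) × EE d =>
    1 - acc U h (ouStep h γ p.1.1 p.2) := continuous_const.sub h3
  have hT1 := (h4.prodMk h2).measurable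
  have hT2 := (h5.prodMk h2).measurable
  refine ⟨((μ.prod (stdGaussian (EE d))).withDensity
      (fun p => ENNReal.ofReal (acc U h (ouStep h γ p.1.1 p.2)))).map
        (fun p => (leap (gradient U) h (ouStep h γ p.1.1 p.2), emStep (gradient U) h γ p.1.2 p.2))
    + ((μ.prod (stdGaussian (EE d))).withDensity
      (fun p => ENNReal.ofReal (1 - acc U h (ouStep h γ p.1.1 p.2)))).map
        (fun p => (flipV (ouStep h γ p.1.1 p.2), emStep (gradient U) h γ p.1.2 p.2)), ?_⟩
  intro G hG
  have hG1 : Measurable fun p : ((EE d × EE d) × (EE d × EE d)) × EE d =>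
      G (leap (gradient U) h (ouStep h γ p.1.1 p.2), emStep (gradient U) h γ p.1.2 p.2) :=
    hG.comp hT1
  have hG2 : Measurable fun p : ((EE d × EE d) × (EE d × EE d)) × EE d =>
      G (flipV (ouStep h γ p.1.1 p.2), emStep (gradient U) h γ p.1.2 p.2) := hG.comp hT2
  rw [lintegral_add_measure, lintegral_map hG hT1, lintegral_map hG hT2,
    lintegral_withDensity_eq_lintegral_mul _ h3.measurable.ennreal_ofReal hG1,
    lintegral_withDensity_eq_lintegral_mul _ h6.measurable.ennreal_ofReal hG2,
    ← lintegral_add_left (h3.measurable.ennreal_ofReal.mul hG1),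
    ← lintegral_prod _ (cpl_meas hU hg G hG).aemeasurable]
  rfl

lemma cpl_fst (hU : ContDiff ℝ 3 U) (hg : Continuous (gradient U))
    (h0 : 0 ≤ γ * h) (h1 : γ * h ≤ 1)
    (μ : Measure ((EE d × EE d) × (EE d × EE d)))
    (hμ : ∀ G, Measurable G → ∫⁻ q, G q.1 ∂μ = ∫⁻ z, G z ∂(gibbs U))
    (G : EE d × EE d → ℝ≥0∞) (hG : Measurable G) :
    ∫⁻ q, ∫⁻ w, cpl U h γ (fun q => G q.1) q w ∂(stdGaussian (EE d)) ∂μ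
      = ∫⁻ z, G z ∂(gibbs U) := by
  have hM : Measurable (fun y => ENNReal.ofReal (acc U h y) * G (leap (gradient U) h y)
      + ENNReal.ofReal (1 - acc U h y) * G (flipV y)) := by
    have a1 := (acc_continuous hU.continuous hg h).measurable
    have a2 := (leap_continuous hg h).measurable
    have a3 := (flipV_continuous (d := d)).measurable
    exact (a1.ennreal_ofReal.mul (hG.comp a2)).add
      ((measurable_const.sub a1).ennreal_ofReal.mul (hG.comp a3))
  have hM2 : Measurable (fun z : EE d × EE d => ∫⁻ w, (ENNReal.ofReal (acc U h (ouStep h γ z w))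
      * G (leap (gradient U) h (ouStep h γ z w))
      + ENNReal.ofReal (1 - acc U h (ouStep h γ z w)) * G (flipV (ouStep h γ z w)))
        ∂(stdGaussian (EE d))) :=
    (hM.comp (ouStep_continuous h γ).measurable).lintegral_prod_right'
  have e := hμ _ hM2
  refine Eq.trans e ?_
  unfold gibbs
  rw [lintegral_smul_measure, lintegral_smul_measure]
  congr 1
  rw [gibbs0_ou hU.continuous h γ h0 h1 _ hM]
  exact gibbs0_metropolis hU.continuous hg h G hG

lemma cpl_snd (G : EE d × EE d → ℝ≥0∞) (q : (EE d × EE d) × (EE d × EE d)) (w : EE d) :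
    cpl U h γ (fun q => G q.2) q w = G (emStep (gradient U) h γ q.2 w) := by
  unfold cpl
  rw [← add_mul, ← ENNReal.ofReal_add (acc_nonneg _ _ _)
          (sub_nonneg.2 (acc_le_one _ _ _)), add_sub_cancel, ENNReal.ofReal_one, one_mul]

/-- Laws of the Euler chain started from the Gibbs measure. -/
noncomputable def emLaw (U : EE d → ℝ) (h γ : ℝ) : ℕ → Measure (EE d × EE d)
  | 0 => gibbs U
  | k + 1 => ((emLaw U h γ k).prod (stdGaussian (EE d))).map
      (fun p => emStep (gradient U) h γ p.1 p.2)

lemma Nq_continuous (β : ℝ) : Continuous (fun q : (EE d × EE d) × (EE d × EE d) =>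
    Nq β (q.1 - q.2)) := by
  unfold Nq; fun_prop

lemma cpl_Nq (hg : Continuous (gradient U)) (hU : Continuous U) (c' K : ℝ) (hK : 0 ≤ K) (hh : 0 < h)
    (hc'h : c' * h ≤ 1)
    (hloc : ∀ (z z' : EE d × EE d) (w : EE d),
      acc U h (ouStep h γ z w) * Nq (2 / γ)
          (leap (gradient U) h (ouStep h γ z w) - emStep (gradient U) h γ z' w)
        + (1 - acc U h (ouStep h γ z w)) * Nq (2 / γ)
          (flipV (ouStep h γ z w) - emStep (gradient U) h γ z' w)
        + (acc U h (ouStep h γ z (-w)) * Nq (2 / γ)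
          (leap (gradient U) h (ouStep h γ z (-w)) - emStep (gradient U) h γ z' (-w))
        + (1 - acc U h (ouStep h γ z (-w))) * Nq (2 / γ)
          (flipV (ouStep h γ z (-w)) - emStep (gradient U) h γ z' (-w)))
      ≤ 2 * ((1 - c' * h) * Nq (2 / γ) (z - z') + K * h ^ 3 * sz z w ^ 8))
    (q : (EE d × EE d) × (EE d × EE d)) :
    ∫⁻ w, cpl U h γ (fun q => ENNReal.ofReal (Nq (2 / γ) (q.1 - q.2))) q w ∂(stdGaussian (EE d))
      ≤ ENNReal.ofReal (1 - c' * h) * ENNReal.ofReal (Nq (2 / γ) (q.1 - q.2))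
        + ENNReal.ofReal (K * h ^ 3) * (ENNReal.ofReal ((1 + ‖q.1‖) ^ 8)
          * ∫⁻ w, ENNReal.ofReal ((1 + ‖w‖) ^ 8) ∂(stdGaussian (EE d))) := by
  obtain ⟨φ, hφ⟩ : ∃ φ : EE d → ℝ≥0∞, φ = fun w =>
    cpl U h γ (fun q => ENNReal.ofReal (Nq (2 / γ) (q.1 - q.2))) q w := ⟨_, rfl⟩
  have hφ' : ∀ w, cpl U h γ (fun q => ENNReal.ofReal (Nq (2 / γ) (q.1 - q.2))) q w = φ w :=
    fun w => by rw [hφ]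
  simp only [hφ']
  have hφm : Measurable φ := by
    have hN : Measurable fun q : (EE d × EE d) × (EE d × EE d) =>
        ENNReal.ofReal (Nq (2 / γ) (q.1 - q.2)) :=
      (Nq_continuous (2 / γ)).measurable.ennreal_ofReal
    rw [hφ]
    exact cpl_meas_right hU hg _ hN q
  have e0 := lintegral_neg_stdGaussian φ hφm
  have e1 : 2 * ∫⁻ w, φ w ∂(stdGaussian (EE d))
      = ∫⁻ w, (φ w + φ (-w)) ∂(stdGaussian (EE d)) := by
    rw [lintegral_add_left hφm, e0, two_mul]
  have e2 : ∀ w, φ w = ENNReal.ofReal (acc U h (ouStep h γ q.1 w) * Nq (2 / γ)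
          (leap (gradient U) h (ouStep h γ q.1 w) - emStep (gradient U) h γ q.2 w)
        + (1 - acc U h (ouStep h γ q.1 w)) * Nq (2 / γ)
          (flipV (ouStep h γ q.1 w) - emStep (gradient U) h γ q.2 w)) := by
    intro w
    have i1 := acc_nonneg U h (ouStep h γ q.1 w)
    have i2 := sub_nonneg.2 (acc_le_one U h (ouStep h γ q.1 w))
    rw [ENNReal.ofReal_add (mul_nonneg i1 (Nq_nonneg _ _)) (mul_nonneg i2 (Nq_nonneg _ _)),
      ENNReal.ofReal_mul i1, ENNReal.ofReal_mul i2]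
    simp only [hφ, cpl]
  have e3 : ∀ w, φ w + φ (-w) ≤ 2 * (ENNReal.ofReal (1 - c' * h) *
      ENNReal.ofReal (Nq (2 / γ) (q.1 - q.2))
      + ENNReal.ofReal (K * h ^ 3) * (ENNReal.ofReal ((1 + ‖q.1‖) ^ 8)
          * ENNReal.ofReal ((1 + ‖w‖) ^ 8))) := by
    intro w
    have i3 : ∀ w, 0 ≤ acc U h (ouStep h γ q.1 w) * Nq (2 / γ)
          (leap (gradient U) h (ouStep h γ q.1 w) - emStep (gradient U) h γ q.2 w)
        + (1 - acc U h (ouStep h γ q.1 w)) * Nq (2 / γ)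
          (flipV (ouStep h γ q.1 w) - emStep (gradient U) h γ q.2 w) := fun w =>
      add_nonneg (mul_nonneg (acc_nonneg _ _ _) (Nq_nonneg _ _))
        (mul_nonneg (sub_nonneg.2 (acc_le_one _ _ _)) (Nq_nonneg _ _))
    rw [e2, e2, ← ENNReal.ofReal_add (i3 _) (i3 _)]
    refine (ENNReal.ofReal_le_ofReal (hloc q.1 q.2 w)).trans (le_of_eq ?_)
    have i4 : 0 ≤ 1 - c' * h := by linarith
    rw [ENNReal.ofReal_mul (by norm_num),
      ENNReal.ofReal_add (mul_nonneg i4 (Nq_nonneg _ _)) (by unfold sz; positivity),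
      ENNReal.ofReal_mul i4, ENNReal.ofReal_mul (p := K * h ^ 3) (by positivity), sz, mul_pow,
      ENNReal.ofReal_mul (p := (1 + ‖q.1‖) ^ 8) (by positivity)]
    simp
  have e4 : 2 * ∫⁻ w, φ w ∂(stdGaussian (EE d)) ≤ 2 * (ENNReal.ofReal (1 - c' * h) *
      ENNReal.ofReal (Nq (2 / γ) (q.1 - q.2))
      + ENNReal.ofReal (K * h ^ 3) * (ENNReal.ofReal ((1 + ‖q.1‖) ^ 8)
          * ∫⁻ w, ENNReal.ofReal ((1 + ‖w‖) ^ 8) ∂(stdGaussian (EE d)))) := by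
    rw [e1]
    refine (lintegral_mono e3).trans (le_of_eq ?_)
    rw [lintegral_const_mul' _ _ (by simp), lintegral_add_left (by fun_prop),
      lintegral_const_mul' _ _ (by simp), lintegral_const_mul' _ _ (by simp), lintegral_const,
      measure_univ, mul_one, lintegral_const_mul' _ _ (by simp)]
  exact (ENNReal.mul_le_mul_iff_right (by simp) (by simp)).1 e4

end coupling

section bias
set_option linter.unusedSectionVars false


variable {d : ℕ} {U : EE d → ℝ} {m h γ : ℝ}

lemma map_eq_of_lintegral {α β : Type*} [MeasurableSpace α] [MeasurableSpace β]
    (μ : Measure α) (ν : Measure β) (T : α → β) (hT : Measurable T)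
    (H : ∀ G : β → ℝ≥0∞, Measurable G → ∫⁻ a, G (T a) ∂μ = ∫⁻ b, G b ∂ν) : μ.map T = ν := by
  refine Measure.ext_of_lintegral _ fun G hG => ?_
  rw [lintegral_map hG hT, H G hG]

lemma emLaw_lintegral {k : ℕ} (hg : Continuous (gradient U)) [SFinite (emLaw U h γ k)]
    (G : EE d × EE d → ℝ≥0∞) (hG : Measurable G) :
    ∫⁻ z, G z ∂(emLaw U h γ (k + 1))
      = ∫⁻ z, ∫⁻ w, G (emStep (gradient U) h γ z w) ∂(stdGaussian (EE d)) ∂(emLaw U h γ k) := by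
  have h1 := (emStep_continuous _ hg h γ).measurable
  have h2 : Measurable fun p : (EE d × EE d) × EE d => G (emStep (gradient U) h γ p.1 p.2) :=
    hG.comp h1
  rw [emLaw, lintegral_map hG h1, lintegral_prod _ h2.aemeasurable]

lemma emLaw_prob (hm : 0 < m) (hU : ContDiff ℝ 3 U)
    (hconv : ∀ x y, m * ‖y‖ ^ 2 ≤ iteratedFDeriv ℝ 2 U x ![y, y])
    (hg : Continuous (gradient U)) (k : ℕ) : IsProbabilityMeasure (emLaw U h γ k) := by
  induction k with
  | zero => exact gibbs_prob hm hU hconv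
  | succ k ih =>
    rw [emLaw]
    exact Measure.isProbabilityMeasure_map (emStep_continuous _ hg h γ).measurable.aemeasurable

lemma coupling_exists (hm : 0 < m) (hU : ContDiff ℝ 3 U)
    (hconv : ∀ x y, m * ‖y‖ ^ 2 ≤ iteratedFDeriv ℝ 2 U x ![y, y])
    (hg : Continuous (gradient U)) (h0 : 0 ≤ γ * h) (h1 : γ * h ≤ 1)
    (c' K : ℝ) (hc' : 0 < c') (hK : 0 ≤ K) (hh : 0 < h)
    (hc'h : c' * h ≤ 1)
    (hloc : ∀ (q : (EE d × EE d) × (EE d × EE d)),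
      ∫⁻ w, cpl U h γ (fun q => ENNReal.ofReal (Nq (2 / γ) (q.1 - q.2))) q w ∂(stdGaussian (EE d))
      ≤ ENNReal.ofReal (1 - c' * h) * ENNReal.ofReal (Nq (2 / γ) (q.1 - q.2))
        + ENNReal.ofReal (K * h ^ 3) * (ENNReal.ofReal ((1 + ‖q.1‖) ^ 8)
          * ∫⁻ w, ENNReal.ofReal ((1 + ‖w‖) ^ 8) ∂(stdGaussian (EE d))))
    (M : ℝ) (hM0 : 0 ≤ M)
    (hM : (∫⁻ z, ENNReal.ofReal ((1 + ‖z‖) ^ 8) ∂(gibbs U))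
        * (∫⁻ w, ENNReal.ofReal ((1 + ‖w‖) ^ 8) ∂(stdGaussian (EE d))) = ENNReal.ofReal M)
    (k : ℕ) :
    ∃ μ : Measure ((EE d × EE d) × (EE d × EE d)), IsProbabilityMeasure μ ∧
      (∀ G : EE d × EE d → ℝ≥0∞, Measurable G → ∫⁻ q, G q.1 ∂μ = ∫⁻ z, G z ∂(gibbs U)) ∧
      (∀ G : EE d × EE d → ℝ≥0∞, Measurable G →
        ∫⁻ q, G q.2 ∂μ = ∫⁻ z, G z ∂(emLaw U h γ k)) ∧
      ∫⁻ q, ENNReal.ofReal (Nq (2 / γ) (q.1 - q.2)) ∂μ ≤ ENNReal.ofReal (K * M / c' * h ^ 2) := by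
  have := gibbs_prob hm hU hconv
  have hN : Measurable fun q : (EE d × EE d) × (EE d × EE d) =>
        ENNReal.ofReal (Nq (2 / γ) (q.1 - q.2)) :=
      (Nq_continuous (2 / γ)).measurable.ennreal_ofReal
  have c1 : ∀ G : EE d × EE d → ℝ≥0∞, Measurable G →
      Measurable fun q : (EE d × EE d) × (EE d × EE d) => G q.1 :=
    fun G hG => hG.comp measurable_fst
  have c2 : ∀ G : EE d × EE d → ℝ≥0∞, Measurable G →
      Measurable fun q : (EE d × EE d) × (EE d × EE d) => G q.2 :=
    fun G hG => hG.comp measurable_snd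
  induction k with
  | zero =>
    have hT : Measurable fun z : EE d × EE d => (z, z) := measurable_id.prodMk measurable_id
    refine ⟨(gibbs U).map (fun z => (z, z)),
      Measure.isProbabilityMeasure_map hT.aemeasurable, ?_, ?_, ?_⟩
    · intro G hG
      rw [lintegral_map (c1 G hG) hT]
    · intro G hG
      rw [lintegral_map (c2 G hG) hT, emLaw]
    · rw [lintegral_map hN hT]
      have : Nq (2 / γ) (0 : EE d × EE d) = 0 := by unfold Nq; simp
      simp [this]
  | succ k ih =>
    obtain ⟨μ, hμp, hμ1, hμ2, hμ3⟩ := ih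
    have := emLaw_prob (h := h) (γ := γ) hm hU hconv hg k
    obtain ⟨μ', hμ'⟩ := step_exists hU.continuous hg h γ μ
    have f1 : ∀ G : EE d × EE d → ℝ≥0∞, Measurable G →
        ∫⁻ q, G q.1 ∂μ' = ∫⁻ z, G z ∂(gibbs U) := by
      intro G hG
      rw [hμ' _ (c1 G hG)]
      exact cpl_fst hU hg h0 h1 μ hμ1 G hG
    refine ⟨μ', ?_, f1, ?_, ?_⟩
    · constructor
      have := f1 (fun _ => 1) measurable_const
      simpa using this
    · intro G hG
      rw [hμ' _ (c2 G hG), emLaw_lintegral hg G hG]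
      simp only [cpl_snd]
      have hm2 : Measurable fun p : (EE d × EE d) × EE d => G (emStep (gradient U) h γ p.1 p.2) :=
        hG.comp (emStep_continuous _ hg h γ).measurable
      exact hμ2 _ hm2.lintegral_prod_right'
    · rw [hμ' _ hN]
      refine (lintegral_mono hloc).trans ?_
      have hA : Measurable fun q : (EE d × EE d) × (EE d × EE d) =>
        ENNReal.ofReal (1 - c' * h) * ENNReal.ofReal (Nq (2 / γ) (q.1 - q.2)) := hN.const_mul _
      have hB : Measurable fun z : EE d × EE d => ENNReal.ofReal ((1 + ‖z‖) ^ 8) := by fun_prop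
      have hB' : Measurable fun q : (EE d × EE d) × (EE d × EE d) =>
        ENNReal.ofReal ((1 + ‖q.1‖) ^ 8) := hB.comp measurable_fst
      rw [lintegral_add_left hA, lintegral_const_mul _ hN,
        lintegral_const_mul _ (hB'.mul_const _), lintegral_mul_const _ hB', hμ1 _ hB, hM]
      have i4 : 0 ≤ 1 - c' * h := by linarith
      refine (add_le_add (mul_le_mul_right hμ3 _) le_rfl).trans ?_
      rw [← ENNReal.ofReal_mul i4, ← ENNReal.ofReal_mul (by positivity),
        ← ENNReal.ofReal_add (by positivity) (by positivity)]
      apply ENNReal.ofReal_le_ofReal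
      apply le_of_eq
      field_simp
      ring

end bias

section bias2
set_option linter.unusedSectionVars false


variable {d : ℕ} {U : EE d → ℝ} {m h γ β L : ℝ} {F : EE d × EE d → ℝ}

lemma gibbs_norm_integrable (hm : 0 < m) (hU : ContDiff ℝ 3 U)
    (hconv : ∀ x y, m * ‖y‖ ^ 2 ≤ iteratedFDeriv ℝ 2 U x ![y, y]) :
    Integrable (fun z : EE d × EE d => ‖z‖) (gibbs U) := by
  have h1 := gibbs_moment hm hU hconv 1
  have hi : Integrable (fun z : EE d × EE d => (1 + ‖z‖) ^ 1) (gibbs U) := by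
    refine ⟨by fun_prop, ?_⟩
    rw [hasFiniteIntegral_iff_ofReal (ae_of_all _ fun z => by positivity)]
    exact h1
  refine hi.mono' (by fun_prop) (ae_of_all _ fun z => ?_)
  simp

lemma gibbs_lip_integrable (hm : 0 < m) (hU : ContDiff ℝ 3 U)
    (hconv : ∀ x y, m * ‖y‖ ^ 2 ≤ iteratedFDeriv ℝ 2 U x ![y, y])
    (hβ : 0 < β) (hL : 0 ≤ L) (hF : LipQ β L F) : Integrable F (gibbs U) := by
  have := gibbs_prob hm hU hconv
  have h1 := (((gibbs_norm_integrable hm hU hconv).const_mul (L * (2 + β)))).add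
    (integrable_const (μ := gibbs U) |F 0|)
  refine h1.mono' (hF.continuous hβ hL).aestronglyMeasurable (ae_of_all _ fun z => ?_)
  have h2 := hF.lip hβ hL z 0
  rw [sub_zero] at h2
  have h3 := abs_sub_abs_le_abs_sub (F z) (F 0)
  simp only [Real.norm_eq_abs, Pi.add_apply]
  linarith

lemma bias_lip (hm : 0 < m) (hU : ContDiff ℝ 3 U)
    (hconv : ∀ x y, m * ‖y‖ ^ 2 ≤ iteratedFDeriv ℝ 2 U x ![y, y])
    (hβ : 0 < β) (hL : 0 ≤ L) (hF : LipQ β L F) (K' : ℝ) (hK' : 0 ≤ K') (hh : 0 < h)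
    (k : ℕ)
    (hcpl : ∃ μ : Measure ((EE d × EE d) × (EE d × EE d)), IsProbabilityMeasure μ ∧
      (∀ G : EE d × EE d → ℝ≥0∞, Measurable G → ∫⁻ q, G q.1 ∂μ = ∫⁻ z, G z ∂(gibbs U)) ∧
      (∀ G : EE d × EE d → ℝ≥0∞, Measurable G →
        ∫⁻ q, G q.2 ∂μ = ∫⁻ z, G z ∂(emLaw U h γ k)) ∧
      ∫⁻ q, ENNReal.ofReal (Nq β (q.1 - q.2)) ∂μ ≤ ENNReal.ofReal (K' * h ^ 2)) :
    Integrable F (emLaw U h γ k) ∧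
      |∫ z, F z ∂(emLaw U h γ k) - ∫ z, F z ∂(gibbs U)| ≤ L * ((1 + K') / 2 * h) := by
  obtain ⟨μ, hμp, hμ1, hμ2, hμ3⟩ := hcpl
  have e1 := map_eq_of_lintegral μ (gibbs U) Prod.fst measurable_fst hμ1
  have e2 := map_eq_of_lintegral μ (emLaw U h γ k) Prod.snd measurable_snd hμ2
  have hFc := hF.continuous hβ hL
  have i1 : Integrable (fun q : (EE d × EE d) × (EE d × EE d) => F q.1) μ := by
    have := gibbs_lip_integrable hm hU hconv hβ hL hF
    rw [← e1, integrable_map_measure hFc.aestronglyMeasurable measurable_fst.aemeasurable] at this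
    exact this
  have iN : Integrable (fun q : (EE d × EE d) × (EE d × EE d) => Nq β (q.1 - q.2)) μ := by
    refine ⟨(Nq_continuous β).aestronglyMeasurable, ?_⟩
    rw [hasFiniteIntegral_iff_ofReal (ae_of_all _ fun z => Nq_nonneg _ _)]
    exact hμ3.trans_lt ENNReal.ofReal_lt_top
  have bN : ∫ q, Nq β (q.1 - q.2) ∂μ ≤ K' * h ^ 2 := by
    rw [integral_eq_lintegral_of_nonneg_ae (ae_of_all _ fun z => Nq_nonneg _ _)
      (Nq_continuous β).aestronglyMeasurable]
    exact ENNReal.toReal_le_of_le_ofReal (by positivity) hμ3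
  have iB : Integrable (fun q : (EE d × EE d) × (EE d × EE d) =>
      L * (h / 2 + 1 / (2 * h) * Nq β (q.1 - q.2))) μ :=
    ((integrable_const _).add (iN.const_mul _)).const_mul _
  have hb : ∀ q : (EE d × EE d) × (EE d × EE d), ‖F q.2 - F q.1‖
      ≤ L * (h / 2 + 1 / (2 * h) * Nq β (q.1 - q.2)) := by
    intro q
    rw [Real.norm_eq_abs, abs_sub_comm]
    refine (hF q.1 q.2).trans ?_
    gcongr
    have hn := Nq_nonneg β (q.1 - q.2)
    generalize Nq β (q.1 - q.2) = t at hn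
    have h5 := Real.sq_sqrt hn
    have h6 : h / 2 + 1 / (2 * h) * t - √t = (√t - h) ^ 2 / (2 * h) := by
      field_simp
      nlinarith only [h5]
    have h7 : 0 ≤ (√t - h) ^ 2 / (2 * h) := by positivity
    linarith
  have iD : Integrable (fun q : (EE d × EE d) × (EE d × EE d) => F q.2 - F q.1) μ := by
    refine iB.mono' ?_ (ae_of_all _ hb)
    exact ((hFc.comp continuous_snd).sub (hFc.comp continuous_fst)).aestronglyMeasurable
  have i2 : Integrable (fun q : (EE d × EE d) × (EE d × EE d) => F q.2) μ := by
    have := iD.add i1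
    refine this.congr (ae_of_all _ fun q => ?_)
    simp
  constructor
  · rw [← e2, integrable_map_measure hFc.aestronglyMeasurable measurable_snd.aemeasurable]
    exact i2
  · rw [← e1, ← e2, integral_map measurable_fst.aemeasurable hFc.aestronglyMeasurable,
      integral_map measurable_snd.aemeasurable hFc.aestronglyMeasurable, ← integral_sub i2 i1]
    have h8 := norm_integral_le_of_norm_le iB (ae_of_all _ hb)
    rw [Real.norm_eq_abs] at h8
    refine h8.trans ?_
    rw [integral_const_mul, integral_add (integrable_const _) (iN.const_mul _),
      integral_const_mul, integral_const]
    simp only [probReal_univ, smul_eq_mul, one_mul]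
    gcongr
    calc h / 2 + 1 / (2 * h) * ∫ q, Nq β (q.1 - q.2) ∂μ
        ≤ h / 2 + 1 / (2 * h) * (K' * h ^ 2) := by gcongr
      _ = _ := by field_simp

lemma emLaw_Fk {f : EE d × EE d → ℝ} (hg : Continuous (gradient U))
    (hp : ∀ k, IsProbabilityMeasure (emLaw U h γ k))
    (hc : ∀ j, Continuous (Fk (gradient U) h γ f j))
    (hi : ∀ j k, Integrable (Fk (gradient U) h γ f j) (emLaw U h γ k)) (k j : ℕ) :
    ∫ z, Fk (gradient U) h γ f j z ∂(emLaw U h γ k)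
      = ∫ z, Fk (gradient U) h γ f (j + k) z ∂(gibbs U) := by
  induction k generalizing j with
  | zero => rfl
  | succ k ih =>
    have := hp k
    have hm := (emStep_continuous _ hg h γ).measurable
    have h1 := hi j (k + 1)
    rw [emLaw, integrable_map_measure (hc j).aestronglyMeasurable hm.aemeasurable] at h1
    rw [emLaw, integral_map hm.aemeasurable (hc j).aestronglyMeasurable]
    have h2 := integral_prod _ h1
    simp only [Function.comp_def] at h2
    rw [h2]
    have h3 := ih (j + 1)
    rw [show j + (k + 1) = j + 1 + k by ring, ← h3]
    rfl

lemma bias_bound {ρ : ℝ} {f : EE d × EE d → ℝ} (hm : 0 < m) (hU : ContDiff ℝ 3 U)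
    (hconv : ∀ x y, m * ‖y‖ ^ 2 ≤ iteratedFDeriv ℝ 2 U x ![y, y])
    (hg : Continuous (gradient U))
    (hβ : 0 < β) (hL : 0 ≤ L) (hρ : 0 ≤ ρ) (hρ1 : ρ ≤ 1) (hF : LipQ β L f)
    (hc : ∀ z z' w, Nq β (emStep (gradient U) h γ z w - emStep (gradient U) h γ z' w)
      ≤ ρ ^ 2 * Nq β (z - z'))
    (K' : ℝ) (hK' : 0 ≤ K') (hh : 0 < h)
    (hcpl : ∀ k, ∃ μ : Measure ((EE d × EE d) × (EE d × EE d)), IsProbabilityMeasure μ ∧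
      (∀ G : EE d × EE d → ℝ≥0∞, Measurable G → ∫⁻ q, G q.1 ∂μ = ∫⁻ z, G z ∂(gibbs U)) ∧
      (∀ G : EE d × EE d → ℝ≥0∞, Measurable G →
        ∫⁻ q, G q.2 ∂μ = ∫⁻ z, G z ∂(emLaw U h γ k)) ∧
      ∫⁻ q, ENNReal.ofReal (Nq β (q.1 - q.2)) ∂μ ≤ ENNReal.ofReal (K' * h ^ 2))
    (k : ℕ) (z : EE d × EE d) :
    |Fk (gradient U) h γ f k z - ∫ z, f z ∂(gibbs U)|
      ≤ L * ((1 + K') / 2 * h)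
        + L * (2 + β) * (1 + ∫ z : EE d × EE d, ‖z‖ ∂(gibbs U)) * (ρ ^ k * (1 + ‖z‖)) := by
  have hpr := gibbs_prob hm hU hconv
  have hl := fun k => Fk_lip hβ hL hρ hF hg hc k
  have hcont : ∀ j, Continuous (Fk (gradient U) h γ f j) := fun j =>
    (hl j).continuous hβ (by positivity)
  have hi : ∀ j k, Integrable (Fk (gradient U) h γ f j) (emLaw U h γ k) := fun j k =>
    (bias_lip hm hU hconv hβ (by positivity) (hl j) K' hK' hh k (hcpl k)).1
  have h1 := emLaw_Fk hg (fun k => emLaw_prob hm hU hconv hg k) hcont hi k 0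
  have h2 := (bias_lip hm hU hconv hβ hL hF K' hK' hh k (hcpl k)).2
  rw [zero_add] at h1
  have h1' : ∫ z, f z ∂(emLaw U h γ k) = ∫ z, Fk (gradient U) h γ f k z ∂(gibbs U) := h1
  rw [h1'] at h2
  have hn := gibbs_norm_integrable hm hU hconv
  have hik : Integrable (Fk (gradient U) h γ f k) (gibbs U) := hi k 0
  have hA : 0 ≤ ∫ z : EE d × EE d, ‖z‖ ∂(gibbs U) := integral_nonneg fun _ => norm_nonneg _
  have h3 : |Fk (gradient U) h γ f k z - ∫ z, Fk (gradient U) h γ f k z ∂(gibbs U)|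
      ≤ L * ρ ^ k * (2 + β) * (‖z‖ + ∫ z : EE d × EE d, ‖z‖ ∂(gibbs U)) := by
    have e : Fk (gradient U) h γ f k z - ∫ z, Fk (gradient U) h γ f k z ∂(gibbs U)
        = ∫ z', (Fk (gradient U) h γ f k z - Fk (gradient U) h γ f k z') ∂(gibbs U) := by
      rw [integral_sub (integrable_const _) hik]; simp
    rw [e]
    have iB : Integrable (fun z' : EE d × EE d => L * ρ ^ k * (2 + β) * (‖z‖ + ‖z'‖)) (gibbs U) :=
      ((integrable_const _).add hn).const_mul _
    have h4 := norm_integral_le_of_norm_le (f := fun z' : EE d × EE d =>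
      Fk (gradient U) h γ f k z - Fk (gradient U) h γ f k z') iB (ae_of_all _ fun z' => by
        rw [Real.norm_eq_abs]
        refine ((hl k).lip hβ (by positivity) z z').trans ?_
        gcongr
        exact norm_sub_le _ _)
    rw [integral_const_mul, integral_add (integrable_const _) hn, integral_const] at h4
    simpa using h4
  have h5 : L * ρ ^ k * (2 + β) * (‖z‖ + ∫ z : EE d × EE d, ‖z‖ ∂(gibbs U))
      ≤ L * (2 + β) * (1 + ∫ z : EE d × EE d, ‖z‖ ∂(gibbs U)) * (ρ ^ k * (1 + ‖z‖)) := by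
    generalize (∫ z : EE d × EE d, ‖z‖ ∂(gibbs U)) = A at hA ⊢
    have h6 : ‖z‖ + A ≤ (1 + A) * (1 + ‖z‖) := by nlinarith [norm_nonneg z, mul_nonneg hA (norm_nonneg z)]
    calc L * ρ ^ k * (2 + β) * (‖z‖ + A) ≤ L * ρ ^ k * (2 + β) * ((1 + A) * (1 + ‖z‖)) := by gcongr
      _ = _ := by ring
  have h7 := abs_sub_le (Fk (gradient U) h γ f k z) (∫ z, Fk (gradient U) h γ f k z ∂(gibbs U))
    (∫ z, f z ∂(gibbs U))
  linarith

/-- The Gibbs average in terms of Lebesgue integrals. -/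
lemma gibbs_integral (hm : 0 < m) (hU : ContDiff ℝ 3 U)
    (hconv : ∀ x y, m * ‖y‖ ^ 2 ≤ iteratedFDeriv ℝ 2 U x ![y, y]) (f : EE d × EE d → ℝ) :
    ∫ z, f z ∂(gibbs U) = (∫ z : EE d × EE d, f z * Real.exp (-(‖z.2‖ ^ 2 / 2 + U z.1))) /
        (∫ z : EE d × EE d, Real.exp (-(‖z.2‖ ^ 2 / 2 + U z.1))) := by
  have h0 : ∫ z : EE d × EE d, Real.exp (-(‖z.2‖ ^ 2 / 2 + U z.1))
      = (gibbs0 U Set.univ).toReal := by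
    rw [integral_eq_lintegral_of_nonneg_ae (ae_of_all _ fun z => (Real.exp_pos _).le)]
    · unfold gibbs0
      rw [withDensity_apply _ MeasurableSet.univ, Measure.restrict_univ]
      rfl
    · have := Ham_continuous hU.continuous
      exact (Real.continuous_exp.comp this.neg).aestronglyMeasurable
  rw [h0]
  unfold gibbs
  rw [integral_smul_measure, ENNReal.toReal_inv, smul_eq_mul, div_eq_inv_mul]
  congr 1
  unfold gibbs0
  rw [integral_withDensity_eq_integral_toReal_smul (gibbs_density_meas hU.continuous)
    (ae_of_all _ fun _ => ENNReal.ofReal_lt_top)]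
  refine integral_congr_ae (ae_of_all _ fun z => ?_)
  simp only [smul_eq_mul]
  rw [ENNReal.toReal_ofReal (Real.exp_pos _).le, mul_comm]
  rfl

end bias2

section final
set_option linter.unusedSectionVars false


lemma phi_sq_bound {E : Type*} [NormedAddCommGroup E] [InnerProductSpace ℝ E]
    [FiniteDimensional ℝ E] [MeasurableSpace E] [BorelSpace E]
    {g : E → E} {h γ c B₁ B₂ p : ℝ} {f : E × E → ℝ} (hh : 0 < h) (hc : 0 < c) (hch : c * h ≤ 1)
    (hB₁ : 0 ≤ B₁) (hB₂ : 0 ≤ B₂)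
    (hb : ∀ k z, |Fk g h γ f k z - p| ≤ B₁ * h + B₂ * ((1 - c * h / 2) ^ k * (1 + ‖z‖)))
    (N : ℕ) (hN : 1 ≤ N) (z : E × E) :
    ((N : ℝ)⁻¹ * Phi g h γ f p N z) ^ 2
      ≤ (2 * B₁ ^ 2 + 4 * B₂ ^ 2 / c) * (h ^ 2 + 1 / (N * h)) * (1 + ‖z‖) ^ 2 := by
  have hN0 : (0 : ℝ) < N := by exact_mod_cast hN
  set ρ := 1 - c * h / 2 with hρ
  have hch0 : 0 < c * h := by positivity
  have hρ0 : 0 ≤ ρ := by linarith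
  have hρ1 : ρ < 1 := by linarith
  set s := ∑ k ∈ Finset.range N, ρ ^ k with hs
  have hs0 : 0 ≤ s := Finset.sum_nonneg fun k _ => by positivity
  have hsN : s ≤ N := by
    calc s ≤ ∑ k ∈ Finset.range N, (1 : ℝ) :=
          Finset.sum_le_sum fun k _ => pow_le_one₀ hρ0 hρ1.le
      _ = N := by simp
  have hsc : s ≤ 2 / (c * h) := by
    have h1 := (summable_geometric_of_lt_one hρ0 hρ1).sum_le_tsum (Finset.range N)
      (fun k _ => by positivity)
    rw [tsum_geometric_of_lt_one hρ0 hρ1] at h1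
    refine h1.trans (le_of_eq ?_)
    rw [hρ]; field_simp; ring
  have h1 : |Phi g h γ f p N z| ≤ N * (B₁ * h) + B₂ * (1 + ‖z‖) * s := by
    unfold Phi
    refine (Finset.abs_sum_le_sum_abs _ _).trans ((Finset.sum_le_sum fun k _ => hb k z).trans ?_)
    rw [Finset.sum_add_distrib, ← Finset.mul_sum, ← Finset.mul_sum, ← Finset.sum_mul]
    simp only [Finset.sum_const, Finset.card_range, nsmul_eq_mul]
    apply le_of_eq; ring
  set a := (N : ℝ)⁻¹ * s with ha
  have ha0 : 0 ≤ a := by positivity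
  have ha1 : a ≤ 1 := by rw [ha, inv_mul_le_iff₀ hN0]; linarith
  have hac : a ≤ 2 / c * (1 / (N * h)) := by
    calc a ≤ (N : ℝ)⁻¹ * (2 / (c * h)) := by rw [ha]; gcongr
      _ = _ := by field_simp
  have h2 : |(N : ℝ)⁻¹ * Phi g h γ f p N z| ≤ B₁ * h + B₂ * (1 + ‖z‖) * a := by
    rw [abs_mul, abs_of_pos (inv_pos.2 hN0)]
    calc _ ≤ (N : ℝ)⁻¹ * (N * (B₁ * h) + B₂ * (1 + ‖z‖) * s) := by gcongr
      _ = _ := by rw [ha]; field_simp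
  have hz := norm_nonneg z
  set r := 1 + ‖z‖ with hr
  have hr1 : 1 ≤ r := by linarith
  set i := 1 / ((N : ℝ) * h) with hi
  have hi0 : 0 ≤ i := by positivity
  have h3 : a ^ 2 ≤ 2 / c * i := by
    calc a ^ 2 = a * a := sq a
      _ ≤ 1 * a := by gcongr
      _ ≤ _ := by rw [one_mul]; exact hac
  calc ((N : ℝ)⁻¹ * Phi g h γ f p N z) ^ 2
      = |(N : ℝ)⁻¹ * Phi g h γ f p N z| ^ 2 := (sq_abs _).symm
    _ ≤ (B₁ * h + B₂ * r * a) ^ 2 := by gcongr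
    _ ≤ 2 * (B₁ * h) ^ 2 + 2 * (B₂ * r * a) ^ 2 := by
        nlinarith only [sq_nonneg (B₁ * h - B₂ * r * a)]
    _ = 2 * B₁ ^ 2 * h ^ 2 * 1 + 2 * B₂ ^ 2 * r ^ 2 * a ^ 2 := by ring
    _ ≤ 2 * B₁ ^ 2 * h ^ 2 * r ^ 2 + 2 * B₂ ^ 2 * r ^ 2 * (2 / c * i) := by
        gcongr
        exact one_le_pow₀ hr1
    _ ≤ 2 * B₁ ^ 2 * (h ^ 2 + i) * r ^ 2 + 2 * B₂ ^ 2 * r ^ 2 * (2 / c * (h ^ 2 + i)) := by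
        have := sq_nonneg h
        gcongr <;> linarith
    _ = _ := by ring

lemma chain_meas_step {d : ℕ} {g : EE d → EE d} (hg : Continuous g) {h γ : ℝ}
    {Ω : Type*} {mΩ : MeasurableSpace Ω} {Z : Ω → EE d × EE d} {x : Ω → EE d}
    (h0 : Measurable Z) (h1 : Measurable x) :
    Measurable (fun ω => emStep g h γ (Z ω) (x ω)) :=
  (emStep_continuous g hg h γ).measurable.comp (h0.prodMk h1)

lemma chain_meas_sum {d : ℕ} {f : EE d × EE d → ℝ} (hf : Measurable f) {p : ℝ}
    {Ω : Type*} {mΩ : MeasurableSpace Ω} {Z : ℕ → Ω → EE d × EE d} {n : ℕ}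
    (h0 : ∀ k, k ≤ n → Measurable (Z k)) :
    Measurable (fun ω => (∑ k ∈ Finset.range (n + 1), (f (Z k ω) - p), Z n ω)) := by
  refine Measurable.prodMk ?_ (h0 n le_rfl)
  refine Finset.measurable_sum _ fun k hk => ?_
  have hk' : k ≤ n := by
    have := Finset.mem_range.1 hk
    omega
  exact (hf.comp (h0 k hk')).sub_const _

lemma chain_indep {d : ℕ} {f : EE d × EE d → ℝ} {g : EE d → EE d} (hg : Continuous g)
    (hf : Measurable f) {h γ p : ℝ}
    {Ω : Type*} [MeasurableSpace Ω] (P : Measure Ω) [IsProbabilityMeasure P]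
    (Z : ℕ → Ω → EE d × EE d) (ξ : ℕ → Ω → EE d) (hZ : Measurable (Z 0))
    (hξ : ∀ n, Measurable (ξ n))
    (hind : iIndep (fun i : Option ℕ =>
          Option.elim i (MeasurableSpace.comap (Z 0) inferInstance)
            fun n => MeasurableSpace.comap (ξ n) inferInstance) P)
    (hrec : ∀ n ω, Z (n + 1) ω = emStep g h γ (Z n ω) (ξ n ω)) (n : ℕ) :
    IndepFun (fun ω => (∑ k ∈ Finset.range (n + 1), (f (Z k ω) - p), Z n ω)) (ξ n) P := by
  set mm : Option ℕ → MeasurableSpace Ω := fun i : Option ℕ =>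
          Option.elim i (MeasurableSpace.comap (Z 0) inferInstance)
            fun n => MeasurableSpace.comap (ξ n) inferInstance with hmm
  set S : Set (Option ℕ) := {i | ∀ k, i = some k → k < n} with hS
  have hle : ∀ i, mm i ≤ ‹MeasurableSpace Ω› := by
    intro i
    cases i with
    | none => exact hZ.comap_le
    | some k => exact (hξ k).comap_le
  have hdis : Disjoint S {some n} := by
    rw [Set.disjoint_singleton_right]
    intro hn
    exact lt_irrefl _ (hn n rfl)
  have H := indep_iSup_of_disjoint hle hind hdis
  have hZm : ∀ k, k ≤ n → Measurable[⨆ i ∈ S, mm i] (Z k) := by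
    intro k
    induction k with
    | zero =>
      intro _
      have h1 : Measurable[mm none] (Z 0) := comap_measurable _
      refine h1.mono ?_ le_rfl
      exact le_iSup₂_of_le none (by simp [hS]) le_rfl
    | succ k ih =>
      intro hk
      have h0 := ih (by omega)
      have h1 : Measurable[mm (some k)] (ξ k) := comap_measurable _
      have h2 : Measurable[⨆ i ∈ S, mm i] (ξ k) := by
        refine h1.mono ?_ le_rfl
        refine le_iSup₂_of_le (some k) ?_ le_rfl
        intro j hj
        have := Option.some.inj hj
        omega
      have h4 : Z (k + 1) = fun ω => emStep g h γ (Z k ω) (ξ k ω) := by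
        funext ω; exact hrec k ω
      rw [h4]
      exact chain_meas_step hg h0 h2
  have hSm : Measurable[⨆ i ∈ S, mm i]
      (fun ω => (∑ k ∈ Finset.range (n + 1), (f (Z k ω) - p), Z n ω)) := by
    exact chain_meas_sum hf fun k hk => hZm k hk
  rw [IndepFun_iff_Indep]
  refine indep_of_indep_of_le_left (indep_of_indep_of_le_right H ?_) ?_
  · exact le_iSup₂_of_le (some n) rfl le_rfl
  · exact hSm.comap_le

end final

/-- statistical error of the Euler–Maruyama integrator under global strong
convexity (strong order `p = 1, q = 1`), under A1, A2', A3: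
`E[e²(N,h)] ≤ C(h² + 1/(Nh))·E(|X₀|+|V₀|+1)⁴`, where `π` is the Boltzmann measure with
density proportional to `exp(−|v|²/2 − U(x))`. -/
theorem statement13 (d : ℕ) (hd : 1 ≤ d) (U : EuclideanSpace ℝ (Fin d) → ℝ)
    (f : EuclideanSpace ℝ (Fin d) × EuclideanSpace ℝ (Fin d) → ℝ)
    (C₁ m C₂ : ℝ) (hC₁ : 0 < C₁) (hm : 0 < m) (hC₂ : 0 < C₂)
    -- A1
    (hU : ContDiff ℝ 3 U)
    (hU0 : ∀ x, |U x| ≤ C₁ * (‖x‖ + 1) ^ 2)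
    (hU1 : ∀ x, ‖gradient U x‖ ≤ C₁ * (‖x‖ + 1))
    (hU2 : ∀ x, ‖iteratedFDeriv ℝ 2 U x‖ ≤ C₁)
    (hU3 : ∀ x, ‖iteratedFDeriv ℝ 3 U x‖ ≤ C₁)
    -- A2'
    (hconv : ∀ x y, m * ‖y‖ ^ 2 ≤ iteratedFDeriv ℝ 2 U x ![y, y])
    -- A3
    (hf : ContDiff ℝ 3 f)
    (hf1 : ∀ z, ‖iteratedFDeriv ℝ 1 f z‖ ≤ C₂)
    (hf2 : ∀ z, ‖iteratedFDeriv ℝ 2 f z‖ ≤ C₂)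
    (hf3 : ∀ z, ‖iteratedFDeriv ℝ 3 f z‖ ≤ C₂)
    -- the ensemble average π(f) of f under the Boltzmann distribution
    (πf : ℝ)
    (hπf : πf = (∫ z : EuclideanSpace ℝ (Fin d) × EuclideanSpace ℝ (Fin d),
          f z * Real.exp (-(‖z.2‖ ^ 2 / 2 + U z.1))) /
        (∫ z : EuclideanSpace ℝ (Fin d) × EuclideanSpace ℝ (Fin d),
          Real.exp (-(‖z.2‖ ^ 2 / 2 + U z.1)))) :
    ∃ γ₀ > (0 : ℝ), ∀ γ ≥ γ₀, ∃ C > (0 : ℝ), ∃ h₀ > (0 : ℝ), ∀ h : ℝ, 0 < h → h ≤ h₀ →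
      ∀ (Ω : Type) (_ : MeasurableSpace Ω) (P : Measure Ω), IsProbabilityMeasure P →
      ∀ X V ξ : ℕ → Ω → EuclideanSpace ℝ (Fin d),
        Measurable (X 0) → Measurable (V 0) →
        (∀ n, Measurable (ξ n)) →
        -- each ξ_n is a standard Gaussian random vector in ℝ^d
        (∀ n, Measure.map (fun ω i => ξ n ω i) P =
          Measure.pi fun _ : Fin d => gaussianReal 0 1) →
        -- (X₀,V₀), ξ₀, ξ₁, … are mutually independent
        iIndep (fun i : Option ℕ =>
          Option.elim i (MeasurableSpace.comap (fun ω => (X 0 ω, V 0 ω)) inferInstance)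
            fun n => MeasurableSpace.comap (ξ n) inferInstance) P →
        -- Euler–Maruyama recursion
        (∀ n ω, X (n + 1) ω = X n ω + h • V n ω) →
        (∀ n ω, V (n + 1) ω = V n ω - h • gradient U (X n ω) - (γ * h) • V n ω
            + Real.sqrt (2 * γ * h) • ξ n ω) →
        -- finite initial second moment
        (∫⁻ ω, ENNReal.ofReal ((‖X 0 ω‖ + ‖V 0 ω‖ + 1) ^ 4) ∂P) < ∞ →
        ∀ N : ℕ, 1 ≤ N →
          (∫⁻ ω, ENNReal.ofReal
              ((((N : ℝ))⁻¹ * (∑ n ∈ Finset.range N, f (X n ω, V n ω)) - πf) ^ 2) ∂P) ≤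
            ENNReal.ofReal (C * (h ^ 2 + 1 / (N * h))) *
              ∫⁻ ω, ENNReal.ofReal ((‖X 0 ω‖ + ‖V 0 ω‖ + 1) ^ 4) ∂P := by
  have hγ₀ : (0 : ℝ) < 1 + 4 * C₁ ^ 2 / m := by positivity
  refine ⟨1 + 4 * C₁ ^ 2 / m, hγ₀, fun γ hγγ => ?_⟩
  have hγ1 : 1 ≤ γ := by
    have : 0 ≤ 4 * C₁ ^ 2 / m := by positivity
    linarith
  have hγ : 0 < γ := by linarith
  have hγm : 4 * C₁ ^ 2 ≤ γ ^ 2 * m := by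
    have h1 : 4 * C₁ ^ 2 / m ≤ γ := by linarith
    rw [div_le_iff₀ hm] at h1
    have h2 : γ ≤ γ ^ 2 := by nlinarith only [hγ1]
    calc 4 * C₁ ^ 2 ≤ γ * m := h1
      _ ≤ _ := by gcongr
  obtain ⟨c, hc, h₀, hh₀, hch₀, hh₀1, hγh₀, hcon'⟩ :=
    contraction (E := EE d) C₁ m γ hC₁ hm hγ hγm
  have hcon := hcon' (gradient U) (gradient_lipschitz hU hU2) (gradient_mono hU hconv)
  obtain ⟨K, hK, hloc⟩ := local_error hC₁ hγ hc hch₀ hh₀1 hγh₀ hU hU1 hU2 hU3 hcon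
  have hg : Continuous (gradient U) := by
    have : LipschitzWith (Real.toNNReal C₁) (gradient U) := by
      apply LipschitzWith.of_dist_le_mul
      intro x y
      rw [dist_eq_norm, dist_eq_norm, Real.coe_toNNReal _ hC₁.le]
      exact gradient_lipschitz hU hU2 x y
    exact this.continuous
  set β := 2 / γ with hβd
  have hβ : 0 < β := by positivity
  set L := C₂ * (1 + 2 / β) with hLd
  have hL : 0 ≤ L := by positivity
  have hF : LipQ β L f := by
    intro z z'
    have h1 := lip_of_iteratedFDeriv_one (hf.differentiable (by norm_num)) hf1 z z'
    rw [Real.norm_eq_abs] at h1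
    refine h1.trans ?_
    rw [hLd, mul_assoc]
    gcongr
    exact norm_le_sqrt_Nq hβ _
  -- moments
  set Mg : ℝ≥0∞ := (∫⁻ z, ENNReal.ofReal ((1 + ‖z‖) ^ 8) ∂(gibbs U))
        * (∫⁻ w, ENNReal.ofReal ((1 + ‖w‖) ^ 8) ∂(stdGaussian (EE d))) with hMg
  have hMfin : Mg < ∞ := ENNReal.mul_lt_top (gibbs_moment hm hU hconv 8)
    (integrable_one_add_norm_pow_stdGaussian (E := EE d) 8).lintegral_lt_top
  set M := Mg.toReal with hMd
  have hM0 : 0 ≤ M := ENNReal.toReal_nonneg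
  have hM : Mg = ENNReal.ofReal M := (ENNReal.ofReal_toReal hMfin.ne).symm
  set K' := K * M / (c / 4) with hK'
  have hK'0 : 0 ≤ K' := by positivity
  have hp : πf = ∫ z, f z ∂(gibbs U) := by rw [hπf, gibbs_integral hm hU hconv f]
  have hA : 0 ≤ ∫ z : EE d × EE d, ‖z‖ ∂(gibbs U) := integral_nonneg fun _ => norm_nonneg _
  set B₁ := L * ((1 + K') / 2) with hB₁d
  set B₂ := L * (2 + β) * (1 + ∫ z : EE d × EE d, ‖z‖ ∂(gibbs U)) with hB₂d
  have hB₁ : 0 ≤ B₁ := by positivity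
  have hB₂ : 0 ≤ B₂ := by positivity
  have hG0 : 0 ≤ gaussM2 (EE d) := gaussM2_nonneg
  set CA := 2 * B₁ ^ 2 + 4 * B₂ ^ 2 / c with hCA
  set CV := (2 * L / c) ^ 2 * β ^ 2 * (2 * γ) * gaussM2 (EE d) with hCV
  have hCA0 : 0 ≤ CA := by positivity
  have hCV0 : 0 ≤ CV := by positivity
  refine ⟨CA + CV + 1, by positivity, h₀, hh₀, ?_⟩
  intro h hh hhh Ω mΩ P hP X V ξ hX hV hξ hlaw hind hXr hVr _ N hN
  have hN0 : (0 : ℝ) < N := by exact_mod_cast hN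
  have hch : c * h ≤ 1 / 2 := le_trans (by gcongr) hch₀
  have hγh0 : 0 ≤ γ * h := by positivity
  have hγh1 : γ * h ≤ 1 := le_trans (by gcongr) hγh₀
  set ρ := 1 - c * h / 2 with hρd
  have hch0 : 0 < c * h := by positivity
  have hρ0 : 0 ≤ ρ := by linarith
  have hρ1 : ρ < 1 := by linarith
  have hcρ : ∀ z z' w, Nq β (emStep (gradient U) h γ z w - emStep (gradient U) h γ z' w)
      ≤ ρ ^ 2 * Nq β (z - z') := by
    intro z z' w
    refine (hcon h hh hhh z z' w).trans ?_
    have h1 : 1 - c * h ≤ ρ ^ 2 := by rw [hρd]; nlinarith only [sq_nonneg (c * h)]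
    exact mul_le_mul_of_nonneg_right h1 (Nq_nonneg _ _)
  have hcpl := fun k => coupling_exists hm hU hconv hg hγh0 hγh1 (c / 4) K (by positivity) hK hh
    (by linarith) (fun q => cpl_Nq hg hU.continuous (c / 4) K hK hh (by linarith)
      (hloc h hh hhh) q) M hM0 hM k
  have hbias : ∀ k z, |Fk (gradient U) h γ f k z - πf|
      ≤ B₁ * h + B₂ * ((1 - c * h / 2) ^ k * (1 + ‖z‖)) := by
    intro k z
    have := bias_bound hm hU hconv hg hβ hL hρ0 hρ1.le hF hcρ K' hK'0 hh hcpl k z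
    rw [← hp] at this
    refine this.trans (le_of_eq ?_)
    rw [hB₁d]; ring
  -- the chain
  set Z : ℕ → Ω → EE d × EE d := fun n ω => (X n ω, V n ω) with hZd
  have hrec : ∀ n ω, Z (n + 1) ω = emStep (gradient U) h γ (Z n ω) (ξ n ω) := by
    intro n ω
    simp only [hZd, emStep, hXr, hVr]
  have hZ : ∀ n, Measurable (Z n) := by
    intro n
    induction n with
    | zero => exact hX.prodMk hV
    | succ n ih =>
      have h4 : Z (n + 1) = fun ω => emStep (gradient U) h γ (Z n ω) (ξ n ω) := by
        funext ω; exact hrec n ω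
      rw [h4]
      exact chain_meas_step hg ih (hξ n)
  have hlaw' : ∀ n, P.map (ξ n) = stdGaussian (EE d) := by
    intro n
    have h1 := map_pi_eq_stdGaussian (ι := Fin d)
    rw [← hlaw n, Measure.map_map (by fun_prop) (by fun_prop)] at h1
    rw [← h1]
    rfl
  have hfm : Measurable f := hf.continuous.measurable
  have hstat := stat_bound hβ hL hρ0 hρ1 hγh0 hF hg hcρ πf P Z ξ hZ hξ hlaw'
    (fun n => chain_indep hg hfm P Z ξ (hZ 0) hξ hind hrec n) hrec N N le_rfl
  simp only [Nat.sub_self] at hstat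
  have hPhi0 : ∀ z, Phi (gradient U) h γ f πf 0 z = 0 := fun z => by simp [Phi]
  simp only [hPhi0, add_zero] at hstat
  set E4 := ∫⁻ ω, ENNReal.ofReal ((‖X 0 ω‖ + ‖V 0 ω‖ + 1) ^ 4) ∂P with hE4
  have hE1 : 1 ≤ E4 := by
    have : ∫⁻ _ : Ω, 1 ∂P ≤ E4 := by
      refine lintegral_mono fun ω => ?_
      rw [ENNReal.one_le_ofReal]
      exact one_le_pow₀ (by have := norm_nonneg (X 0 ω); have := norm_nonneg (V 0 ω); linarith)
    simpa using this
  set i := 1 / ((N : ℝ) * h) with hi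
  have hi0 : 0 ≤ i := by positivity
  have hn2 : (0 : ℝ) ≤ ((N : ℝ)⁻¹) ^ 2 := by positivity
  have e1 : ∫⁻ ω, ENNReal.ofReal
      ((((N : ℝ))⁻¹ * (∑ n ∈ Finset.range N, f (X n ω, V n ω)) - πf) ^ 2) ∂P
      = ENNReal.ofReal (((N : ℝ)⁻¹) ^ 2) *
        ∫⁻ ω, ENNReal.ofReal ((∑ k ∈ Finset.range N, (f (Z k ω) - πf)) ^ 2) ∂P := by
    rw [← lintegral_const_mul' _ _ ENNReal.ofReal_ne_top]
    refine lintegral_congr fun ω => ?_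
    rw [← ENNReal.ofReal_mul hn2]
    congr 1
    rw [Finset.sum_sub_distrib, ← mul_pow]
    congr 1
    simp only [Finset.sum_const, Finset.card_range, nsmul_eq_mul, hZd]
    field_simp
  have e2 : ENNReal.ofReal (((N : ℝ)⁻¹) ^ 2) *
      ∫⁻ ω, ENNReal.ofReal ((Phi (gradient U) h γ f πf N (Z 0 ω)) ^ 2) ∂P
      ≤ ENNReal.ofReal (CA * (h ^ 2 + i)) * E4 := by
    rw [← lintegral_const_mul' _ _ ENNReal.ofReal_ne_top, hE4,
      ← lintegral_const_mul' _ _ ENNReal.ofReal_ne_top]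
    refine lintegral_mono fun ω => ?_
    have hq0 : 0 ≤ CA * (h ^ 2 + i) := by positivity
    simp only [← ENNReal.ofReal_mul hn2, ← ENNReal.ofReal_mul hq0]
    apply ENNReal.ofReal_le_ofReal
    rw [← mul_pow]
    refine (phi_sq_bound hh hc (by linarith) hB₁ hB₂ hbias N hN (Z 0 ω)).trans ?_
    have h1 : ‖Z 0 ω‖ ≤ ‖X 0 ω‖ + ‖V 0 ω‖ := by
      rw [hZd]
      exact max_le (by linarith [norm_nonneg (V 0 ω)]) (by linarith [norm_nonneg (X 0 ω)])
    have h2 : (1 + ‖Z 0 ω‖) ^ 2 ≤ (‖X 0 ω‖ + ‖V 0 ω‖ + 1) ^ 4 := by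
      have h3 := norm_nonneg (X 0 ω)
      have h4 := norm_nonneg (V 0 ω)
      calc (1 + ‖Z 0 ω‖) ^ 2 ≤ (‖X 0 ω‖ + ‖V 0 ω‖ + 1) ^ 2 :=
            pow_le_pow_left₀ (by positivity) (by linarith) 2
        _ ≤ _ := pow_le_pow_right₀ (by linarith) (by norm_num)
    exact mul_le_mul_of_nonneg_left h2 hq0
  have e3 : ENNReal.ofReal (((N : ℝ)⁻¹) ^ 2) * ((N : ℝ≥0∞) *
      ENNReal.ofReal ((L / (1 - ρ)) ^ 2 * β ^ 2 * (2 * γ * h) * gaussM2 (EE d)))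
      = ENNReal.ofReal (CV * i) := by
    rw [← ENNReal.ofReal_natCast, ← ENNReal.ofReal_mul hN0.le, ← ENNReal.ofReal_mul hn2]
    congr 1
    have h1 : 1 - ρ = c * h / 2 := by rw [hρd]; ring
    rw [h1, hCV, hi]
    field_simp
  rw [e1]
  refine (mul_le_mul_right hstat _).trans ?_
  rw [mul_add, e3]
  have e4 : ENNReal.ofReal (CV * i) ≤ ENNReal.ofReal ((CV + 1) * (h ^ 2 + i)) * E4 := by
    calc ENNReal.ofReal (CV * i) ≤ ENNReal.ofReal ((CV + 1) * (h ^ 2 + i)) := by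
          apply ENNReal.ofReal_le_ofReal
          have := sq_nonneg h
          gcongr <;> linarith
      _ = ENNReal.ofReal ((CV + 1) * (h ^ 2 + i)) * 1 := (mul_one _).symm
      _ ≤ _ := by gcongr
  refine (add_le_add e2 e4).trans (le_of_eq ?_)
  rw [← add_mul, ← ENNReal.ofReal_add (by positivity) (by positivity)]
  congr 2
  ring
end
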